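/- For every planar simple graph G₁ on n vertices and every planar simple graph G₂ with 4·|V(G₂)| ≤ n, there exists a SefeNoMap of G₁ and G₂. -/

import Mathlib

open Set Bornology

/-- Points of the Euclidean plane. -/
abbrev Pt : Type := ℝ × ℝ

/-- `A` is an arc connecting `p` and `q`: the image of a continuous injective map
from `[0,1]` to the plane sending `0` to `p` and `1` to `q`. -/
def IsArcBetween (A : Set Pt) (p q : Pt) : Prop :=
  ∃ f : ℝ → Pt, ContinuousOn f (Set.Icc 0 1) ∧ Set.InjOn f (Set.Icc 0 1) ∧
    f 0 = p ∧ f 1 = q ∧ A = f '' Set.Icc 0 1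

/-- A planar drawing of a finite simple graph `G`: an injective placement of the
vertices in the plane, together with an arc for each edge joining the images of its
endpoints, such that no arc passes through the image of a vertex other than its two
endpoints, and two distinct arcs intersect only at images of shared endpoints. -/
structure PlanarDrawing {V : Type} [Fintype V] (G : SimpleGraph V) where
  ρ : V → Pt
  inj : Function.Injective ρ
  arc : Sym2 V → Set Pt
  arc_isArc : ∀ u v : V, G.Adj u v → IsArcBetween (arc s(u, v)) (ρ u) (ρ v)
  vertex_mem : ∀ e ∈ G.edgeSet, ∀ w : V, ρ w ∈ arc e → w ∈ e
  arcs_cross : ∀ e ∈ G.edgeSet, ∀ e' ∈ G.edgeSet, e ≠ e' →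
    ∀ x ∈ arc e ∩ arc e', ∃ w : V, w ∈ e ∧ w ∈ e' ∧ x = ρ w

/-- A SefeNoMap of `G₁` and `G₂`: a pair of planar drawings such that the vertex
points of `Γ₂` form a subset of the vertex points of `Γ₁`, and whenever an edge of
`G₁` and an edge of `G₂` have their endpoints mapped to the same pair of points, the
two edges are represented by the same arc. -/
def IsSefeNoMap {V₁ V₂ : Type} [Fintype V₁] [Fintype V₂]
    {G₁ : SimpleGraph V₁} {G₂ : SimpleGraph V₂}
    (Γ₁ : PlanarDrawing G₁) (Γ₂ : PlanarDrawing G₂) : Prop :=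
  Set.range Γ₂.ρ ⊆ Set.range Γ₁.ρ ∧
  ∀ u v : V₁, ∀ a b : V₂, G₁.Adj u v → G₂.Adj a b →
    ({Γ₁.ρ u, Γ₁.ρ v} : Set Pt) = ({Γ₂.ρ a, Γ₂.ρ b} : Set Pt) →
    Γ₁.arc s(u, v) = Γ₂.arc s(a, b)



/-! ### Edge bound for minors of the integer grid -/

namespace GridMinor

abbrev GE : Type := (ℤ × ℤ) × Bool

def efst (x : GE) : ℤ × ℤ := x.1
def esnd (x : GE) : ℤ × ℤ := if x.2 then x.1 + (1, 0) else x.1 + (0, 1)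
def sq1 (x : GE) : ℤ × ℤ := x.1
def sq2 (x : GE) : ℤ × ℤ := if x.2 then x.1 - (0, 1) else x.1 - (1, 0)

/-- grid adjacency -/
def GAdj (p q : ℤ × ℤ) : Prop := ∃ x : GE, (efst x = p ∧ esnd x = q) ∨ (efst x = q ∧ esnd x = p)

/-- boundary of a one-chain -/
def bd (z : GE → ZMod 2) (p : ℤ × ℤ) : ZMod 2 :=
  z (p, true) + z (p - (1, 0), true) + z (p, false) + z (p - (0, 1), false)

/-- boundary of a two-chain -/
def cobd (w : ℤ × ℤ → ZMod 2) (x : GE) : ZMod 2 := w (sq1 x) + w (sq2 x)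

lemma zz (a : ZMod 2) : a + a = 0 := CharTwo.add_self_eq_zero a

lemma bd_add (z z' : GE → ZMod 2) (p) : bd (z + z') p = bd z p + bd z' p := by
  simp only [bd, Pi.add_apply]; ring

lemma bd_cobd (w : ℤ × ℤ → ZMod 2) (p) : bd (cobd w) p = 0 := by
  obtain ⟨i, j⟩ := p
  simp only [bd, cobd, sq1, sq2, if_true, Prod.mk_sub_mk, sub_zero, Bool.false_eq_true, if_false]
  have h1 := zz (w (i, j))
  have h2 := zz (w (i - 1, j))
  have h3 := zz (w (i, j - 1))
  have h4 := zz (w (i - 1, j - 1))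
  linear_combination h1 + h2 + h3 + h4

/-- one-cycles are boundaries -/
lemma exists_cobd (z : GE → ZMod 2) (N : ℤ) (hN : ∀ x, z x ≠ 0 → N ≤ x.1.1)
    (hz : ∀ p, bd z p = 0) : ∃ w, cobd w = z := by
  let w : ℤ × ℤ → ZMod 2 := fun s => ∑ i ∈ Finset.Ico N (s.1 + 1), z ((i, s.2), false)
  have hw : ∀ i j, w (i, j) = w (i - 1, j) + z ((i, j), false) := by
    intro i j
    simp only [w]
    by_cases h : N ≤ i
    · have : Finset.Ico N (i + 1) = insert i (Finset.Ico N i) := by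
        ext x; simp only [Finset.mem_Ico, Finset.mem_insert]; omega
      rw [this, Finset.sum_insert (by simp), sub_add_cancel, add_comm]
    · rw [Finset.Ico_eq_empty (by omega), Finset.Ico_eq_empty (by omega)]
      have : z ((i, j), false) = 0 := by
        by_contra hh
        exact h (hN _ hh)
      simp [this]
  have hh : ∀ (n : ℕ) (j : ℤ), w (N - 1 + n, j) + w (N - 1 + n, j - 1) = z ((N - 1 + n, j), true) := by
    intro n j
    induction n with
    | zero =>
      have : z ((N - 1 + (0 : ℕ), j), true) = 0 := by
        by_contra hh
        have := hN _ hh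
        simp at this
      rw [this]
      simp [w]
    | succ n ih =>
      have e1 := hw (N - 1 + (n + 1 : ℕ)) j
      have e2 := hw (N - 1 + (n + 1 : ℕ)) (j - 1)
      have e3 := hz (N - 1 + (n + 1 : ℕ), j)
      simp only [bd, Prod.mk_sub_mk, sub_zero] at e3
      have e4 : N - 1 + ((n + 1 : ℕ) : ℤ) - 1 = N - 1 + n := by push_cast; ring
      rw [e4] at e1 e2 e3
      rw [e1, e2]
      have h1 := zz (z ((N - 1 + (n + 1 : ℕ), j), true))
      have h2 := zz (z ((N - 1 + n, j), true))
      linear_combination ih + e3 - h1 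
  refine ⟨w, ?_⟩
  funext ⟨⟨i, j⟩, b⟩
  cases b
  · simp only [cobd, sq1, sq2, Bool.false_eq_true, if_false, Prod.mk_sub_mk, sub_zero]
    rw [hw i j]
    have h1 := zz (w (i - 1, j))
    linear_combination h1
  · simp only [cobd, sq1, sq2, if_true, Prod.mk_sub_mk, sub_zero]
    by_cases h : N ≤ i
    · have := hh (i - N + 1).toNat j
      have e : N - 1 + ((i - N + 1).toNat : ℤ) = i := by omega
      rwa [e] at this
    · have : z ((i, j), true) = 0 := by
        by_contra hh
        exact h (hN _ hh)
      rw [this]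
      simp only [w]
      rw [Finset.Ico_eq_empty (by simpa using by omega)]
      simp

lemma bd_single (x : GE) (p : ℤ × ℤ) :
    bd (Pi.single x 1) p = (if efst x = p then 1 else 0) + (if esnd x = p then 1 else 0) := by
  obtain ⟨⟨i, j⟩, b⟩ := x
  obtain ⟨k, l⟩ := p
  cases b <;>
  simp only [bd, Pi.single_apply, efst, esnd, Prod.mk.injEq, Prod.mk_sub_mk, Prod.mk_add_mk,
    Bool.false_eq_true, if_true, if_false, and_true, and_false, add_zero, sub_zero, zero_add,
    Bool.true_eq_false]
  · congr 1
    · congr 1; simp [eq_comm]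
    · congr 1; apply propext; constructor <;> rintro ⟨h1, h2⟩ <;> constructor <;> omega
  · congr 1
    · congr 1; simp [eq_comm]
    · congr 1; apply propext; constructor <;> rintro ⟨h1, h2⟩ <;> constructor <;> omega

/-- chains realising connectivity -/
lemma exists_chain (B : Finset (ℤ × ℤ)) (p q : ℤ × ℤ) (hp : p ∈ B)
    (h : Relation.ReflTransGen (fun a b => b ∈ B ∧ GAdj a b) p q) :
    ∃ z : GE → ZMod 2, (∀ x, z x ≠ 0 → efst x ∈ B ∧ esnd x ∈ B) ∧
      ∀ r, bd z r = (if p = r then 1 else 0) + (if q = r then 1 else 0) := by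
  suffices q ∈ B ∧ ∃ z : GE → ZMod 2, (∀ x, z x ≠ 0 → efst x ∈ B ∧ esnd x ∈ B) ∧
      ∀ r, bd z r = (if p = r then 1 else 0) + (if q = r then 1 else 0) from this.2
  induction h with
  | refl => exact ⟨hp, 0, by simp, fun r => by rw [zz]; simp [bd]⟩
  | @tail b c _ hbc ih =>
    obtain ⟨hb, z, hz, hbd⟩ := ih
    obtain ⟨hc, x, hx⟩ := hbc
    refine ⟨hc, z + Pi.single x 1, ?_, ?_⟩
    · intro y hy
      by_cases hyx : y = x
      · subst hyx
        rcases hx with ⟨h1, h2⟩ | ⟨h1, h2⟩ <;> rw [h1, h2] <;> simp [hb, hc]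
      · apply hz
        simpa [Pi.single_apply, hyx] using hy
    · intro r
      rw [bd_add, hbd, bd_single]
      have h1 := zz (if b = r then 1 else 0)
      rcases hx with ⟨h1', h2'⟩ | ⟨h1', h2'⟩ <;> rw [h1', h2'] <;> linear_combination h1

lemma bd_sum {ι : Type*} (s : Finset ι) (a : ι → ZMod 2) (z : ι → GE → ZMod 2) (p) :
    bd (∑ i ∈ s, a i • z i) p = ∑ i ∈ s, a i * bd (z i) p := by
  simp only [bd, Finset.sum_apply, Pi.smul_apply, smul_eq_mul, mul_add, Finset.sum_add_distrib]

lemma bd_eq_sum (z : GE → ZMod 2) (S : Finset GE) (hS : ∀ x, z x ≠ 0 → x ∈ S) (p) :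
    bd z p = ∑ x ∈ S, z x * ((if efst x = p then 1 else 0) + (if esnd x = p then 1 else 0)) := by
  have : z = ∑ x ∈ S, z x • Pi.single x 1 := by
    funext y
    simp only [Finset.sum_apply, Pi.smul_apply, Pi.single_apply, smul_eq_mul, mul_ite, mul_one, mul_zero]
    rw [Finset.sum_ite_eq]
    split_ifs with h
    · rfl
    · by_contra hh; exact h (hS _ hh)
  conv_lhs => rw [this]
  rw [bd_sum]
  simp_rw [bd_single]

end GridMinor


namespace GridMinor

lemma zmod2_cases (a : ZMod 2) (h : a ≠ 0) : a = 1 := by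
  revert h; revert a; decide

lemma exists_other {E : Type*} [Fintype E] [DecidableEq E] (t : E → ZMod 2) (hs : ∑ e, t e = 0)
    (e0 : E) (h0 : t e0 ≠ 0) : ∃ e1, e1 ≠ e0 ∧ t e1 ≠ 0 := by
  by_contra hcon
  push Not at hcon
  apply h0
  rw [← hs, Finset.sum_eq_single e0]
  · intro b _ hb; exact hcon b hb
  · simp

/-- the incidence map of an oriented graph over `ZMod 2` -/
noncomputable def inc {E V : Type*} [Fintype E] [DecidableEq V] (a b : E → V) :
    (E → ZMod 2) →ₗ[ZMod 2] (V → ZMod 2) where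
  toFun z v := ∑ e, z e * ((if a e = v then 1 else 0) + (if b e = v then 1 else 0))
  map_add' z z' := by
    funext v; simp [add_mul, Finset.sum_add_distrib]
  map_smul' c z := by
    funext v; simp [mul_assoc, Finset.mul_sum]

lemma rank_inc {E V : Type*} [Fintype E] [Fintype V] [Nonempty V] [DecidableEq V] (a b : E → V) :
    Fintype.card E + 1 ≤ Module.finrank (ZMod 2) (LinearMap.ker (inc a b)) + Fintype.card V := by
  have h1 := LinearMap.finrank_range_add_finrank_ker (inc a b)
  let φ : (V → ZMod 2) →ₗ[ZMod 2] ZMod 2 := ∑ v, LinearMap.proj v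
  have h2 := LinearMap.finrank_range_add_finrank_ker φ
  have hφ : ∀ y, φ y = ∑ v, y v := fun y => by simp [φ]
  have hsurj : Function.Surjective φ := by
    intro c
    obtain ⟨v0⟩ := ‹Nonempty V›
    exact ⟨Pi.single v0 c, by rw [hφ]; simp⟩
  rw [LinearMap.range_eq_top.2 hsurj] at h2
  have hle : LinearMap.range (inc a b) ≤ LinearMap.ker φ := by
    rintro _ ⟨z, rfl⟩
    rw [LinearMap.mem_ker, hφ]
    simp only [inc, LinearMap.coe_mk, AddHom.coe_mk]
    rw [Finset.sum_comm]
    apply Finset.sum_eq_zero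
    intro e _
    rw [← Finset.mul_sum, Finset.sum_add_distrib]
    simp [zz]
  have h3 := Submodule.finrank_mono hle
  simp at h1 h2
  omega

theorem grid_minor_bound {V : Type*} [Fintype V] [Nonempty V] (G : SimpleGraph V)
    (B : V → Finset (ℤ × ℤ)) (disj : ∀ u v p, p ∈ B u → p ∈ B v → u = v)
    (conn : ∀ u, ∀ p ∈ B u, ∀ q ∈ B u, Relation.ReflTransGen (fun a b => b ∈ B u ∧ GAdj a b) p q)
    (hadj : ∀ u v, G.Adj u v → ∃ p ∈ B u, ∃ q ∈ B v, GAdj p q) :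
    Nat.card G.edgeSet + 3 ≤ 3 * Fintype.card V := by
  classical
  have hE : ∀ e : G.edgeSet, ∃ u v x, e.1 = s(u, v) ∧ u ≠ v ∧ efst x ∈ B u ∧ esnd x ∈ B v := by
    rintro ⟨e, he⟩
    induction e using Sym2.ind with
    | _ u v =>
      have huv : G.Adj u v := he
      obtain ⟨p, hp, q, hq, x, ⟨h1, h2⟩ | ⟨h1, h2⟩⟩ := hadj u v huv
      · exact ⟨u, v, x, rfl, huv.ne, h1 ▸ hp, h2 ▸ hq⟩
      · exact ⟨v, u, x, Sym2.eq_swap, huv.ne', h1 ▸ hq, h2 ▸ hp⟩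
  choose a b ε hab hne hεa hεb using hE
  have hεinj : Function.Injective ε := by
    intro e e' h
    apply Subtype.ext
    have h1 := disj _ _ _ (hεa e) (h ▸ hεa e')
    have h2 := disj _ _ _ (hεb e) (h ▸ hεb e')
    rw [hab, hab, h1, h2]
  have hεin : ∀ e u, efst (ε e) ∈ B u → esnd (ε e) ∈ B u → False := by
    intro e u h1 h2
    exact hne e ((disj _ _ _ (hεa e) h1).trans (disj _ _ _ (hεb e) h2).symm)
  let X : GE → Prop := fun x => (∃ u, efst x ∈ B u ∧ esnd x ∈ B u) ∨ ∃ e, x = ε e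
  -- finiteness
  let BB : Finset (ℤ × ℤ) := Finset.univ.biUnion B
  let XS : Finset GE := BB ×ˢ Finset.univ
  have hXS : ∀ x, X x → x ∈ XS := by
    rintro x (⟨u, h1, h2⟩ | ⟨e, rfl⟩)
    · simp only [XS, BB, Finset.mem_product, Finset.mem_biUnion, Finset.mem_univ, true_and, and_true]
      exact ⟨u, h1⟩
    · simp only [XS, BB, Finset.mem_product, Finset.mem_biUnion, Finset.mem_univ, true_and, and_true]
      exact ⟨_, hεa e⟩
  obtain ⟨N, hN⟩ : ∃ N : ℤ, ∀ x, X x → N ≤ x.1.1 := by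
    obtain ⟨N, hN⟩ := (XS.image (fun x => x.1.1)).bddBelow
    refine ⟨N, fun x hx => hN ?_⟩
    simp only [Finset.coe_image, Set.mem_image, Finset.mem_coe]
    exact ⟨x, hXS x hx, rfl⟩
  -- centers
  have hc : ∀ u, ∃ c : ℤ × ℤ, (B u).Nonempty → c ∈ B u := by
    intro u
    by_cases h : (B u).Nonempty
    · obtain ⟨c, hc⟩ := h; exact ⟨c, fun _ => hc⟩
    · exact ⟨0, fun h' => absurd h' h⟩
  choose c hc using hc
  -- lifted chains
  have hκ : ∀ e, ∃ κ : GE → ZMod 2, (∀ x, κ x ≠ 0 → X x) ∧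
      (∀ e', κ (ε e') = if e = e' then 1 else 0) ∧
      ∀ r, bd κ r = (if c (a e) = r then 1 else 0) + (if c (b e) = r then 1 else 0) := by
    intro e
    have ca := hc (a e) ⟨_, hεa e⟩
    have cb := hc (b e) ⟨_, hεb e⟩
    obtain ⟨z1, hz1, hb1⟩ := exists_chain (B (a e)) _ _ ca (conn _ _ ca _ (hεa e))
    obtain ⟨z2, hz2, hb2⟩ := exists_chain (B (b e)) _ _ (hεb e) (conn _ _ (hεb e) _ cb)
    refine ⟨z1 + Pi.single (ε e) 1 + z2, ?_, ?_, ?_⟩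
    · intro x hx
      by_cases h1 : z1 x = 0
      · by_cases h2 : z2 x = 0
        · right
          refine ⟨e, ?_⟩
          by_contra hh
          apply hx
          simp [h1, h2, Pi.single_apply, hh]
        · exact Or.inl ⟨_, hz2 x h2⟩
      · exact Or.inl ⟨_, hz1 x h1⟩
    · intro e'
      have h1 : z1 (ε e') = 0 := by
        by_contra h
        exact hεin _ _ (hz1 _ h).1 (hz1 _ h).2
      have h2 : z2 (ε e') = 0 := by
        by_contra h
        exact hεin _ _ (hz2 _ h).1 (hz2 _ h).2
      simp only [Pi.add_apply, h1, h2, Pi.single_apply, hεinj.eq_iff, zero_add, add_zero, eq_comm]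
    · intro r
      rw [bd_add, bd_add, hb1, hb2, bd_single]
      have h1 := zz (if efst (ε e) = r then 1 else 0)
      have h2 := zz (if esnd (ε e) = r then 1 else 0)
      linear_combination h1 + h2
  choose κ hκX hκε hκbd using hκ
  -- faces
  let r : ℤ × ℤ → ℤ × ℤ → Prop := fun s t => ∃ x, ¬ X x ∧ s = sq1 x ∧ t = sq2 x
  let m1 : G.edgeSet → Quot r := fun e => Quot.mk r (sq1 (ε e))
  let m2 : G.edgeSet → Quot r := fun e => Quot.mk r (sq2 (ε e))
  let bf : Quot r → G.edgeSet → ZMod 2 := fun f e =>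
    (if m1 e = f then 1 else 0) + (if m2 e = f then 1 else 0)
  let Fs : Finset (Quot r) := (Finset.univ.image m1 ∪ Finset.univ.image m2).filter (fun f => bf f ≠ 0)
  let D := inc a b
  have hspan : LinearMap.ker D ≤ Submodule.span (ZMod 2) ((Fs.image bf : Finset _) : Set (G.edgeSet → ZMod 2)) := by
    intro z hz
    have hz' : ∀ v, ∑ e, z e * ((if a e = v then 1 else 0) + (if b e = v then 1 else 0)) = 0 := by
      intro v
      exact congrFun (LinearMap.mem_ker.1 hz) v
    let zh : GE → ZMod 2 := ∑ e, z e • κ e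
    have hzhX : ∀ x, zh x ≠ 0 → X x := by
      intro x hx
      by_contra hh
      apply hx
      simp only [zh, Finset.sum_apply, Pi.smul_apply, smul_eq_mul]
      apply Finset.sum_eq_zero
      intro e _
      have : κ e x = 0 := by
        by_contra h; exact hh (hκX e x h)
      simp [this]
    have hzhε : ∀ e, zh (ε e) = z e := by
      intro e
      simp only [zh, Finset.sum_apply, Pi.smul_apply, smul_eq_mul, hκε]
      simp
    have hbd : ∀ p, bd zh p = 0 := by
      intro p
      rw [bd_sum]
      simp_rw [hκbd]
      have : ∀ e, z e * ((if c (a e) = p then 1 else 0) + (if c (b e) = p then 1 else 0)) =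
          ∑ v, (if c v = p then 1 else 0) * (z e * ((if a e = v then 1 else 0) + (if b e = v then 1 else 0))) := by
        intro e
        have hu : ∀ u, ∑ v, (if c v = p then 1 else 0) * (z e * (if u = v then 1 else 0)) =
            z e * (if c u = p then 1 else 0) := by
          intro u
          rw [Finset.sum_eq_single u]
          · simp
          · intro v _ hv; simp [hv.symm]
          · simp
        simp only [mul_add, Finset.sum_add_distrib, hu]
      rw [Finset.sum_congr rfl (fun e _ => this e), Finset.sum_comm]
      apply Finset.sum_eq_zero
      intro v _
      rw [← Finset.mul_sum, hz', mul_zero]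
    obtain ⟨w, hw⟩ := exists_cobd zh N (fun x hx => hN x (hzhX x hx)) hbd
    have hwr : ∀ s t, r s t → w s = w t := by
      rintro _ _ ⟨x, hx, rfl, rfl⟩
      have : cobd w x = 0 := by
        rw [hw]; by_contra h; exact hx (hzhX x h)
      have h1 := zz (w (sq2 x))
      unfold cobd at this
      linear_combination this - h1
    let wb : Quot r → ZMod 2 := Quot.lift w hwr
    have hzsum : z = ∑ f ∈ Fs, wb f • bf f := by
      have h0 : ∑ f ∈ Fs, wb f • bf f = ∑ f ∈ (Finset.univ.image m1 ∪ Finset.univ.image m2), wb f • bf f := by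
        apply Finset.sum_subset (Finset.filter_subset _ _)
        intro f hf hf'
        have : bf f = 0 := by
          by_contra h
          exact hf' (Finset.mem_filter.2 ⟨hf, h⟩)
        simp [this]
      rw [h0]
      funext e
      have hm1 : m1 e ∈ (Finset.univ.image m1 ∪ Finset.univ.image m2) := by simp
      have hm2 : m2 e ∈ (Finset.univ.image m1 ∪ Finset.univ.image m2) := by simp
      simp only [Finset.sum_apply, Pi.smul_apply, smul_eq_mul, bf, mul_add, Finset.sum_add_distrib,
        mul_ite, mul_one, mul_zero, Finset.sum_ite_eq, if_pos hm1, if_pos hm2]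
      rw [← hzhε e, ← hw]
      rfl
    rw [hzsum]
    apply Submodule.sum_mem
    intro f hf
    apply Submodule.smul_mem
    apply Submodule.subset_span
    simp only [Finset.coe_image, Set.mem_image, Finset.mem_coe]
    exact ⟨f, hf, rfl⟩
  have hbfZ : ∀ f v, ∑ e, bf f e * ((if a e = v then 1 else 0) + (if b e = v then 1 else 0)) = 0 := by
    intro f v
    let wf : ℤ × ℤ → ZMod 2 := fun s => if Quot.mk r s = f then 1 else 0
    have hX : ∀ x, cobd wf x ≠ 0 → X x := by
      intro x hx
      by_contra hh
      apply hx
      have : Quot.mk r (sq1 x) = Quot.mk r (sq2 x) := Quot.sound ⟨x, hh, rfl, rfl⟩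
      simp only [cobd, wf, this, zz]
    have h1 : ∑ p ∈ B v, bd (cobd wf) p = 0 := Finset.sum_eq_zero (fun p _ => bd_cobd _ _)
    have h2 : ∀ p, bd (cobd wf) p = _ := fun p => bd_eq_sum (cobd wf) XS (fun x hx => hXS x (hX x hx)) p
    rw [Finset.sum_congr rfl (fun p _ => h2 p), Finset.sum_comm] at h1
    refine Eq.trans ?_ h1
    symm
    have h3 : ∀ x ∈ XS, (∑ p ∈ B v, cobd wf x * ((if efst x = p then 1 else 0) + (if esnd x = p then 1 else 0)))
        = cobd wf x * ((if efst x ∈ B v then 1 else 0) + (if esnd x ∈ B v then 1 else 0)) := by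
      intro x _
      rw [← Finset.mul_sum, Finset.sum_add_distrib, Finset.sum_ite_eq, Finset.sum_ite_eq]
    rw [Finset.sum_congr rfl h3]
    have h4 : ∀ e, bf f e * ((if a e = v then 1 else 0) + (if b e = v then 1 else 0)) =
        cobd wf (ε e) * ((if efst (ε e) ∈ B v then 1 else 0) + (if esnd (ε e) ∈ B v then 1 else 0)) := by
      intro e
      have i1 : efst (ε e) ∈ B v ↔ a e = v :=
        ⟨fun h => disj _ _ _ (hεa e) h, fun h => h ▸ hεa e⟩
      have i2 : esnd (ε e) ∈ B v ↔ b e = v :=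
        ⟨fun h => disj _ _ _ (hεb e) h, fun h => h ▸ hεb e⟩
      simp only [i1, i2]
      rfl
    rw [Finset.sum_congr rfl (fun e _ => h4 e)]
    rw [← Finset.sum_image (s := Finset.univ) (g := ε)
      (f := fun x => cobd wf x * ((if efst x ∈ B v then 1 else 0) + (if esnd x ∈ B v then 1 else 0)))
      (fun _ _ _ _ h => hεinj h)]
    symm
    apply Finset.sum_subset
    · intro x hx
      simp only [Finset.mem_image, Finset.mem_univ, true_and] at hx
      obtain ⟨e, rfl⟩ := hx
      exact hXS _ (Or.inr ⟨e, rfl⟩)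
    · intro x hx hx'
      by_cases h0 : cobd wf x = 0
      · simp [h0]
      · rcases hX x h0 with ⟨u, hu1, hu2⟩ | ⟨e, rfl⟩
        · have i1 : efst x ∈ B v ↔ u = v :=
            ⟨fun h => disj _ _ _ hu1 h, fun h => h ▸ hu1⟩
          have i2 : esnd x ∈ B v ↔ u = v :=
            ⟨fun h => disj _ _ _ hu2 h, fun h => h ▸ hu2⟩
          simp only [i1, i2, zz, mul_zero]
        · exfalso; apply hx'; simp
  have hthree : ∀ f ∈ Fs, 3 ≤ (Finset.univ.filter (fun e => bf f e ≠ 0)).card := by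
    intro f hf
    have hf0 : bf f ≠ 0 := (Finset.mem_filter.1 hf).2
    obtain ⟨e0, he0⟩ : ∃ e, bf f e ≠ 0 := by
      by_contra h; push Not at h; exact hf0 (funext h)
    have key : ∀ v, (a e0 = v ∨ b e0 = v) → ∃ e1, e1 ≠ e0 ∧ bf f e1 ≠ 0 ∧ v ∈ e1.1 := by
      intro v hv
      obtain ⟨e1, h1, h2⟩ := exists_other _ (hbfZ f v) e0 (by
        rw [zmod2_cases _ he0, one_mul]
        have := hne e0
        rcases hv with rfl | rfl
        · simp [this.symm]
        · simp [this])
      refine ⟨e1, h1, left_ne_zero_of_mul h2, ?_⟩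
      have h3 := right_ne_zero_of_mul h2
      rw [hab, Sym2.mem_iff]
      by_contra hh
      push Not at hh
      apply h3
      simp [hh.1.symm, hh.2.symm]
    obtain ⟨e1, h11, h12, h13⟩ := key _ (Or.inl rfl)
    obtain ⟨e2, h21, h22, h23⟩ := key _ (Or.inr rfl)
    have h12' : e1 ≠ e2 := by
      rintro rfl
      apply h11
      apply Subtype.ext
      rw [hab e0]
      exact (Sym2.mem_and_mem_iff (hne e0)).1 ⟨h13, h23⟩
    have : ({e0, e1, e2} : Finset G.edgeSet).card = 3 := by
      rw [Finset.card_eq_three]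
      exact ⟨e0, e1, e2, h11.symm, h21.symm, h12', rfl⟩
    rw [← this]
    apply Finset.card_le_card
    intro e he
    simp only [Finset.mem_insert, Finset.mem_singleton] at he
    simp only [Finset.mem_filter, Finset.mem_univ, true_and]
    rcases he with rfl | rfl | rfl <;> assumption
  have hcount : 3 * Fs.card ≤ 2 * Fintype.card G.edgeSet := by
    have h1 : Fs.card * 3 ≤ ∑ f ∈ Fs, (Finset.univ.filter (fun e => bf f e ≠ 0)).card := by
      rw [← smul_eq_mul]
      exact Finset.card_nsmul_le_sum _ _ _ hthree
    have h2 : ∑ f ∈ Fs, (Finset.univ.filter (fun e => bf f e ≠ 0)).card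
        = ∑ e, (Fs.filter (fun f => bf f e ≠ 0)).card := by
      simp only [Finset.card_filter]
      rw [Finset.sum_comm]
    have h3 : ∑ e : G.edgeSet, (Fs.filter (fun f => bf f e ≠ 0)).card ≤ ∑ e : G.edgeSet, 2 := by
      apply Finset.sum_le_sum
      intro e _
      calc _ ≤ ({m1 e, m2 e} : Finset (Quot r)).card := by
            apply Finset.card_le_card
            intro f hf
            have := (Finset.mem_filter.1 hf).2
            simp only [Finset.mem_insert, Finset.mem_singleton]
            by_contra hh
            push Not at hh
            apply this
            simp [bf, hh.1.symm, hh.2.symm]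
        _ ≤ 2 := Finset.card_le_two
    rw [Finset.sum_const, Finset.card_univ, smul_eq_mul] at h3
    omega
  have hrank := rank_inc a b
  have h1 := Submodule.finrank_mono hspan
  have h2 := finrank_span_finset_le_card (R := ZMod 2) (Fs.image bf)
  have h3 : (Fs.image bf).card ≤ Fs.card := Finset.card_image_le
  rw [Nat.card_eq_fintype_card]
  have h4 : Module.finrank (ZMod 2) (LinearMap.ker (inc a b)) ≤ Fs.card := by
    refine h1.trans (le_trans ?_ h3)
    exact h2
  omega

end GridMinor


namespace LinList

variable {V : Type*} (G : SimpleGraph V)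

/-- only consecutive entries may be adjacent -/
def Lin (l : List V) : Prop :=
  ∀ i j a b, l[i]? = some a → l[j]? = some b → i + 1 < j → ¬ G.Adj a b

/-- `y` has a neighbour that is earlier in the list -/
def HasE : List V → V → Prop
  | [], _ => False
  | x :: L, y => (y ∈ L ∧ G.Adj x y) ∨ HasE L y

/-- every vertex has at most one earlier neighbour -/
def OD : List V → Prop
  | [] => True
  | x :: L => OD L ∧ ∀ y ∈ L, G.Adj x y → ¬ HasE G L y

lemma hasE_append (L : List V) (v y : V) (h : HasE G (L ++ [v]) y) :
    HasE G L y ∨ (y = v ∧ ∃ z ∈ L, G.Adj z v) := by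
  induction L with
  | nil => simp [HasE] at h
  | cons x L ih =>
    simp only [List.cons_append, HasE, List.mem_append, List.mem_singleton] at h
    rcases h with ⟨h1 | rfl, h2⟩ | h
    · exact Or.inl (Or.inl ⟨h1, h2⟩)
    · exact Or.inr ⟨rfl, x, by simp, h2⟩
    · rcases ih h with h | ⟨rfl, z, hz, h⟩
      · exact Or.inl (Or.inr h)
      · exact Or.inr ⟨rfl, z, by simp [hz], h⟩

lemma od_append (L : List V) (v : V) (hnd : (L ++ [v]).Nodup) (hL : OD G L)
    (h1 : ∀ x ∈ L, ∀ y ∈ L, G.Adj x v → G.Adj y v → x = y) : OD G (L ++ [v]) := by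
  induction L with
  | nil => simp [OD]
  | cons x L ih =>
    simp only [List.cons_append, OD] at hL ⊢
    rw [List.cons_append, List.nodup_cons] at hnd
    refine ⟨ih hnd.2 hL.1 (fun a ha b hb => h1 a (by simp [ha]) b (by simp [hb])), ?_⟩
    intro y hy hxy hE
    have hvL : v ∉ L := by
      have := hnd.2
      rw [List.nodup_append] at this
      intro hv
      exact this.2.2 v hv v (by simp) rfl
    rcases hasE_append G L v y hE with h | ⟨rfl, z, hz, h⟩
    · rcases List.mem_append.1 hy with hy | hy
      · exact hL.2 y hy hxy h
      · simp only [List.mem_singleton] at hy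
        subst hy
        -- y is not in L
        have : ∀ M : List V, HasE G M y → y ∈ M := by
          intro M
          induction M with
          | nil => simp [HasE]
          | cons a M ih =>
            rintro (⟨h, _⟩ | h)
            · simp [h]
            · simp [ih h]
        exact hvL (this L h)
    · have := h1 x (by simp) z (by simp [hz]) hxy h
      subst this
      exact hnd.1 (by simp [hz])

/-- separation of lists -/
def Sep (l l' : List V) : Prop := ∀ a ∈ l, ∀ b ∈ l', a ≠ b ∧ ¬ G.Adj a b

lemma sep_symm : Std.Symm (Sep G) := ⟨fun _ _ h a ha b hb =>
  ⟨(h b hb a ha).1.symm, fun hh => (h b hb a ha).2 hh.symm⟩⟩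

/-- well-formed collections of paths -/
def WF (A : List (List V)) : Prop :=
  (∀ l ∈ A, Lin G l ∧ l ≠ [] ∧ l.Nodup) ∧ A.Pairwise (Sep G)

lemma WF.perm {A A' : List (List V)} (h : WF G A) (hp : A.Perm A') : WF G A' := by
  refine ⟨fun l hl => h.1 l (hp.symm.subset hl), ?_⟩
  exact (List.Perm.pairwise_iff (fun {a b} hab => (sep_symm G).symm a b hab) hp).1 h.2

lemma lin_cons (x : V) (l : List V) (hl : Lin G l) (hx : ∀ y ∈ l.tail, ¬ G.Adj x y) :
    Lin G (x :: l) := by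
  intro i j a b hi hj hij
  match i, j with
  | 0, j + 1 =>
    simp only [List.getElem?_cons_zero, Option.some.injEq] at hi
    simp only [List.getElem?_cons_succ] at hj
    subst hi
    apply hx
    obtain ⟨j, rfl⟩ : ∃ k, j = k + 1 := ⟨j - 1, by omega⟩
    cases l with
    | nil => simp at hj
    | cons c l =>
      simp only [List.getElem?_cons_succ] at hj
      exact List.mem_of_getElem? hj
  | i + 1, j + 1 =>
    simp only [List.getElem?_cons_succ] at hi hj
    exact hl i j a b hi hj (by omega)
  | i + 1, 0 => omega

lemma lin_append (l r : List V) (hl : Lin G l) (hr : Lin G r)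
    (h : ∀ i j a b, l[i]? = some a → r[j]? = some b → (i + 1 < l.length ∨ 0 < j) → ¬ G.Adj a b) :
    Lin G (l ++ r) := by
  intro i j a b hi hj hij
  rw [List.getElem?_append] at hi hj
  split_ifs at hi hj with h1 h2
  · exact hl i j a b hi hj hij
  · exact h i _ a b hi hj (by omega)
  · omega
  · exact hr _ _ a b hi hj (by omega)

lemma lin_reverse (l : List V) (hl : Lin G l) : Lin G l.reverse := by
  intro i j a b hi hj hij
  have h1 : i < l.length := by
    have := (List.getElem?_eq_some_iff.1 hi).1; simpa using this
  have h2 : j < l.length := by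
    have := (List.getElem?_eq_some_iff.1 hj).1; simpa using this
  rw [List.getElem?_reverse h1] at hi
  rw [List.getElem?_reverse h2] at hj
  intro hab
  exact hl _ _ b a hj hi (by omega) hab.symm

lemma lin_flatten (A : List (List V)) (h : WF G A) : Lin G A.flatten ∧ A.flatten.Nodup := by
  induction A with
  | nil => exact ⟨by simp [Lin], by simp⟩
  | cons l A ih =>
    have h2 := List.pairwise_cons.1 h.2
    have hA : WF G A := ⟨fun l hl => h.1 l (by simp [hl]), h2.2⟩
    have hs : Sep G l A.flatten := by
      intro a ha b hb
      obtain ⟨l', hl', hb⟩ := List.mem_flatten.1 hb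
      exact h2.1 l' hl' a ha b hb
    have hl := h.1 l (by simp)
    rw [List.flatten_cons]
    refine ⟨lin_append G _ _ hl.1 (ih hA).1 ?_, ?_⟩
    · intro i j a b hi hj _
      exact (hs a (List.mem_of_getElem? hi) b (List.mem_of_getElem? hj)).2
    · rw [List.nodup_append]
      exact ⟨hl.2.2, (ih hA).2, fun a ha b hb => (hs a ha b hb).1⟩

lemma head_tail {l : List V} {x : V} (hne : l ≠ []) (ht : ∀ y ∈ l.tail, ¬ G.Adj x y)
    {i : ℕ} {a : V} (hi : l[i]? = some a) (hia : 0 < i) : ¬ G.Adj x a := by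
  apply ht
  cases l with
  | nil => exact absurd rfl hne
  | cons c l =>
    obtain ⟨k, rfl⟩ : ∃ k, i = k + 1 := ⟨i - 1, by omega⟩
    simp only [List.getElem?_cons_succ] at hi
    exact List.mem_of_getElem? hi

lemma length_flatten_ge (A : List (List V)) (h : ∀ l ∈ A, l ≠ []) : A.length ≤ A.flatten.length := by
  induction A with
  | nil => simp
  | cons l A ih =>
    have h1 := ih (fun l hl => h l (by simp [hl]))
    have h2 : 0 < l.length := List.length_pos_iff.2 (h l (by simp))
    simp only [List.flatten_cons, List.length_append, List.length_cons]
    omega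

lemma length_flatten_ge_mem (A : List (List V)) (l : List V) (h : l ∈ A) : l.length ≤ A.flatten.length := by
  induction A with
  | nil => simp at h
  | cons l' A ih =>
    simp only [List.flatten_cons, List.length_append]
    rcases List.mem_cons.1 h with rfl | h
    · omega
    · have := ih h; omega

theorem main_ind (L : List V) (hnd : L.Nodup) (hL : OD G L) :
    ∃ O C D : List (List V), WF G (O ++ C ++ D) ∧ (∀ l ∈ O ++ C ++ D, ∀ y ∈ l, y ∈ L) ∧
      (∀ l ∈ O, ∀ y ∈ l.tail, HasE G L y) ∧
      (∀ l ∈ C, 3 ≤ l.length ∧ ∃ t, ∀ y ∈ l, y ≠ t → HasE G L y) ∧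
      (∀ l ∈ D, ∀ y ∈ l, HasE G L y) ∧
      3 * L.length ≤ 3 * (O ++ C ++ D).flatten.length + D.flatten.length := by
  classical
  induction L with
  | nil => exact ⟨[], [], [], by simp [WF]⟩
  | cons x L ih =>
    rw [List.nodup_cons] at hnd
    obtain ⟨O, C, D, hW, hsub, hO, hC, hD, hcard⟩ := ih hnd.2 hL.1
    have hnotE : ∀ y ∈ L, HasE G L y → ¬ G.Adj x y := fun y hy hE hxy => hL.2 y hy hxy hE
    have hmono : ∀ y, HasE G L y → HasE G (x :: L) y := fun y h => Or.inr h
    let p : List V → Prop := fun l => ∃ y ∈ l, G.Adj x y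
    have hOt : ∀ l ∈ O, ∀ y ∈ l.tail, ¬ G.Adj x y := by
      intro l hl y hy
      exact hnotE y (hsub l (by simp [hl]) y (List.mem_of_mem_tail hy)) (hO l hl y hy)
    have hDn : ∀ l ∈ D, ∀ y ∈ l, ¬ G.Adj x y := by
      intro l hl y hy
      exact hnotE y (hsub l (by simp [hl]) y hy) (hD l hl y hy)
    have hsplit : ∀ A : List (List V), (A.filter (fun l => ¬ p l) ++ A.filter (fun l => p l)).Perm A := by
      intro A
      have := List.filter_append_perm (fun l => decide (p l)) A
      refine (List.perm_append_comm).trans ?_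
      convert this using 3
      simp
    have hxL : ∀ l ∈ O ++ C ++ D, ∀ y ∈ l, x ≠ y := by
      intro l hl y hy h
      exact hnd.1 (h ▸ hsub l hl y hy)
    have hOhead : ∀ l ∈ O, p l → ∀ y ∈ l, HasE G (x :: L) y := by
      intro l hl hp y hy
      obtain ⟨z, hz, hxz⟩ := hp
      cases l with
      | nil => simp at hy
      | cons c l =>
        rcases List.mem_cons.1 hy with rfl | hy
        · rcases List.mem_cons.1 hz with rfl | hz
          · exact Or.inl ⟨hsub (_ :: l) (by simp [hl]) _ List.mem_cons_self, hxz⟩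
          · exact absurd hxz (hOt _ hl z hz)
        · exact hmono _ (hO _ hl y hy)
    by_cases hrem : (C.filter (fun l => p l)) ≠ [] ∨ 3 ≤ (O.filter (fun l => p l)).length
    · -- remove x
      refine ⟨O.filter (fun l => ¬ p l), C.filter (fun l => ¬ p l),
        D ++ (O.filter (fun l => p l) ++ C.filter (fun l => p l)), ?_⟩
      have hperm : (O ++ C ++ D).Perm (O.filter (fun l => ¬ p l) ++ C.filter (fun l => ¬ p l) ++
        (D ++ (O.filter (fun l => p l) ++ C.filter (fun l => p l)))) := by
        have h1 := hsplit O
        have h2 := hsplit C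
        rw [List.perm_iff_count] at h1 h2 ⊢
        intro a
        have h1 := h1 a
        have h2 := h2 a
        simp only [List.count_append] at h1 h2 ⊢
        omega
      refine ⟨hW.perm G hperm, ?_, ?_, ?_, ?_, ?_⟩
      · intro l hl y hy
        exact List.mem_cons_of_mem _ (hsub l (hperm.symm.subset hl) y hy)
      · intro l hl y hy
        exact hmono _ (hO l (List.mem_of_mem_filter hl) y hy)
      · intro l hl
        obtain ⟨h1, t, ht⟩ := hC l (List.mem_of_mem_filter hl)
        exact ⟨h1, t, fun y hy hyt => hmono _ (ht y hy hyt)⟩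
      · intro l hl y hy
        rcases List.mem_append.1 hl with hl | hl
        · exact hmono _ (hD l hl y hy)
        rcases List.mem_append.1 hl with hl | hl
        · have := List.mem_filter.1 hl
          exact hOhead l this.1 (by simpa using this.2) y hy
        · have hl' := List.mem_filter.1 hl
          obtain ⟨z, hz, hxz⟩ : p l := by simpa using hl'.2
          obtain ⟨h1, t, ht⟩ := hC l hl'.1
          have hzL := hsub l (by simp [hl'.1]) z hz
          by_cases hyt : y = t
          · by_cases hzt : z = t
            · rw [hyt, ← hzt]
              exact Or.inl ⟨hzL, hxz⟩
            · exact absurd hxz (hnotE z hzL (ht z hz hzt))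
          · exact hmono _ (ht y hy hyt)
      · have hlen := (hperm.flatten).length_eq
        have h3 : 3 ≤ (O.filter (fun l => p l)).flatten.length + (C.filter (fun l => p l)).flatten.length := by
          rcases hrem with h | h
          · obtain ⟨l, hl⟩ := List.exists_mem_of_ne_nil _ h
            have h1 := length_flatten_ge_mem _ l hl
            have h2 := (hC l (List.mem_of_mem_filter hl)).1
            omega
          · have := length_flatten_ge (O.filter (fun l => p l)) (fun l hl =>
              (hW.1 l (by simp [List.mem_of_mem_filter hl])).2.1)
            omega
        rw [← hlen]
        simp only [List.flatten_append, List.length_append, List.length_cons] at hcard ⊢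
        omega
    · push Not at hrem
      obtain ⟨hCe, hOl⟩ := hrem
      have hCn : ∀ l ∈ C, ∀ y ∈ l, ¬ G.Adj x y := by
        intro l hl y hy hxy
        have : l ∈ C.filter (fun l => p l) := List.mem_filter.2 ⟨hl, by simpa using ⟨y, hy, hxy⟩⟩
        rw [hCe] at this
        simp at this
      have hOn : ∀ l ∈ O.filter (fun l => ¬ p l), ∀ y ∈ l, ¬ G.Adj x y := by
        intro l hl y hy hxy
        have := (List.mem_filter.1 hl).2
        simp only [decide_not, Bool.not_eq_true', decide_eq_false_iff_not] at this
        exact this ⟨y, hy, hxy⟩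
      have hOp := hsplit O
      have hsubf : ∀ l ∈ O.filter (fun l => ¬ p l), l ∈ O := fun l hl => List.mem_of_mem_filter hl
      set O' := O.filter (fun l => ¬ p l) with hO'
      have hrest : ∀ l ∈ O' ++ C ++ D, ∀ y ∈ l, ¬ G.Adj x y := by
        intro l hl y hy
        simp only [List.mem_append] at hl
        rcases hl with (hl | hl) | hl
        · exact hOn l hl y hy
        · exact hCn l hl y hy
        · exact hDn l hl y hy
      match hm : O.filter (fun l => p l) with
      | [] =>
        rw [hm, List.append_nil] at hOp
        have hW' : WF G (O' ++ C ++ D) := hW.perm G ((hOp.symm.append_right C).append_right D)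
        refine ⟨[x] :: O', C, D, ?_, ?_, ?_, ?_, ?_, ?_⟩
        · refine ⟨?_, ?_⟩
          · intro l hl
            simp only [List.cons_append, List.mem_cons] at hl
            rcases hl with rfl | hl
            · exact ⟨lin_cons G _ _ (by simp [Lin]) (by simp), by simp, by simp⟩
            · exact hW'.1 l hl
          · simp only [List.cons_append, List.pairwise_cons]
            refine ⟨?_, hW'.2⟩
            intro l hl a ha b hb
            simp only [List.mem_singleton] at ha
            subst ha
            refine ⟨hxL l ?_ b hb, hrest l hl b hb⟩
            simp only [List.mem_append] at hl ⊢
            rcases hl with (hl | hl) | hl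
            · simp [hsubf l hl]
            · simp [hl]
            · simp [hl]
        · intro l hl y hy
          simp only [List.cons_append, List.mem_cons, List.mem_append] at hl
          rcases hl with rfl | (hl | hl) | hl
          · simp at hy; simp [hy]
          · exact List.mem_cons_of_mem _ (hsub l (by simp [hsubf l hl]) y hy)
          · exact List.mem_cons_of_mem _ (hsub l (by simp [hl]) y hy)
          · exact List.mem_cons_of_mem _ (hsub l (by simp [hl]) y hy)
        · intro l hl y hy
          rcases List.mem_cons.1 hl with rfl | hl
          · simp at hy
          · exact hmono _ (hO l (hsubf l hl) y hy)
        · intro l hl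
          obtain ⟨h1, t, ht⟩ := hC l hl
          exact ⟨h1, t, fun y hy hyt => hmono _ (ht y hy hyt)⟩
        · intro l hl y hy; exact hmono _ (hD l hl y hy)
        · have := (hOp.flatten).length_eq
          simp only [List.flatten_append, List.length_append, List.length_cons, List.flatten_cons,
            List.cons_append, List.length_nil] at hcard this ⊢
          omega
      | [l1] =>
        rw [hm] at hOp
        have hl1 : l1 ∈ O := List.mem_of_mem_filter (by rw [hm]; simp : l1 ∈ O.filter (fun l => p l))
        have hp1 : p l1 := by
          have : l1 ∈ O.filter (fun l => p l) := by rw [hm]; simp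
          simpa using (List.mem_filter.1 this).2
        have hperm : (O ++ C ++ D).Perm (l1 :: (O' ++ C ++ D)) := by
          rw [List.perm_iff_count] at hOp ⊢
          intro a
          have := hOp a
          simp only [List.count_append, List.count_cons, List.count_nil] at this ⊢
          omega
        have hW' := hW.perm G hperm
        have hWc := List.pairwise_cons.1 hW'.2
        refine ⟨(x :: l1) :: O', C, D, ?_, ?_, ?_, ?_, ?_, ?_⟩
        · refine ⟨?_, ?_⟩
          · intro l hl
            simp only [List.cons_append, List.mem_cons] at hl
            rcases hl with rfl | hl
            · have := hW'.1 l1 (by simp)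
              refine ⟨lin_cons G _ _ this.1 (hOt l1 hl1), by simp, ?_⟩
              rw [List.nodup_cons]
              exact ⟨fun h => hxL l1 (by simp [hl1]) x h rfl, this.2.2⟩
            · exact hW'.1 l (List.mem_cons_of_mem _ hl)
          · simp only [List.cons_append, List.pairwise_cons]
            refine ⟨?_, hWc.2⟩
            intro l hl a ha b hb
            rcases List.mem_cons.1 ha with rfl | ha
            · exact ⟨hxL l (hperm.symm.subset (List.mem_cons_of_mem _ hl)) b hb, hrest l hl b hb⟩
            · exact hWc.1 l hl a ha b hb
        · intro l hl y hy
          simp only [List.cons_append, List.mem_cons] at hl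
          rcases hl with rfl | hl
          · rcases List.mem_cons.1 hy with rfl | hy
            · simp
            · exact List.mem_cons_of_mem _ (hsub l1 (by simp [hl1]) y hy)
          · exact List.mem_cons_of_mem _ (hsub l (hperm.symm.subset (List.mem_cons_of_mem _ hl)) y hy)
        · intro l hl y hy
          rcases List.mem_cons.1 hl with rfl | hl
          · exact hOhead l1 hl1 hp1 y hy
          · exact hmono _ (hO l (hsubf l hl) y hy)
        · intro l hl
          obtain ⟨h1, t, ht⟩ := hC l hl
          exact ⟨h1, t, fun y hy hyt => hmono _ (ht y hy hyt)⟩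
        · intro l hl y hy; exact hmono _ (hD l hl y hy)
        · have := (hperm.flatten).length_eq
          simp only [List.flatten_append, List.length_append, List.length_cons, List.flatten_cons,
            List.cons_append] at hcard this ⊢
          omega
      | [l1, l2] =>
        rw [hm] at hOp
        have hm1 : l1 ∈ O.filter (fun l => p l) := by rw [hm]; simp
        have hm2 : l2 ∈ O.filter (fun l => p l) := by rw [hm]; simp
        have hl1 : l1 ∈ O := List.mem_of_mem_filter hm1
        have hl2 : l2 ∈ O := List.mem_of_mem_filter hm2
        have hp1 : p l1 := by simpa using (List.mem_filter.1 hm1).2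
        have hp2 : p l2 := by simpa using (List.mem_filter.1 hm2).2
        have hperm : (O ++ C ++ D).Perm (l1 :: l2 :: (O' ++ C ++ D)) := by
          rw [List.perm_iff_count] at hOp ⊢
          intro a
          have := hOp a
          simp only [List.count_append, List.count_cons, List.count_nil] at this ⊢
          omega
        have hW' := hW.perm G hperm
        have hWc := List.pairwise_cons.1 hW'.2
        have hWcc := List.pairwise_cons.1 hWc.2
        have hw1 := hW'.1 l1 (by simp)
        have hw2 := hW'.1 l2 (by simp)
        have hs12 : Sep G l1 l2 := hWc.1 l2 (by simp)
        have hperm2 : ((l1.reverse ++ x :: l2) :: (O' ++ C ++ D)).Perm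
            (O' ++ (l1.reverse ++ x :: l2) :: C ++ D) := by
          rw [List.perm_iff_count]
          intro a
          simp only [List.count_append, List.count_cons]
          omega
        have hWnew : WF G ((l1.reverse ++ x :: l2) :: (O' ++ C ++ D)) := by
          refine ⟨?_, ?_⟩
          · intro l hl
            rcases List.mem_cons.1 hl with rfl | hl
            · refine ⟨?_, by simp, ?_⟩
              · refine lin_append G _ _ (lin_reverse G _ hw1.1) (lin_cons G _ _ hw2.1 (hOt l2 hl2)) ?_
                intro i j a b hi hj hij
                have hi' : i < l1.length := by
                  have := (List.getElem?_eq_some_iff.1 hi).1; simpa using this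
                rw [List.getElem?_reverse hi'] at hi
                match j with
                | 0 =>
                  simp only [List.getElem?_cons_zero, Option.some.injEq] at hj
                  subst hj
                  intro hadj
                  exact head_tail G hw1.2.1 (hOt l1 hl1) hi (by simp at hij; omega) hadj.symm
                | j + 1 =>
                  simp only [List.getElem?_cons_succ] at hj
                  exact (hs12 a (List.mem_of_getElem? hi) b (List.mem_of_getElem? hj)).2
              · rw [List.nodup_append]
                refine ⟨List.nodup_reverse.2 hw1.2.2, ?_, ?_⟩
                · rw [List.nodup_cons]
                  exact ⟨fun h => hxL l2 (by simp [hl2]) x h rfl, hw2.2.2⟩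
                · intro a ha b hb
                  rw [List.mem_reverse] at ha
                  rcases List.mem_cons.1 hb with rfl | hb
                  · exact (hxL l1 (by simp [hl1]) a ha).symm
                  · exact (hs12 a ha b hb).1
            · exact hW'.1 l (by simp only [List.mem_cons]; exact Or.inr (Or.inr hl))
          · rw [List.pairwise_cons]
            refine ⟨?_, hWcc.2⟩
            intro l hl a ha b hb
            simp only [List.mem_append, List.mem_reverse, List.mem_cons] at ha
            rcases ha with ha | rfl | ha
            · exact hWc.1 l (List.mem_cons_of_mem _ hl) a ha b hb
            · exact ⟨hxL l (hperm.symm.subset (by simp only [List.mem_cons]; exact Or.inr (Or.inr hl))) b hb,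
                hrest l hl b hb⟩
            · exact hWcc.1 l hl a ha b hb
        refine ⟨O', (l1.reverse ++ x :: l2) :: C, D, hWnew.perm G hperm2, ?_, ?_, ?_, ?_, ?_⟩
        · intro l hl y hy
          rcases List.mem_cons.1 (hperm2.symm.subset hl) with rfl | hl
          · simp only [List.mem_append, List.mem_reverse, List.mem_cons] at hy
            rcases hy with hy | rfl | hy
            · exact List.mem_cons_of_mem _ (hsub l1 (by simp [hl1]) y hy)
            · simp
            · exact List.mem_cons_of_mem _ (hsub l2 (by simp [hl2]) y hy)
          · exact List.mem_cons_of_mem _ (hsub l (hperm.symm.subset (by simp only [List.mem_cons]; exact Or.inr (Or.inr hl))) y hy)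
        · intro l hl y hy
          exact hmono _ (hO l (hsubf l hl) y hy)
        · intro l hl
          rcases List.mem_cons.1 hl with rfl | hl
          · refine ⟨?_, x, ?_⟩
            · have h1 := List.length_pos_iff.2 hw1.2.1
              have h2 := List.length_pos_iff.2 hw2.2.1
              simp; omega
            · intro y hy hyx
              simp only [List.mem_append, List.mem_reverse, List.mem_cons] at hy
              rcases hy with hy | rfl | hy
              · exact hOhead l1 hl1 hp1 y hy
              · exact absurd rfl hyx
              · exact hOhead l2 hl2 hp2 y hy
          · obtain ⟨h1, t, ht⟩ := hC l hl
            exact ⟨h1, t, fun y hy hyt => hmono _ (ht y hy hyt)⟩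
        · intro l hl y hy; exact hmono _ (hD l hl y hy)
        · have := (hperm.flatten).length_eq
          simp only [List.flatten_append, List.length_append, List.length_cons, List.flatten_cons,
            List.length_reverse] at hcard this ⊢
          omega
      | l1 :: l2 :: l3 :: rest =>
        rw [hm] at hOl
        simp at hOl
        omega

end LinList


namespace LinList

variable {V : Type*} (G : SimpleGraph V)

lemma three_lists [DecidableEq V] [DecidableRel G.Adj]
    (h5 : ∀ S : Finset V, S.Nonempty → ∃ v ∈ S, (S.filter (fun y => G.Adj v y)).card ≤ 5) (S : Finset V) :
    ∃ (f : V → Fin 3) (L : Fin 3 → List V), (∀ c y, y ∈ L c ↔ y ∈ S ∧ f y = c) ∧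
      (∀ c, (L c).Nodup) ∧ ∀ c, OD G (L c) := by
  induction S using Finset.strongInduction with
  | H S ih =>
  rcases S.eq_empty_or_nonempty with rfl | hS
  · exact ⟨fun _ => 0, fun _ => [], by simp, by simp, by simp [OD]⟩
  obtain ⟨v, hv, hdeg⟩ := h5 S hS
  obtain ⟨f, L, h1, h2, h3⟩ := ih (S.erase v) (Finset.erase_ssubset hv)
  obtain ⟨c, hc⟩ : ∃ c, (((S.erase v).filter (fun y => G.Adj v y)).filter (fun y => f y = c)).card ≤ 1 := by
    by_contra hcon
    push Not at hcon
    have hs := Finset.card_eq_sum_card_fiberwise (f := f) (s := (S.erase v).filter (fun y => G.Adj v y))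
      (t := Finset.univ) (by simp)
    have : ∑ c : Fin 3, 2 ≤ ∑ c : Fin 3, (((S.erase v).filter (fun y => G.Adj v y)).filter (fun y => f y = c)).card :=
      Finset.sum_le_sum (fun c _ => hcon c)
    rw [← hs] at this
    have h6 := Finset.card_le_card (Finset.filter_subset_filter (fun y => G.Adj v y) (Finset.erase_subset v S))
    simp at this
    omega
  have hvL : ∀ c, v ∉ L c := by
    intro c hh
    have := (h1 c v).1 hh
    simp at this
  refine ⟨Function.update f v c, fun d => if d = c then L d ++ [v] else L d, ?_, ?_, ?_⟩
  · intro d y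
    by_cases hy : y = v
    · subst hy
      by_cases hd : d = c
      · simp [hd, hv]
      · simp [hd, hvL, Ne.symm hd]
    · have := h1 d y
      by_cases hd : d = c
      · simp [hd, hy, ← this]
        rw [← hd, this]; simp [hy]
      · simp [hd, hy, this]
  · intro d
    by_cases hd : d = c
    · simp only [hd, if_true]
      rw [List.nodup_append]
      refine ⟨h2 c, by simp, ?_⟩
      intro a ha b hb hab
      simp at hb
      exact hvL c (hb ▸ hab ▸ ha)
    · simp only [hd, if_false]; exact h2 d
  · intro d
    by_cases hd : d = c
    · simp only [hd, if_true]
      refine od_append G _ _ ?_ (h3 c) ?_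
      · rw [List.nodup_append]
        refine ⟨h2 c, by simp, ?_⟩
        intro a ha b hb hab
        simp at hb
        exact hvL c (hb ▸ hab ▸ ha)
      · intro x hx y hy hxv hyv
        rw [Finset.card_le_one] at hc
        have hx' := (h1 c x).1 hx
        have hy' := (h1 c y).1 hy
        refine hc x ?_ y ?_
        · simp only [Finset.mem_filter]; exact ⟨⟨hx'.1, hxv.symm⟩, hx'.2⟩
        · simp only [Finset.mem_filter]; exact ⟨⟨hy'.1, hyv.symm⟩, hy'.2⟩
    · simp only [hd, if_false]; exact h3 d

theorem exists_lin [Fintype V] [DecidableEq V] [DecidableRel G.Adj]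
    (h5 : ∀ S : Finset V, S.Nonempty → ∃ v ∈ S, (S.filter (fun y => G.Adj v y)).card ≤ 5) :
    ∃ w : List V, w.Nodup ∧ Lin G w ∧ Fintype.card V ≤ 4 * w.length := by
  obtain ⟨f, L, h1, h2, h3⟩ := three_lists G h5 Finset.univ
  have hlen : ∀ c, (L c).length = (Finset.univ.filter (fun y => f y = c)).card := by
    intro c
    rw [← List.toFinset_card_of_nodup (h2 c)]
    congr 1
    ext y
    simp [h1]
  have hs := Finset.card_eq_sum_card_fiberwise (f := f) (s := (Finset.univ : Finset V))
      (t := Finset.univ) (by simp)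
  obtain ⟨c, hc⟩ : ∃ c, Fintype.card V ≤ 3 * (L c).length := by
    by_contra hcon
    push Not at hcon
    simp only [← hlen, Fin.sum_univ_three, Finset.card_univ] at hs
    have := hcon 0
    have := hcon 1
    have := hcon 2
    omega
  obtain ⟨O, C, D, hW, -, -, -, -, hcard⟩ := main_ind G (L c) (h2 c) (h3 c)
  refine ⟨(O ++ C ++ D).flatten, (lin_flatten G _ hW).2, (lin_flatten G _ hW).1, ?_⟩
  simp only [List.flatten_append, List.length_append] at hcard ⊢
  omega

open GridMinor in
theorem h5_of_model [Fintype V] [DecidableEq V] [DecidableRel G.Adj] (B : V → Finset (ℤ × ℤ))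
    (disj : ∀ u v p, p ∈ B u → p ∈ B v → u = v)
    (conn : ∀ u, ∀ p ∈ B u, ∀ q ∈ B u, Relation.ReflTransGen (fun a b => b ∈ B u ∧ GAdj a b) p q)
    (hadj : ∀ u v, G.Adj u v → ∃ p ∈ B u, ∃ q ∈ B v, GAdj p q) (S : Finset V) (hS : S.Nonempty) :
    ∃ v ∈ S, (S.filter (fun y => G.Adj v y)).card ≤ 5 := by
  classical
  haveI : Nonempty S := hS.to_subtype
  let H : SimpleGraph S := G.induce (S : Set V)
  have hb := grid_minor_bound H (fun u => B u) (fun u v p hu hv => Subtype.ext (disj u v p hu hv))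
    (fun u => conn u) (fun u v h => hadj u v h)
  rw [Nat.card_eq_fintype_card, ← SimpleGraph.edgeFinset_card] at hb
  have hd := SimpleGraph.sum_degrees_eq_twice_card_edges H
  by_contra hcon
  push Not at hcon
  have h6 : ∀ v : S, 6 ≤ H.degree v := by
    intro v
    refine le_trans (hcon v v.2) ?_
    rw [← SimpleGraph.card_neighborFinset_eq_degree]
    rw [← Finset.card_map (Function.Embedding.subtype _) (s := H.neighborFinset v)]
    apply Finset.card_le_card
    intro y hy
    simp only [Finset.mem_filter] at hy
    simp only [Finset.mem_map, SimpleGraph.mem_neighborFinset]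
    exact ⟨⟨y, hy.1⟩, hy.2, rfl⟩
  have : ∑ v : S, 6 ≤ ∑ v : S, H.degree v := Finset.sum_le_sum (fun v _ => h6 v)
  rw [hd] at this
  simp at this hb
  have := hS.card_pos
  omega

end LinList


namespace Bend

abbrev PP : Type := ℝ × ℝ

lemma homeo_of_lip (φ : PP → PP) (c : NNReal) (hc : c < 1) (hφ : LipschitzWith c φ) :
    ∃ h : PP ≃ₜ PP, ∀ p, h p = p + φ p := by
  have hf : ApproximatesLinearOn (fun p => p + φ p) ((ContinuousLinearEquiv.refl ℝ PP : PP ≃L[ℝ] PP) : PP →L[ℝ] PP)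
      univ c := by
    intro x _ y _
    have := hφ.dist_le_mul x y
    simp only [dist_eq_norm] at this
    simpa [add_sub_add_comm] using this
  refine ⟨hf.toHomeomorph _ (Or.inr ?_), fun p => rfl⟩
  have : ‖((ContinuousLinearEquiv.refl ℝ PP).symm : PP →L[ℝ] PP)‖₊ ≤ 1 := by
    have := ContinuousLinearMap.norm_id_le (𝕜 := ℝ) (E := PP)
    exact this
  have hpos : 0 < ‖((ContinuousLinearEquiv.refl ℝ PP).symm : PP →L[ℝ] PP)‖₊ := by
    have := ContinuousLinearMap.norm_id (𝕜 := ℝ) (E := PP)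
    rw [← NNReal.coe_pos]
    have h2 : ‖((ContinuousLinearEquiv.refl ℝ PP).symm : PP →L[ℝ] PP)‖ = 1 := this
    simp only [coe_nnnorm, h2]; norm_num
  refine lt_of_lt_of_le hc ?_
  exact (one_le_inv₀ hpos).2 this

lemma lip_smul (a : PP → ℝ) (L : ℝ) (hL : ∀ p q, |a p - a q| ≤ L * ‖p - q‖) (hL0 : 0 ≤ L) (v : PP)
    (h : L * ‖v‖ < 1) : ∃ h : PP ≃ₜ PP, ∀ p, h p = p + a p • v := by
  refine homeo_of_lip (fun p => a p • v) (L * ‖v‖).toNNReal (by rw [Real.toNNReal_lt_one]; exact h) ?_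
  apply LipschitzWith.of_dist_le_mul
  intro p q
  simp only [dist_eq_norm, ← sub_smul, norm_smul, Real.norm_eq_abs]
  calc |a p - a q| * ‖v‖ ≤ L * ‖p - q‖ * ‖v‖ := by gcongr; exact hL p q
    _ = _ := by rw [Real.coe_toNNReal _ (by positivity)]; ring

lemma bend (B c c' : PP) (w : PP →L[ℝ] ℝ) (hc : w c = 1) (hc' : w c' = 1) (ρ : ℝ) (hρ : 0 < ρ) :
    ∃ r : ℝ, r > 0 ∧ ∃ h : PP ≃ₜ PP, (∀ p, w (p - B) ≤ 0 → h p = p) ∧ (∀ p, ρ ≤ ‖p - B‖ → h p = p) ∧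
      ∀ t : ℝ, 0 ≤ t → t ≤ r → h (B + t • c) = B + t • c' := by
  set v := c' - c with hv
  have hwv : w v = 0 := by simp [hv, hc, hc']
  set a : PP → ℝ := fun p => max 0 (min (w (p - B)) (ρ - ‖p - B‖)) with ha
  have haL : ∀ p q, |a p - a q| ≤ (‖w‖ + 1) * ‖p - q‖ := by
    intro p q
    have h1 : |w (p - B) - w (q - B)| ≤ (‖w‖ + 1) * ‖p - q‖ := by
      rw [← map_sub]
      have := w.le_opNorm (p - B - (q - B))
      rw [Real.norm_eq_abs] at this
      simp only [sub_sub_sub_cancel_right] at this ⊢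
      nlinarith [norm_nonneg (p - q)]
    have h2 : |(ρ - ‖p - B‖) - (ρ - ‖q - B‖)| ≤ (‖w‖ + 1) * ‖p - q‖ := by
      have := abs_norm_sub_norm_le (p - B) (q - B)
      simp only [sub_sub_sub_cancel_right] at this
      rw [sub_sub_sub_cancel_left, abs_sub_comm]
      nlinarith [norm_nonneg (p - q), norm_nonneg w]
    have h3 := abs_min_sub_min_le_max (w (p - B)) (ρ - ‖p - B‖) (w (q - B)) (ρ - ‖q - B‖)
    have h4 := abs_max_sub_max_le_max 0 (min (w (p - B)) (ρ - ‖p - B‖)) 0 (min (w (q - B)) (ρ - ‖q - B‖))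
    refine h4.trans (max_le ?_ (h3.trans (max_le h1 h2)))
    simp; positivity
  obtain ⟨N, hN⟩ := exists_nat_gt ((‖w‖ + 1) * ‖v‖)
  have hN0 : (0 : ℝ) < N := lt_of_le_of_lt (by positivity) hN
  obtain ⟨g, hg⟩ := lip_smul a (‖w‖ + 1) haL (by positivity) ((N : ℝ)⁻¹ • v) (by
    rw [norm_smul, norm_inv, Real.norm_natCast]
    rw [← mul_assoc, mul_comm _ (N : ℝ)⁻¹, mul_assoc, inv_mul_lt_iff₀ hN0]
    linarith)
  have hfix : ∀ p, a p = 0 → (g ^ N) p = p := by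
    intro p hp
    have : g p = p := by rw [hg, hp]; simp
    have h2 : ∀ k : ℕ, (g ^ k) p = p := by
      intro k
      induction k with
      | zero => rfl
      | succ k ih => rw [pow_succ]; change (g ^ k) (g p) = p; rw [this, ih]
    exact h2 N
  refine ⟨ρ / (1 + ‖c‖ + ‖v‖), by positivity, g ^ N, ?_, ?_, ?_⟩
  · intro p hp
    apply hfix
    simp only [ha]
    exact max_eq_left ((min_le_left _ _).trans hp)
  · intro p hp
    apply hfix
    simp only [ha]
    exact max_eq_left ((min_le_right _ _).trans (by linarith))
  · intro t ht htr
    rw [le_div_iff₀ (by positivity)] at htr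
    have h2 : ∀ k : ℕ, k ≤ N → (g ^ k) (B + t • c) = B + t • (c + ((k : ℝ) / N) • v) := by
      intro k
      induction k with
      | zero => intro _; simp
      | succ k ih =>
        intro hk
        rw [pow_succ']
        change g ((g ^ k) _) = _
        rw [ih (by omega), hg]
        have : a (B + t • (c + ((k : ℝ) / N) • v)) = t := by
          simp only [ha, add_sub_cancel_left, map_smul, map_add, hc, hwv, smul_eq_mul, mul_zero, add_zero,
            mul_one]
          have hkN : (k : ℝ) / N ≤ 1 := by
            rw [div_le_one hN0]; exact_mod_cast (by omega : k ≤ N)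
          have hn : ‖t • (c + ((k : ℝ) / N) • v)‖ ≤ t * (‖c‖ + ‖v‖) := by
            rw [norm_smul, Real.norm_eq_abs, abs_of_nonneg ht]
            gcongr
            refine (norm_add_le _ _).trans ?_
            gcongr
            rw [norm_smul, Real.norm_eq_abs, abs_of_nonneg (by positivity)]
            nlinarith [norm_nonneg v]
          rw [min_eq_left (by nlinarith), max_eq_right ht]
        rw [this]
        push_cast
        module
    rw [h2 N le_rfl, div_self hN0.ne']
    simp [hv]

lemma pull (B u : PP) (K : Set PP) (hK : IsClosed K) (t0 : ℝ) (h0 : 0 < t0)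
    (hd : ∀ t, t0 ≤ t → t ≤ 1 → B + t • u ∉ K) :
    ∃ h : PP ≃ₜ PP, (∀ p ∈ K, h p = p) ∧
      ∀ t : ℝ, 0 ≤ t → t ≤ 1 → ∃ t' : ℝ, 0 ≤ t' ∧ t' ≤ t0 ∧ h (B + t • u) = B + t' • u := by
  by_cases hu : u = 0
  · refine ⟨Homeomorph.refl _, fun _ _ => rfl, fun t _ _ => ⟨0, le_rfl, h0.le, by simp [hu]⟩⟩
  by_cases ht01 : 1 < t0
  · exact ⟨Homeomorph.refl _, fun _ _ => rfl, fun t h1 h2 => ⟨t, h1, by linarith, rfl⟩⟩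
  push Not at ht01
  have hu' : 0 < ‖u‖ := norm_pos_iff.2 hu
  set S : Set PP := (fun t : ℝ => B + t • u) '' Icc t0 1 with hS
  have hSc : IsCompact S := isCompact_Icc.image (by fun_prop)
  have hSne : S.Nonempty := ⟨_, t0, ⟨le_rfl, ht01⟩, rfl⟩
  have hdis : Disjoint S K := by
    rw [Set.disjoint_left]
    rintro _ ⟨t, ht, rfl⟩
    exact hd t ht.1 ht.2
  obtain ⟨δ, hδ, hδ'⟩ := Metric.exists_pos_forall_lt_edist hSc hK hdis
  have hδK : ∀ p ∈ K, (δ : ℝ) ≤ Metric.infDist p S := by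
    intro p hp
    rw [Metric.le_infDist hSne]
    intro y hy
    have := hδ' y hy p hp
    rw [edist_nndist] at this
    rw [dist_comm, ← coe_nndist]
    exact_mod_cast this.le
  set η : ℝ := min δ (t0 * ‖u‖) with hη
  have hη0 : 0 < η := lt_min (by exact_mod_cast hδ) (by positivity)
  set a : PP → ℝ := fun p => max 0 (η - Metric.infDist p S) with ha
  have haL : ∀ p q, |a p - a q| ≤ 1 * ‖p - q‖ := by
    intro p q
    have h4 := abs_max_sub_max_le_max 0 (η - Metric.infDist p S) 0 (η - Metric.infDist q S)
    refine h4.trans (max_le (by simp) ?_)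
    rw [sub_sub_sub_cancel_left, abs_sub_comm]
    have := (Metric.lipschitz_infDist_pt S).dist_le_mul p q
    rw [Real.dist_eq, dist_eq_norm] at this
    simpa using this
  set lam : ℝ := (2 * ‖u‖)⁻¹ with hlam
  have hlam0 : 0 < lam := by positivity
  have hlamu : lam * ‖u‖ = 1 / 2 := by rw [hlam]; field_simp
  obtain ⟨g, hg⟩ := lip_smul a 1 haL (by norm_num) ((-lam) • u) (by
    rw [norm_smul, Real.norm_eq_abs, abs_neg, abs_of_pos hlam0, hlamu]; norm_num)
  have hstep : ∀ t : ℝ, 0 ≤ t → t ≤ 1 → ∃ t' : ℝ, 0 ≤ t' ∧ t' ≤ max t0 (t - lam * η) ∧ t' ≤ 1 ∧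
      g (B + t • u) = B + t' • u := by
    intro t ht ht1
    refine ⟨t - lam * a (B + t • u), ?_, ?_, ?_, ?_⟩
    · have h1 : (t0 - t) * ‖u‖ ≤ Metric.infDist (B + t • u) S := by
        rw [Metric.le_infDist hSne]
        rintro _ ⟨s, hs, rfl⟩
        rw [dist_eq_norm, add_sub_add_left_eq_sub, ← sub_smul, norm_smul, Real.norm_eq_abs]
        gcongr
        have := hs.1
        rw [abs_sub_comm]
        exact le_trans (by linarith) (le_abs_self _)
      have h2 : a (B + t • u) ≤ t * ‖u‖ := by
        simp only [ha]
        apply max_le (by positivity)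
        have : η ≤ t0 * ‖u‖ := min_le_right _ _
        nlinarith
      nlinarith
    · by_cases htt : t0 ≤ t
      · have h1 : Metric.infDist (B + t • u) S = 0 := Metric.infDist_zero_of_mem ⟨t, ⟨htt, ht1⟩, rfl⟩
        apply le_max_of_le_right
        simp only [ha, h1, sub_zero, max_eq_right hη0.le]
        exact le_rfl
      · apply le_max_of_le_left
        push Not at htt
        have : 0 ≤ a (B + t • u) := le_max_left _ _
        nlinarith
    · have : 0 ≤ a (B + t • u) := le_max_left _ _
      nlinarith
    · rw [hg]; module
  obtain ⟨N, hN⟩ := exists_nat_gt (1 / (lam * η))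
  have hN' : 1 < N * (lam * η) := by rwa [div_lt_iff₀ (by positivity)] at hN
  refine ⟨g ^ N, ?_, ?_⟩
  · intro p hp
    have h1 : a p = 0 := by
      simp only [ha]
      apply max_eq_left
      have := hδK p hp
      have : η ≤ δ := min_le_left _ _
      linarith
    have : g p = p := by rw [hg, h1]; simp
    have h2 : ∀ k : ℕ, (g ^ k) p = p := by
      intro k
      induction k with
      | zero => rfl
      | succ k ih => rw [pow_succ]; change (g ^ k) (g p) = p; rw [this, ih]
    exact h2 N
  · intro t ht ht1
    have h2 : ∀ k : ℕ, ∃ t' : ℝ, 0 ≤ t' ∧ t' ≤ max t0 (1 - k * (lam * η)) ∧ t' ≤ 1 ∧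
        (g ^ k) (B + t • u) = B + t' • u := by
      intro k
      induction k with
      | zero => exact ⟨t, ht, by simp [ht1], ht1, rfl⟩
      | succ k ih =>
        obtain ⟨t', h1, h2, h3, h4⟩ := ih
        obtain ⟨t'', k1, k2, k3, k4⟩ := hstep t' h1 h3
        refine ⟨t'', k1, ?_, k3, ?_⟩
        · have hpos : 0 < lam * η := by positivity
          refine k2.trans (max_le (le_max_left _ _) ?_)
          rcases le_max_iff.1 h2 with h | h
          · exact le_max_of_le_left (by linarith)
          · apply le_max_of_le_right
            push_cast
            linarith
        · rw [pow_succ']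
          change g ((g ^ k) _) = _
          rw [h4, k4]
    obtain ⟨t', h1, h2, h3, h4⟩ := h2 N
    refine ⟨t', h1, ?_, h4⟩
    rcases le_max_iff.1 h2 with h | h <;> linarith

lemma exists_pos_functional (a u : PP) (h : (0 : PP) ∉ segment ℝ a u) :
    ∃ w : PP →L[ℝ] ℝ, 0 < w a ∧ 0 < w u := by
  obtain ⟨f, s, h1, h2⟩ := geometric_hahn_banach_point_closed (convex_segment a u)
    (by rw [← convexHull_pair]; exact (Set.Finite.isCompact_convexHull ℝ (Set.toFinite {a, u})).isClosed) h
  rw [map_zero] at h1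
  exact ⟨f, h1.trans (h2 _ (left_mem_segment _ _ _)), h1.trans (h2 _ (right_mem_segment _ _ _))⟩

lemma rot1 (B d e : PP) (h : (0 : PP) ∉ segment ℝ d e) (ρ : ℝ) (hρ : 0 < ρ) :
    ∃ r : ℝ, r > 0 ∧ ∃ k : ℝ, k > 0 ∧ ∃ h : PP ≃ₜ PP, (∀ p, ρ ≤ ‖p - B‖ → h p = p) ∧
      ∀ t : ℝ, 0 ≤ t → t ≤ r → h (B + t • d) = B + (k * t) • e := by
  obtain ⟨w, h1, h2⟩ := exists_pos_functional d e h
  obtain ⟨r, hr, g, hg1, hg2, hg3⟩ := bend B ((w d)⁻¹ • d) ((w e)⁻¹ • e) w (by simp [h1.ne']) (by simp [h2.ne']) ρ hρ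
  refine ⟨r / w d, by positivity, w d / w e, by positivity, g, hg2, ?_⟩
  intro t ht htr
  have := hg3 (t * w d) (by positivity) (by rwa [le_div_iff₀ h1] at htr)
  rw [smul_smul, smul_smul, mul_assoc, mul_inv_cancel₀ h1.ne', mul_one] at this
  rw [this]
  congr 2
  field_simp

lemma rot (B d e : PP) (hd : d ≠ 0) (he : e ≠ 0) (ρ : ℝ) (hρ : 0 < ρ) :
    ∃ r : ℝ, r > 0 ∧ ∃ k : ℝ, k > 0 ∧ ∃ h : PP ≃ₜ PP, (∀ p, ρ ≤ ‖p - B‖ → h p = p) ∧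
      ∀ t : ℝ, 0 ≤ t → t ≤ r → h (B + t • d) = B + (k * t) • e := by
  by_cases h : (0 : PP) ∈ segment ℝ d e
  · obtain ⟨α, β, hα, hβ, hs, h0⟩ := h
    obtain ⟨d1, d2⟩ := d
    obtain ⟨e1, e2⟩ := e
    simp only [Prod.smul_mk, Prod.mk_add_mk, smul_eq_mul, Prod.mk_eq_zero] at h0
    have hdn : 0 < d1 ^ 2 + d2 ^ 2 := by
      by_contra hh
      apply hd
      have : d1 = 0 := by nlinarith [sq_nonneg d1, sq_nonneg d2]
      have : d2 = 0 := by nlinarith [sq_nonneg d1, sq_nonneg d2]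
      simp [*]
    have hen : 0 < e1 ^ 2 + e2 ^ 2 := by
      by_contra hh
      apply he
      have : e1 = 0 := by nlinarith [sq_nonneg e1, sq_nonneg e2]
      have : e2 = 0 := by nlinarith [sq_nonneg e1, sq_nonneg e2]
      simp [*]
    have hα0 : α ≠ 0 := by
      rintro rfl
      have : β = 1 := by linarith
      subst this
      simp at h0
      simp [h0] at he
    have key1 : (0 : PP) ∉ segment ℝ (d1, d2) (-d2, d1) := by
      rintro ⟨x, y, hx, hy, hxy, h⟩
      simp only [Prod.smul_mk, Prod.mk_add_mk, smul_eq_mul, Prod.mk_eq_zero] at h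
      have h1 : x * (d1 ^ 2 + d2 ^ 2) = 0 := by linear_combination d1 * h.1 + d2 * h.2
      have h2 : y * (d1 ^ 2 + d2 ^ 2) = 0 := by linear_combination d1 * h.2 - d2 * h.1
      have := (mul_eq_zero.1 h1).resolve_right hdn.ne'
      have := (mul_eq_zero.1 h2).resolve_right hdn.ne'
      linarith
    have hcr : d1 * e2 - d2 * e1 = 0 := by
      have : α * (d1 * e2 - d2 * e1) = 0 := by linear_combination e2 * h0.1 - e1 * h0.2
      exact (mul_eq_zero.1 this).resolve_left hα0
    have key2 : (0 : PP) ∉ segment ℝ (-d2, d1) (e1, e2) := by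
      rintro ⟨x, y, hx, hy, hxy, h⟩
      simp only [Prod.smul_mk, Prod.mk_add_mk, smul_eq_mul, Prod.mk_eq_zero] at h
      have h1 : x * (d1 ^ 2 + d2 ^ 2) = 0 := by linear_combination d1 * h.2 - d2 * h.1 - y * hcr
      have h3 := (mul_eq_zero.1 h1).resolve_right hdn.ne'
      have h2 : y * (e1 ^ 2 + e2 ^ 2) = 0 := by
        rw [h3] at h
        linear_combination e1 * h.1 + e2 * h.2
      have := (mul_eq_zero.1 h2).resolve_right hen.ne'
      linarith
    obtain ⟨r, hr, k, hk, g, hg1, hg2⟩ := rot1 B _ _ key1 ρ hρ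
    obtain ⟨r', hr', k', hk', g', hg1', hg2'⟩ := rot1 B _ _ key2 ρ hρ
    refine ⟨min r (r' / k), by positivity, k' * k, by positivity, g.trans g', ?_, ?_⟩
    · intro p hp
      simp [hg1 p hp, hg1' p hp]
    · intro t ht htr
      have h1 := htr.trans (min_le_left _ _)
      have h2 := htr.trans (min_le_right _ _)
      rw [le_div_iff₀ hk] at h2
      simp only [Homeomorph.trans_apply]
      rw [hg2 t ht h1, hg2' (k * t) (by positivity) (by linarith), mul_assoc]
  · exact rot1 B d e h ρ hρ

end Bend


namespace Bend

/-- carrier of a polygonal chain -/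
def carr : List PP → Set PP
  | [] => ∅
  | [a] => {a}
  | a :: b :: l => segment ℝ b a ∪ carr (b :: l)

/-- simple chains -/
def SC : List PP → Prop
  | [] => True
  | [_] => True
  | a :: b :: l => a ≠ b ∧ segment ℝ b a ∩ carr (b :: l) ⊆ {b} ∧ SC (b :: l)

lemma mem_carr_of_mem {a : PP} {l : List PP} (h : a ∈ l) : a ∈ carr l := by
  induction l with
  | nil => simp at h
  | cons b l ih =>
    cases l with
    | nil => simpa [carr] using h
    | cons c l =>
      rcases List.mem_cons.1 h with rfl | h
      · exact Or.inl (right_mem_segment _ _ _)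
      · exact Or.inr (ih h)

lemma isCompact_segment (a b : PP) : IsCompact (segment ℝ a b) := by
  rw [← convexHull_pair]; exact Set.Finite.isCompact_convexHull ℝ (Set.toFinite {a, b})

lemma isCompact_carr (l : List PP) : IsCompact (carr l) := by
  induction l with
  | nil => exact isCompact_empty
  | cons b l ih =>
    cases l with
    | nil => exact isCompact_singleton
    | cons c l => exact (isCompact_segment _ _).union ih

lemma exists_ball {K : Set PP} (hK : IsClosed K) {B : PP} (hB : B ∉ K) :
    ∃ ρ > 0, ∀ p ∈ K, ρ ≤ ‖p - B‖ := by
  obtain ⟨ρ, h1, h2⟩ := Metric.isOpen_iff.1 hK.isOpen_compl B hB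
  refine ⟨ρ, h1, fun p hp => ?_⟩
  by_contra hh
  push Not at hh
  exact h2 (by rwa [Metric.mem_ball, dist_eq_norm] : p ∈ Metric.ball B ρ) hp

lemma straighten (e : PP) (he : e ≠ 0) (ε : ℝ) (hε : 0 < ε) : ∀ (l : List PP) (C : PP), SC (C :: l) →
    ∀ K : Set PP, IsClosed K → Disjoint K (carr (C :: l)) →
    ∃ h : PP ≃ₜ PP, (∀ p ∈ K, h p = p) ∧
      h ((C :: l).getLast (by simp)) = (C :: l).getLast (by simp) ∧
      ∀ p ∈ carr (C :: l), ∃ t, 0 ≤ t ∧ t ≤ ε ∧ h p = (C :: l).getLast (by simp) + t • e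
  | [], C, _, K, _, _ => by
    refine ⟨Homeomorph.refl _, fun _ _ => rfl, rfl, ?_⟩
    intro p hp
    refine ⟨0, le_rfl, hε.le, ?_⟩
    simp only [carr, mem_singleton_iff] at hp
    simp [hp]
  | [B], C, hs, K, hK, hd => by
    have hCB : C - B ≠ 0 := sub_ne_zero.2 hs.1
    rw [Set.disjoint_right] at hd
    have hBK : B ∉ K := hd (mem_carr_of_mem (by simp))
    obtain ⟨ρ, hρ, hρK⟩ := exists_ball hK hBK
    obtain ⟨r, hr, k, hk, g, hg1, hg2⟩ := rot B (C - B) e hCB he ρ hρ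
    obtain ⟨f, hf1, hf2⟩ := pull B (C - B) (K ∪ {B}) (hK.union isClosed_singleton) (min r (ε / k))
      (by positivity) (by
        intro t ht ht1
        have ht0 : 0 < t := lt_of_lt_of_le (by positivity) ht
        rw [mem_union, not_or]
        constructor
        · refine hd (Or.inl ?_)
          rw [segment_eq_image']
          exact ⟨t, ⟨ht0.le, ht1⟩, rfl⟩
        · simp only [mem_singleton_iff, add_eq_left, smul_eq_zero, not_or]
          exact ⟨ht0.ne', hCB⟩)
    refine ⟨f.trans g, ?_, ?_, ?_⟩
    · intro p hp
      simp only [Homeomorph.trans_apply]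
      rw [hf1 p (Or.inl hp), hg1 p (hρK p hp)]
    · simp only [Homeomorph.trans_apply, List.getLast_cons_cons, List.getLast_singleton]
      rw [hf1 B (Or.inr rfl)]
      simpa using hg2 0 le_rfl hr.le
    · intro p hp
      have : p ∈ segment ℝ B C := by
        rcases hp with hp | hp
        · exact hp
        · simp only [carr, mem_singleton_iff] at hp
          rw [hp]; exact left_mem_segment _ _ _
      rw [segment_eq_image'] at this
      obtain ⟨t, ht, rfl⟩ := this
      obtain ⟨t', h1, h2, h3⟩ := hf2 t ht.1 ht.2
      refine ⟨k * t', by positivity, ?_, ?_⟩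
      · have := h2.trans (min_le_right _ _)
        rw [le_div_iff₀ hk] at this
        linarith
      · simp only [Homeomorph.trans_apply, List.getLast_cons_cons, List.getLast_singleton]
        rw [h3, hg2 t' h1 (h2.trans (min_le_left _ _))]
  | B :: A :: l, C, hs, K, hK, hd => by
    have hCB : C - B ≠ 0 := sub_ne_zero.2 hs.1
    have hBA : B - A ≠ 0 := sub_ne_zero.2 hs.2.2.1
    rw [Set.disjoint_right] at hd
    have hBK : B ∉ K := hd (mem_carr_of_mem (by simp))
    have hBl : B ∉ carr (A :: l) := by
      intro hB
      have := hs.2.2.2.1 ⟨right_mem_segment _ _ _, hB⟩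
      exact hs.2.2.1 this
    obtain ⟨ρ, hρ, hρK⟩ := exists_ball (hK.union (isCompact_carr (A :: l)).isClosed) (B := B)
      (by simp [hBK, hBl])
    have h0 : (0 : PP) ∉ segment ℝ (C - B) (B - A) := by
      rintro ⟨α, β, hα, hβ, hαβ, h⟩
      have hβ0 : 0 < β := by
        rcases hβ.eq_or_lt with rfl | hβ
        · have : α = 1 := by linarith
          subst this
          simp only [one_smul, zero_smul, add_zero] at h
          exact absurd h hCB
        · exact hβ
      have hα0 : 0 < α := by
        rcases hα.eq_or_lt with rfl | hα
        · have : β = 1 := by linarith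
          subst this
          simp only [one_smul, zero_smul, zero_add] at h
          exact absurd h hBA
        · exact hα
      have hm : B + α • (C - B) ∈ segment ℝ B C ∩ carr (B :: A :: l) := by
        constructor
        · rw [segment_eq_image']; exact ⟨α, ⟨hα, by linarith⟩, rfl⟩
        · refine Or.inl ?_
          rw [segment_eq_image']
          refine ⟨α, ⟨hα, by linarith⟩, ?_⟩
          have h1 : α • (C - B) = - (β • (B - A)) := eq_neg_of_add_eq_zero_left h
          have h2 : α = 1 - β := by linarith
          simp only
          rw [h1, h2]
          module
      have := hs.2.1 hm
      simp only [mem_singleton_iff, add_eq_left, smul_eq_zero] at this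
      rcases this with h | h
      · exact hα0.ne' h
      · exact hCB h
    obtain ⟨w, hw1, hw2⟩ := exists_pos_functional _ _ h0
    obtain ⟨r, hr, g, hg1, hg2, hg3⟩ := bend B ((w (C - B))⁻¹ • (C - B)) ((w (B - A))⁻¹ • (B - A)) w
      (by simp only [map_smul, smul_eq_mul]; exact inv_mul_cancel₀ hw1.ne')
      (by simp only [map_smul, smul_eq_mul]; exact inv_mul_cancel₀ hw2.ne') ρ hρ
    -- step length
    set nu := ‖B - A‖ with hnu
    have hnu0 : 0 < nu := norm_pos_iff.2 hBA
    set q : ℝ := min (r / w (B - A)) (ρ / (2 * nu)) with hq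
    have hq0 : 0 < q := by positivity
    obtain ⟨f, hf1, hf2⟩ := pull B (C - B) (K ∪ carr (B :: A :: l))
      (hK.union (isCompact_carr _).isClosed) (q * w (B - A) / w (C - B))
      (by positivity) (by
        intro t ht ht1
        have ht0 : 0 < t := lt_of_lt_of_le (by positivity) ht
        have hseg : B + t • (C - B) ∈ segment ℝ B C := by
          rw [segment_eq_image']
          exact ⟨t, ⟨ht0.le, ht1⟩, rfl⟩
        rw [mem_union, not_or]
        constructor
        · exact hd (Or.inl hseg)
        · intro hh
          have := hs.2.1 ⟨hseg, hh⟩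
          simp only [mem_singleton_iff, add_eq_left, smul_eq_zero] at this
          rcases this with h | h
          · exact ht0.ne' h
          · exact hCB h)
    set B' := B + q • (B - A) with hB'
    -- points of the new segment
    have hnew : ∀ t, 0 ≤ t → t ≤ q → ‖(B + t • (B - A)) - B‖ < ρ := by
      intro t ht htq
      rw [add_sub_cancel_left, norm_smul, Real.norm_eq_abs, abs_of_nonneg ht, ← hnu]
      have h1 : t * nu ≤ ρ / (2 * nu) * nu := by
        gcongr
        exact htq.trans (min_le_right _ _)
      have h2 : ρ / (2 * nu) * nu = ρ / 2 := by field_simp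
      linarith
    have hsegB' : ∀ p ∈ segment ℝ A B', p ∈ segment ℝ A B ∨ ∃ t, 0 < t ∧ t ≤ q ∧ p = B + t • (B - A) := by
      intro p hp
      rw [segment_eq_image'] at hp
      obtain ⟨t, ht, rfl⟩ := hp
      simp only
      have h1 : A + t • (B' - A) = A + (t * (1 + q)) • (B - A) := by rw [hB']; module
      rw [h1]
      by_cases h2 : t * (1 + q) ≤ 1
      · left
        rw [segment_eq_image']
        exact ⟨_, ⟨by have := ht.1; positivity, h2⟩, rfl⟩
      · right
        push Not at h2
        refine ⟨t * (1 + q) - 1, by linarith, by nlinarith [ht.2], by module⟩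
    have hsegB'2 : ∀ t, 0 ≤ t → t ≤ q → B + t • (B - A) ∈ segment ℝ A B' := by
      intro t ht htq
      rw [segment_eq_image']
      refine ⟨(1 + t) / (1 + q), ⟨by positivity, by rw [div_le_one (by positivity)]; linarith⟩, ?_⟩
      have : B' - A = (1 + q) • (B - A) := by rw [hB']; module
      simp only
      rw [this, smul_smul, div_mul_cancel₀ _ (by positivity)]
      module
    have hsegAB : ∀ p ∈ segment ℝ A B, p ∈ segment ℝ A B' := by
      have hB2 : B ∈ segment ℝ A B' := by simpa using hsegB'2 0 le_rfl hq0.le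
      intro p hp
      exact (convex_segment A B').segment_subset (left_mem_segment _ _ _) hB2 hp
    have hs' : SC (B' :: A :: l) := by
      refine ⟨?_, ?_, hs.2.2.2.2⟩
      · have : B' - A = (1 + q) • (B - A) := by rw [hB']; module
        rw [← sub_ne_zero, this, smul_ne_zero_iff]
        exact ⟨by positivity, hBA⟩
      · rintro p ⟨hp1, hp2⟩
        rcases hsegB' p hp1 with hp | ⟨t, ht, htq, rfl⟩
        · exact hs.2.2.2.1 ⟨hp, hp2⟩
        · exact absurd (hnew t ht.le htq) (not_lt.2 (hρK _ (Or.inr hp2)))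
    have hd' : Disjoint K (carr (B' :: A :: l)) := by
      rw [Set.disjoint_right]
      rintro p (hp | hp) hpK
      · rcases hsegB' p hp with hp | ⟨t, ht, htq, rfl⟩
        · exact hd (Or.inr (Or.inl hp)) hpK
        · exact absurd (hnew t ht.le htq) (not_lt.2 (hρK _ (Or.inl hpK)))
      · exact hd (Or.inr (Or.inr hp)) hpK
    obtain ⟨h, hh1, hh2, hh3⟩ := straighten e he ε hε (A :: l) B' hs' K hK hd'
    have hfixl : ∀ p ∈ K ∪ carr (A :: l), g (f p) = p := by
      intro p hp
      rw [hf1 p (by rcases hp with hp | hp; exacts [Or.inl hp, Or.inr (Or.inr hp)]), hg2 p (hρK p hp)]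
    have hlast : (C :: B :: A :: l).getLast (by simp) = (B' :: A :: l).getLast (by simp) := by simp
    refine ⟨(f.trans g).trans h, ?_, ?_, ?_⟩
    · intro p hp
      simp only [Homeomorph.trans_apply]
      rw [hfixl p (Or.inl hp), hh1 p hp]
    · simp only [Homeomorph.trans_apply]
      rw [hfixl _ (Or.inr (mem_carr_of_mem (by
        rw [List.getLast_cons_cons, List.getLast_cons_cons]; exact List.getLast_mem _)))]
      rw [hlast]
      exact hh2
    · intro p hp
      have : g (f p) ∈ carr (B' :: A :: l) := by
        rcases hp with hp | hp | hp
        · rw [segment_eq_image'] at hp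
          obtain ⟨t, ht, rfl⟩ := hp
          obtain ⟨t', h1, h2, h3⟩ := hf2 t ht.1 ht.2
          simp only
          rw [h3]
          rw [le_div_iff₀ hw1] at h2
          have hqr : q * w (B - A) ≤ r := by
            have := min_le_left (r / w (B - A)) (ρ / (2 * nu))
            rw [← hq, le_div_iff₀ hw2] at this
            exact this
          have h5 := hg3 (t' * w (C - B)) (by positivity) (h2.trans hqr)
          rw [smul_smul, smul_smul, mul_assoc, mul_inv_cancel₀ hw1.ne', mul_one] at h5
          rw [h5]
          refine Or.inl (hsegB'2 _ (by positivity) ?_)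
          rw [← div_eq_mul_inv, div_le_iff₀ hw2]
          exact h2
        · have h1 : f p = p := hf1 p (Or.inr (Or.inl hp))
          have h2 : g p = p := by
            apply hg1
            rw [segment_eq_image'] at hp
            obtain ⟨t, ht, rfl⟩ := hp
            have : A + t • (B - A) - B = (t - 1) • (B - A) := by module
            simp only
            rw [this, map_smul, smul_eq_mul]
            nlinarith [ht.2]
          rw [h1, h2]
          exact Or.inl (hsegAB p hp)
        · rw [hfixl p (Or.inr hp)]
          exact Or.inr hp
      obtain ⟨t, h1, h2, h3⟩ := hh3 _ this
      refine ⟨t, h1, h2, ?_⟩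
      rw [hlast, ← h3]
      rfl
termination_by l => l.length

end Bend


namespace Bend

lemma carr_append (l₁ : List PP) (x : PP) (l₂ : List PP) :
    carr (l₁ ++ x :: l₂) = carr (l₁ ++ [x]) ∪ carr (x :: l₂) := by
  induction l₁ with
  | nil =>
    simp only [List.nil_append, carr]
    rw [eq_comm, union_eq_right, singleton_subset_iff]
    exact mem_carr_of_mem (by simp)
  | cons a l₁ ih =>
    cases l₁ with
    | nil =>
      simp only [List.cons_append, List.nil_append, carr]
      rw [union_assoc]
      congr 1
    | cons b l₁ =>
      simp only [List.cons_append, carr] at ih ⊢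
      rw [ih, union_assoc]

lemma carr_reverse (l : List PP) : carr l.reverse = carr l := by
  induction l with
  | nil => simp
  | cons a l ih =>
    cases l with
    | nil => simp
    | cons b l =>
      have : (a :: b :: l).reverse = l.reverse ++ b :: [a] := by simp
      rw [this, carr_append]
      have h2 : l.reverse ++ [b] = (b :: l).reverse := by simp
      rw [h2, ih]
      simp only [carr]
      have h3 : segment ℝ a b ∪ {a} = segment ℝ b a := by
        rw [segment_symm ℝ b a, union_eq_left, singleton_subset_iff]
        exact left_mem_segment ℝ a b
      rw [h3, union_comm]

lemma SC_append (l₁ : List PP) (x : PP) (l₂ : List PP) (h1 : SC (l₁ ++ [x])) (h2 : SC (x :: l₂))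
    (h : carr (l₁ ++ [x]) ∩ carr (x :: l₂) ⊆ {x}) : SC (l₁ ++ x :: l₂) := by
  induction l₁ with
  | nil => exact h2
  | cons a l₁ ih =>
    cases l₁ with
    | nil =>
      simp only [List.cons_append, List.nil_append, SC, carr] at h1 h ⊢
      refine ⟨h1.1, ?_, h2⟩
      rintro p ⟨hp1, hp2⟩
      exact h ⟨Or.inl hp1, hp2⟩
    | cons b l₁ =>
      simp only [List.cons_append, SC] at h1 ih ⊢
      refine ⟨h1.1, ?_, ih h1.2.2 ?_⟩
      · rintro p ⟨hp1, hp2⟩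
        rw [← List.cons_append, carr_append] at hp2
        rcases hp2 with hp2 | hp2
        · exact h1.2.1 ⟨hp1, hp2⟩
        · have h3 := h ⟨Or.inl hp1, hp2⟩
          rw [mem_singleton_iff] at h3
          subst h3
          exact h1.2.1 ⟨hp1, mem_carr_of_mem (by simp)⟩
      · rintro p ⟨hp1, hp2⟩
        exact h ⟨Or.inr hp1, hp2⟩

lemma SC_reverse (l : List PP) (h : SC l) : SC l.reverse := by
  induction l with
  | nil => simpa
  | cons a l ih =>
    cases l with
    | nil => simpa
    | cons b l =>
      have : (a :: b :: l).reverse = l.reverse ++ b :: [a] := by simp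
      rw [this]
      have h2 : l.reverse ++ [b] = (b :: l).reverse := by simp
      apply SC_append
      · rw [h2]; exact ih h.2.2
      · refine ⟨h.1.symm, ?_, trivial⟩
        rintro p ⟨-, hp⟩
        exact hp
      · rw [h2, carr_reverse]
        rintro p ⟨hp1, hp2⟩
        refine h.2.1 ⟨?_, hp1⟩
        rcases hp2 with hp2 | hp2
        · rwa [segment_symm]
        · simp only [carr, mem_singleton_iff] at hp2
          rw [hp2]; exact right_mem_segment _ _ _

lemma arc_image {A : Set Pt} {p q : Pt} (hA : IsArcBetween A p q) (h : Pt ≃ₜ Pt) :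
    IsArcBetween (h '' A) (h p) (h q) := by
  obtain ⟨f, h1, h2, rfl, rfl, rfl⟩ := hA
  refine ⟨h ∘ f, h.continuous.comp_continuousOn h1, h.injective.comp_injOn h2, rfl, rfl, ?_⟩
  rw [image_comp]

lemma arc_symm {A : Set Pt} {p q : Pt} (hA : IsArcBetween A p q) : IsArcBetween A q p := by
  obtain ⟨f, h1, h2, rfl, rfl, rfl⟩ := hA
  have hm : MapsTo (fun t : ℝ => 1 - t) (Icc 0 1) (Icc 0 1) := by
    intro t ht; exact ⟨by linarith [ht.2], by linarith [ht.1]⟩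
  refine ⟨fun t => f (1 - t), h1.comp (by fun_prop) hm, ?_, by simp, by simp, ?_⟩
  · intro a ha b hb hab
    have := h2 (hm ha) (hm hb) hab
    linarith
  · ext x
    constructor
    · rintro ⟨t, ht, rfl⟩
      exact ⟨1 - t, hm ht, by simp⟩
    · rintro ⟨t, ht, rfl⟩
      exact ⟨1 - t, hm ht, rfl⟩

lemma arc_segment {p q : Pt} (h : p ≠ q) : IsArcBetween (segment ℝ p q) p q := by
  refine ⟨fun t => p + t • (q - p), by fun_prop, ?_, by simp, by simp, segment_eq_image' _ _ _⟩
  intro a _ b _ hab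
  simp only [add_right_inj] at hab
  exact smul_left_injective ℝ (sub_ne_zero.2 h.symm) hab

lemma arc_concat {A B : Set Pt} {p q r : Pt} (hA : IsArcBetween A p q) (hB : IsArcBetween B q r)
    (h : A ∩ B ⊆ {q}) : IsArcBetween (A ∪ B) p r := by
  obtain ⟨f, f1, f2, rfl, rfl, rfl⟩ := hA
  obtain ⟨g, g1, g2, g3, rfl, rfl⟩ := hB
  have hIcc : Icc (0 : ℝ) 1 = Icc 0 (1 / 2) ∪ Icc (1 / 2) 1 := by
    rw [Icc_union_Icc_eq_Icc] <;> norm_num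
  set k : ℝ → Pt := fun t => if t ≤ 1 / 2 then f (2 * t) else g (2 * t - 1) with hk
  have ka : ∀ t ∈ Icc (0 : ℝ) (1 / 2), k t = f (2 * t) := by
    intro t ht; simp only [hk]; rw [if_pos ht.2]
  have kb : ∀ t ∈ Icc (1 / 2 : ℝ) 1, k t = g (2 * t - 1) := by
    intro t ht
    simp only [hk]
    split_ifs with h
    · have : t = 1 / 2 := le_antisymm h ht.1
      subst this
      norm_num
      exact g3.symm
    · rfl
  have ma : MapsTo (fun t : ℝ => 2 * t) (Icc 0 (1 / 2)) (Icc 0 1) := by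
    intro t ht; exact ⟨by linarith [ht.1], by linarith [ht.2]⟩
  have mb : MapsTo (fun t : ℝ => 2 * t - 1) (Icc (1 / 2) 1) (Icc 0 1) := by
    intro t ht; exact ⟨by linarith [ht.1], by linarith [ht.2]⟩
  have hcross : ∀ a ∈ Icc (0 : ℝ) (1 / 2), ∀ b ∈ Icc (1 / 2 : ℝ) 1, k a = k b → a = b := by
    intro a ha b hb hab
    rw [ka a ha, kb b hb] at hab
    have hm : f (2 * a) ∈ ({f 1} : Set Pt) := h ⟨⟨_, ma ha, rfl⟩, by rw [hab]; exact ⟨_, mb hb, rfl⟩⟩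
    have e1 := f2 (ma ha) (by simp : (1 : ℝ) ∈ Icc (0 : ℝ) 1) hm
    have hm2 : g (2 * b - 1) = g 0 := by rw [← hab, g3]; exact hm
    have e2 := g2 (mb hb) (by simp : (0 : ℝ) ∈ Icc (0 : ℝ) 1) hm2
    simp only at e1 e2
    linarith
  refine ⟨k, ?_, ?_, ?_, ?_, ?_⟩
  · rw [hIcc]
    refine ContinuousOn.union_of_isClosed ?_ ?_ isClosed_Icc isClosed_Icc
    · exact (f1.comp (by fun_prop) ma).congr (fun t ht => ka t ht)
    · exact (g1.comp (by fun_prop) mb).congr (fun t ht => kb t ht)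
  · intro a ha b hb hab
    rw [hIcc] at ha hb
    rcases ha with ha | ha <;> rcases hb with hb | hb
    · rw [ka a ha, ka b hb] at hab
      have := f2 (ma ha) (ma hb) hab
      simp only at this; linarith
    · exact hcross a ha b hb hab
    · exact (hcross b hb a ha hab.symm).symm
    · rw [kb a ha, kb b hb] at hab
      have := g2 (mb ha) (mb hb) hab
      simp only at this; linarith
  · rw [ka 0 (by norm_num)]; simp
  · rw [kb 1 (by norm_num)]; norm_num
  · have hk2 : k '' Icc 0 1 = k '' Icc 0 (1 / 2) ∪ k '' Icc (1 / 2) 1 := by rw [hIcc, image_union]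
    rw [hk2]
    congr 1
    · ext x
      constructor
      · rintro ⟨t, ht, rfl⟩
        have h2 : t / 2 ∈ Icc (0 : ℝ) (1 / 2) := ⟨by linarith [ht.1], by linarith [ht.2]⟩
        exact ⟨t / 2, h2, by rw [ka _ h2]; congr 1; ring⟩
      · rintro ⟨t, ht, rfl⟩
        exact ⟨2 * t, ma ht, (ka t ht).symm⟩
    · ext x
      constructor
      · rintro ⟨t, ht, rfl⟩
        have h2 : (t + 1) / 2 ∈ Icc (1 / 2 : ℝ) 1 := ⟨by linarith [ht.1], by linarith [ht.2]⟩
        exact ⟨(t + 1) / 2, h2, by rw [kb _ h2]; congr 1; ring⟩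
      · rintro ⟨t, ht, rfl⟩
        exact ⟨2 * t - 1, mb ht, (kb t ht).symm⟩

lemma arc_of_SC : ∀ (l : List PP) (a b : PP), SC (a :: (l ++ [b])) → IsArcBetween (carr (a :: (l ++ [b]))) a b
  | [], a, b, h => by
    have : carr (a :: ([] ++ [b])) = segment ℝ a b := by
      simp only [List.nil_append, carr]
      rw [segment_symm, union_eq_left, singleton_subset_iff]
      exact right_mem_segment _ _ _
    rw [this]
    exact arc_segment h.1
  | c :: l, a, b, h => by
    have ih := arc_of_SC l c b h.2.2
    have := arc_concat (arc_segment h.1) ih (by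
      rw [segment_symm]; exact h.2.1)
    rw [segment_symm] at this
    exact this

lemma segment_axis (a b : ℝ) : segment ℝ ((a, 0) : PP) (b, 0) = {x | x.2 = 0 ∧ x.1 ∈ uIcc a b} := by
  rw [← Prod.image_mk_segment_left, segment_eq_uIcc]
  ext ⟨x, y⟩
  simp only [mem_image, Prod.mk.injEq, mem_ofPred_eq]
  constructor
  · rintro ⟨z, hz, rfl, rfl⟩; exact ⟨rfl, hz⟩
  · rintro ⟨rfl, h⟩; exact ⟨x, h, rfl, rfl⟩

lemma arc_line {A : Set Pt} {p q : Pt} (hA : IsArcBetween A p q) (h0 : ∀ x ∈ A, x.2 = 0) :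
    A = segment ℝ p q := by
  obtain ⟨f, h1, h2, rfl, rfl, rfl⟩ := hA
  have m0 : (0 : ℝ) ∈ Icc (0 : ℝ) 1 := by simp
  have m1 : (1 : ℝ) ∈ Icc (0 : ℝ) 1 := by simp
  have e0 : f 0 = ((f 0).1, 0) := Prod.ext rfl (h0 _ ⟨0, m0, rfl⟩)
  have e1 : f 1 = ((f 1).1, 0) := Prod.ext rfl (h0 _ ⟨1, m1, rfl⟩)
  rw [e0, e1, segment_axis]
  have hg : ContinuousOn (fun t => (f t).1) (Icc 0 1) := continuous_fst.comp_continuousOn h1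
  have hgi : InjOn (fun t => (f t).1) (Icc 0 1) := by
    intro a ha b hb hab
    exact h2 ha hb (Prod.ext hab ((h0 _ ⟨a, ha, rfl⟩).trans (h0 _ ⟨b, hb, rfl⟩).symm))
  have hmono := hg.strictMonoOn_of_injOn_Icc' zero_le_one hgi
  ext x
  constructor
  · rintro ⟨t, ht, rfl⟩
    refine ⟨h0 _ ⟨t, ht, rfl⟩, ?_⟩
    rw [mem_uIcc]
    rcases hmono with hm | hm
    · exact Or.inl ⟨hm.monotoneOn m0 ht ht.1, hm.monotoneOn ht m1 ht.2⟩
    · exact Or.inr ⟨hm.antitoneOn ht m1 ht.2, hm.antitoneOn m0 ht ht.1⟩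
  · rintro ⟨hx2, hx1⟩
    have := intermediate_value_uIcc (f := fun t => (f t).1) (a := 0) (b := 1)
      (by rw [uIcc_of_le zero_le_one]; exact hg)
    obtain ⟨t, ht, hte⟩ := this hx1
    rw [uIcc_of_le zero_le_one] at ht
    exact ⟨t, ht, Prod.ext hte ((h0 _ ⟨t, ht, rfl⟩).trans hx2.symm)⟩

end Bend


namespace Bend

lemma straighten_all (e : PP) (he : e ≠ 0) (J : Finset ℕ) (C : ℕ → PP) (T : ℕ → List PP)
    (hs : ∀ j ∈ J, SC (C j :: T j))
    (hd : ∀ i ∈ J, ∀ j ∈ J, i ≠ j → Disjoint (carr (C i :: T i)) (carr (C j :: T j))) :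
    ∃ h : PP ≃ₜ PP, ∀ j ∈ J, h ((C j :: T j).getLast (by simp)) = (C j :: T j).getLast (by simp) ∧
      ∀ p ∈ carr (C j :: T j), ∃ t : ℝ, 0 ≤ t ∧ t ≤ 1 ∧ h p = (C j :: T j).getLast (by simp) + t • e := by
  have key : ∀ S : Finset ℕ, S ⊆ J → ∃ h : PP ≃ₜ PP,
      (∀ j ∈ S, h ((C j :: T j).getLast (by simp)) = (C j :: T j).getLast (by simp) ∧
      ∀ p ∈ carr (C j :: T j), ∃ t : ℝ, 0 ≤ t ∧ t ≤ 1 ∧ h p = (C j :: T j).getLast (by simp) + t • e) ∧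
      ∀ j ∈ J, j ∉ S → ∀ p ∈ carr (C j :: T j), h p = p := by
    intro S
    induction S using Finset.induction_on with
    | empty => intro _; exact ⟨Homeomorph.refl _, by simp, fun _ _ _ _ _ => rfl⟩
    | insert n S hn ih =>
      intro hS
      obtain ⟨h, h1, h2⟩ := ih ((Finset.subset_insert _ _).trans hS)
      have hnJ : n ∈ J := hS (Finset.mem_insert_self _ _)
      have hK : IsCompact (⋃ j ∈ J.erase n, h '' carr (C j :: T j)) :=
        (J.erase n).isCompact_biUnion (fun j _ => (isCompact_carr _).image h.continuous)
      obtain ⟨g, g1, g2, g3⟩ := straighten e he 1 one_pos (T n) (C n) (hs n hnJ) _ hK.isClosed (by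
        rw [Set.disjoint_left]
        intro x hx hxn
        simp only [mem_iUnion] at hx
        obtain ⟨j, hj, p, hp, rfl⟩ := hx
        have hj' := Finset.mem_erase.1 hj
        have h3 := h2 n hnJ hn _ hxn
        have : h p = p := h.injective h3
        rw [this] at hxn
        exact Set.disjoint_left.1 (hd j hj'.2 n hnJ hj'.1) hp hxn)
      have hfix : ∀ j ∈ J, j ≠ n → ∀ p ∈ carr (C j :: T j), g (h p) = h p := by
        intro j hj hjn p hp
        apply g1
        simp only [mem_iUnion]
        exact ⟨j, Finset.mem_erase.2 ⟨hjn, hj⟩, p, hp, rfl⟩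
      have hlast : ∀ j, (C j :: T j).getLast (by simp) ∈ carr (C j :: T j) :=
        fun j => mem_carr_of_mem (List.getLast_mem _)
      refine ⟨h.trans g, ?_, ?_⟩
      · intro j hj
        rcases Finset.mem_insert.1 hj with rfl | hj
        · refine ⟨?_, ?_⟩
          · simp only [Homeomorph.trans_apply]
            rw [h2 j hnJ hn _ (hlast j), g2]
          · intro p hp
            simp only [Homeomorph.trans_apply]
            rw [h2 j hnJ hn _ hp]
            exact g3 p hp
        · have hjJ : j ∈ J := hS (Finset.mem_insert_of_mem hj)
          have hjn : j ≠ n := fun hh => hn (hh ▸ hj)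
          refine ⟨?_, ?_⟩
          · simp only [Homeomorph.trans_apply]
            rw [hfix j hjJ hjn _ (hlast j), (h1 j hj).1]
          · intro p hp
            simp only [Homeomorph.trans_apply]
            rw [hfix j hjJ hjn p hp]
            exact (h1 j hj).2 p hp
      · intro j hj hjS p hp
        rw [Finset.mem_insert, not_or] at hjS
        simp only [Homeomorph.trans_apply]
        rw [hfix j hj hjS.1 p hp, h2 j hj hjS.2 p hp]
  obtain ⟨h, h1, -⟩ := key J (Finset.Subset.refl _)
  exact ⟨h, h1⟩

/-- horizontal shear -/
def shearX (G : ℝ → ℝ) (hG : Continuous G) : PP ≃ₜ PP where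
  toFun p := (p.1 + G p.2, p.2)
  invFun p := (p.1 - G p.2, p.2)
  left_inv p := by simp
  right_inv p := by simp
  continuous_toFun := by fun_prop
  continuous_invFun := by fun_prop

/-- vertical shear -/
def shearY (G : ℝ → ℝ) (hG : Continuous G) : PP ≃ₜ PP where
  toFun p := (p.1, p.2 + G p.1)
  invFun p := (p.1, p.2 - G p.1)
  left_inv p := by simp
  right_inv p := by simp
  continuous_toFun := by fun_prop
  continuous_invFun := by fun_prop

lemma exists_steps (y : ℕ → ℝ) (n : ℕ) : ∃ H : ℝ → ℝ, Continuous H ∧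
    (∀ i ≤ n, ∀ x : ℝ, 2 * (i : ℝ) ≤ x → x ≤ 2 * (i : ℝ) + 1 → H x = y i) ∧ ∀ x : ℝ, 2 * (n : ℝ) ≤ x → H x = y n := by
  induction n with
  | zero => exact ⟨fun _ => y 0, continuous_const, by simp, by simp⟩
  | succ n ih =>
    obtain ⟨H, h1, h2, h3⟩ := ih
    refine ⟨fun x => H x + (y (n + 1) - y n) * max 0 (min 1 (x - (2 * n + 1))), by fun_prop, ?_, ?_⟩
    · intro i hi x hx1 hx2
      rcases Nat.lt_or_ge n i with h | h
      · have : i = n + 1 := by omega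
        subst this
        push_cast at hx1
        simp only
        rw [h3 x (by linarith), min_eq_left (by linarith)]
        simp
      · have h4 : (i : ℝ) ≤ n := by exact_mod_cast h
        simp only
        rw [h2 i h x hx1 hx2, min_eq_right (by linarith), max_eq_left (by linarith)]
        simp
    · intro x hx
      push_cast at hx
      simp only
      rw [h3 x (by linarith), min_eq_left (by linarith)]
      simp

lemma exists_slope (J : Finset ℕ) (q : ℕ → PP) (hq : ∀ i ∈ J, ∀ j ∈ J, q i = q j → i = j) :
    ∃ m : ℝ, ∀ i ∈ J, ∀ j ∈ J, (q i).2 + m * (q i).1 = (q j).2 + m * (q j).1 → i = j := by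
  obtain ⟨m, hm⟩ := Infinite.exists_notMem_finset
    ((J ×ˢ J).image (fun z => -((q z.1).2 - (q z.2).2) / ((q z.1).1 - (q z.2).1)))
  refine ⟨m, fun i hi j hj h => ?_⟩
  by_contra hij
  by_cases hx : (q i).1 = (q j).1
  · rw [hx] at h
    exact hij (hq i hi j hj (Prod.ext hx (by linarith)))
  · apply hm
    rw [Finset.mem_image]
    refine ⟨(i, j), Finset.mem_product.2 ⟨hi, hj⟩, ?_⟩
    have : (q i).1 - (q j).1 ≠ 0 := sub_ne_zero.2 hx
    simp only
    rw [div_eq_iff this]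
    linarith

lemma transport (J : Finset ℕ) (q : ℕ → PP) (hq : ∀ i ∈ J, ∀ j ∈ J, q i = q j → i = j) :
    ∃ e : PP, e ≠ 0 ∧ ∃ h : PP ≃ₜ PP, ∀ j ∈ J, ∀ t : ℝ, 0 ≤ t → t ≤ 1 →
      h (q j + t • e) = (2 * (j : ℝ) + t, 0) := by
  obtain ⟨m, hm⟩ := exists_slope J q hq
  set y : ℕ → ℝ := fun j => (q j).2 + m * (q j).1 with hy
  set r : ℕ → ℝ := fun j => 2 * (j : ℝ) - (q j).1 with hr
  obtain ⟨H, H1, H2, -⟩ := exists_steps y (J.sup id)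
  set L := Lagrange.interpolate J y r with hL
  have hLe : ∀ j ∈ J, L.eval (y j) = r j := by
    intro j hj
    exact Lagrange.eval_interpolate_at_node r (fun a ha b hb hab => hm a ha b hb hab) hj
  refine ⟨(1, -m), by simp, ((shearY (fun x => m * x) (by fun_prop)).trans
    (shearX (fun z => L.eval z) L.continuous)).trans (shearY (fun x => - H x) (by fun_prop)), ?_⟩
  intro j hj t ht ht1
  have hjn : j ≤ J.sup id := Finset.le_sup (f := id) hj
  simp only [Homeomorph.trans_apply]
  have e1 : (shearY (fun x => m * x) (by fun_prop)) (q j + t • ((1, -m) : PP)) = ((q j).1 + t, y j) := by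
    change ((_ : ℝ), (_ : ℝ)) = _
    simp [hy]
    ring
  have e2 : (shearX (fun z => L.eval z) L.continuous) ((q j).1 + t, y j) = (2 * (j : ℝ) + t, y j) := by
    change ((_ : ℝ), (_ : ℝ)) = _
    simp only
    rw [hLe j hj]
    simp [hr]
    ring
  rw [e1, e2]
  change ((_ : ℝ), (_ : ℝ)) = _
  simp only
  rw [H2 j hjn _ (by linarith) (by linarith)]
  simp

lemma exists_normalise (x : ℕ → ℝ) (m : ℕ) (hx : ∀ i, i + 1 < m → x i < x (i + 1)) :
    ∃ φ : ℝ ≃o ℝ, ∀ i < m, φ (x i) = i := by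
  induction m with
  | zero => exact ⟨OrderIso.refl _, by simp⟩
  | succ m ih =>
    obtain ⟨φ, hφ⟩ := ih (fun i hi => hx i (by omega))
    cases m with
    | zero =>
      refine ⟨OrderIso.addRight (-x 0), ?_⟩
      intro i hi
      have : i = 0 := by omega
      subst this
      simp
    | succ k =>
      have h1 : φ (x k) = k := hφ k (by omega)
      have h2 : (k : ℝ) < φ (x (k + 1)) := by rw [← h1]; exact φ.strictMono (hx k (by omega))
      set d := φ (x (k + 1)) - k with hd
      have hd0 : 0 < d := by linarith
      set ψ : ℝ → ℝ := fun z => if z ≤ k then z else k + (z - k) / d with hψ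
      have hmono : StrictMono ψ := by
        intro a b hab
        simp only [hψ]
        split_ifs with ha hb
        · exact hab
        · have : 0 < (b - k) / d := div_pos (by linarith) hd0
          linarith
        · linarith
        · have : (a - k) / d < (b - k) / d := div_lt_div_of_pos_right (by linarith) hd0
          linarith
      have hsurj : Function.Surjective ψ := by
        intro z
        by_cases hz : z ≤ k
        · exact ⟨z, by simp [hψ, hz]⟩
        · push Not at hz
          refine ⟨k + (z - k) * d, ?_⟩
          have : 0 < (z - k) * d := mul_pos (by linarith) hd0
          simp only [hψ]
          rw [if_neg (by linarith)]
          field_simp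
          ring
      refine ⟨φ.trans (hmono.orderIsoOfSurjective ψ hsurj), ?_⟩
      intro i hi
      simp only [OrderIso.trans_apply, StrictMono.coe_orderIsoOfSurjective]
      rcases Nat.lt_or_ge i (k + 1) with h | h
      · rw [hφ i h]
        have : (i : ℝ) ≤ k := by exact_mod_cast (by omega : i ≤ k)
        simp [hψ, this]
      · have : i = k + 1 := by omega
        subst this
        simp only [hψ]
        rw [if_neg (by linarith), ← hd, div_self hd0.ne']
        push_cast; rfl

end Bend


namespace Bend

open Classical in
/-- tail of the run ending at `j` -/
noncomputable def runTail (P : ℕ → PP) (c : ℕ → Prop) (M : ℕ → List PP) : ℕ → List PP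
  | 0 => []
  | j + 1 => if c j then M j ++ P j :: runTail P c M j else []

open Classical in
/-- start of the run containing `j` -/
noncomputable def runStart (c : ℕ → Prop) : ℕ → ℕ
  | 0 => 0
  | j + 1 => if c j then runStart c j else j + 1

lemma runStart_le (c : ℕ → Prop) (j : ℕ) : runStart c j ≤ j := by
  induction j with
  | zero => simp [runStart]
  | succ j ih =>
    simp only [runStart]
    split_ifs <;> omega

lemma runStart_gt (c : ℕ → Prop) (j : ℕ) (hj : ¬ c j) (k : ℕ) (hk : j < k) : j < runStart c k := by
  induction k with
  | zero => omega
  | succ k ih =>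
    simp only [runStart]
    split_ifs with h
    · rcases Nat.lt_or_ge j k with h2 | h2
      · exact ih h2
      · have : j = k := by omega
        exact absurd (this ▸ h) hj
    · omega

theorem lemmaT (m : ℕ) (P : ℕ → PP) (c : ℕ → Prop) (M : ℕ → List PP)
    (hcm : ∀ j, c j → j + 1 < m)
    (hinj : ∀ i < m, ∀ j < m, P i = P j → i = j)
    (hsc : ∀ j, c j → SC (P (j + 1) :: (M j ++ [P j])))
    (hcross : ∀ i j, c i → c j → i < j → ∀ x ∈ carr (P (i + 1) :: (M i ++ [P i])),
      x ∈ carr (P (j + 1) :: (M j ++ [P j])) → j = i + 1 ∧ x = P (i + 1))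
    (hvert : ∀ j, c j → ∀ k < m, P k ∈ carr (P (j + 1) :: (M j ++ [P j])) → k = j ∨ k = j + 1) :
    ∃ h : PP ≃ₜ PP, (∀ j < m, h (P j) = ((j : ℝ), 0)) ∧
      ∀ j, c j → h '' carr (P (j + 1) :: (M j ++ [P j])) = segment ℝ (((j : ℝ), 0) : PP) ((j : ℝ) + 1, 0) := by
  classical
  set T := runTail P c M with hT
  set s := runStart c with hs
  set E : ℕ → Set PP := fun j => carr (P (j + 1) :: (M j ++ [P j])) with hE
  have hTc : ∀ j, c j → P (j + 1) :: T (j + 1) = (P (j + 1) :: M j) ++ P j :: T j := by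
    intro j hj; simp [hT, runTail, hj]
  have hTn : ∀ j, ¬ c j → T (j + 1) = [] := by
    intro j hj; simp [hT, runTail, hj]
  have hsc' : ∀ j, c j → s (j + 1) = s j := by
    intro j hj; simp [hs, runStart, hj]
  have hsn : ∀ j, ¬ c j → s (j + 1) = j + 1 := by
    intro j hj; simp [hs, runStart, hj]
  have hcarr : ∀ j, c j → carr (P (j + 1) :: T (j + 1)) = E j ∪ carr (P j :: T j) := by
    intro j hj
    rw [hTc j hj, carr_append]
    rfl
  have hmem : ∀ j, ∀ x ∈ carr (P j :: T j), x = P j ∨ ∃ i, s j ≤ i ∧ i < j ∧ c i ∧ x ∈ E i := by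
    intro j
    induction j with
    | zero => intro x hx; left; simpa [hT, runTail, carr] using hx
    | succ j ih =>
      intro x hx
      by_cases hj : c j
      · rw [hcarr j hj] at hx
        rw [hsc' j hj]
        have hsj : s j ≤ j := runStart_le c j
        rcases hx with hx | hx
        · exact Or.inr ⟨j, hsj, by omega, hj, hx⟩
        · rcases ih x hx with rfl | ⟨i, h1, h2, h3, h4⟩
          · exact Or.inr ⟨j, hsj, by omega, hj, mem_carr_of_mem (by simp)⟩
          · exact Or.inr ⟨i, h1, by omega, h3, h4⟩
      · rw [hTn j hj] at hx
        left; simpa [carr] using hx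
  have hSC : ∀ j, SC (P j :: T j) := by
    intro j
    induction j with
    | zero => simp [hT, runTail, SC]
    | succ j ih =>
      by_cases hj : c j
      · rw [hTc j hj]
        refine SC_append _ _ _ (hsc j hj) ih ?_
        rintro x ⟨hx1, hx2⟩
        rcases hmem j x hx2 with rfl | ⟨i, h1, h2, h3, h4⟩
        · rfl
        · obtain ⟨h5, h6⟩ := hcross i j h3 hj h2 x h4 hx1
          rw [h5]; exact h6
      · rw [hTn j hj]; simp [SC]
  have hlast : ∀ j, (P j :: T j).getLast (by simp) = P (s j) := by
    intro j
    induction j with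
    | zero => simp [hT, runTail, hs, runStart]
    | succ j ih =>
      by_cases hj : c j
      · rw [hsc' j hj, ← ih]
        simp only [hTc j hj]
        rw [List.getLast_append_of_ne_nil _ (by simp)]
      · simp [hTn j hj, hsn j hj]
  set J : Finset ℕ := (Finset.range m).filter (fun j => ¬ c j) with hJ
  have hJm : ∀ j, j ∈ J ↔ j < m ∧ ¬ c j := by intro j; simp [hJ]
  have hdis1 : ∀ i ∈ J, ∀ j ∈ J, i < j → Disjoint (carr (P i :: T i)) (carr (P j :: T j)) := by
    intro i hi j hj hij
    rw [hJm] at hi hj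
    have hsj : i < s j := runStart_gt c i hi.2 j hij
    rw [Set.disjoint_left]
    intro x hxi hxj
    rcases hmem i x hxi with rfl | ⟨a, a1, a2, a3, a4⟩
    · rcases hmem j _ hxj with h | ⟨b, b1, b2, b3, b4⟩
      · have := hinj i hi.1 j hj.1 h
        omega
      · have := hvert b b3 i hi.1 b4
        omega
    · rcases hmem j _ hxj with rfl | ⟨b, b1, b2, b3, b4⟩
      · have := hvert a a3 j hj.1 a4
        omega
      · have := (hcross a b a3 b3 (by omega) x a4 b4).1
        omega
  have hdis : ∀ i ∈ J, ∀ j ∈ J, i ≠ j → Disjoint (carr (P i :: T i)) (carr (P j :: T j)) := by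
    intro i hi j hj hij
    rcases Nat.lt_or_ge i j with h | h
    · exact hdis1 i hi j hj h
    · exact (hdis1 j hj i hi (by omega)).symm
  have hlastmem : ∀ j, P (s j) ∈ carr (P j :: T j) := by
    intro j; rw [← hlast j]; exact mem_carr_of_mem (List.getLast_mem _)
  obtain ⟨e, he, tr, htr⟩ := transport J (fun j => P (s j)) (by
    intro i hi j hj hij
    by_contra hne
    have hij2 : P (s i) = P (s j) := hij
    exact Set.disjoint_left.1 (hdis i hi j hj hne) (hlastmem i) (by rw [hij2]; exact hlastmem j))
  obtain ⟨g, hg⟩ := straighten_all e he J P T (fun j _ => hSC j) hdis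
  set h1 : PP ≃ₜ PP := g.trans tr with hh1
  have h1a : ∀ j ∈ J, h1 (P (s j)) = (2 * (j : ℝ), 0) := by
    intro j hj
    have h2 := (hg j hj).1
    rw [hlast j] at h2
    have h3 := htr j hj 0 le_rfl zero_le_one
    simp only [zero_smul, add_zero] at h3
    simp only [hh1, Homeomorph.trans_apply]
    rw [h2, h3]
  have h1b : ∀ j ∈ J, ∀ p ∈ carr (P j :: T j), (h1 p).2 = 0 ∧ 2 * (j : ℝ) ≤ (h1 p).1 ∧ (h1 p).1 ≤ 2 * (j : ℝ) + 1 := by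
    intro j hj p hp
    obtain ⟨t, ht, ht1, h2⟩ := (hg j hj).2 p hp
    rw [hlast j] at h2
    have h3 := htr j hj t ht ht1
    have h4 : h1 p = (2 * (j : ℝ) + t, 0) := by
      simp only [hh1, Homeomorph.trans_apply]
      rw [h2, h3]
    rw [h4]
    exact ⟨rfl, by simp only; linarith, by simp only; linarith⟩
  have hfin : ∀ d i, m = i + 1 + d → ∃ j ∈ J, i ≤ j ∧ s j = s i ∧ carr (P i :: T i) ⊆ carr (P j :: T j) := by
    intro d
    induction d with
    | zero =>
      intro i hi
      refine ⟨i, (hJm i).2 ⟨by omega, fun hc => ?_⟩, le_rfl, rfl, Subset.rfl⟩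
      have := hcm i hc; omega
    | succ d ih =>
      intro i hi
      by_cases hc : c i
      · obtain ⟨j, hj, h2, h3, h4⟩ := ih (i + 1) (by omega)
        refine ⟨j, hj, by omega, by rw [h3, hsc' i hc], fun x hx => h4 ?_⟩
        rw [hcarr i hc]
        exact Or.inr hx
      · exact ⟨i, (hJm i).2 ⟨by omega, hc⟩, le_rfl, rfl, Subset.rfl⟩
  have hfin' : ∀ i < m, ∃ j ∈ J, i ≤ j ∧ s j = s i ∧ carr (P i :: T i) ⊆ carr (P j :: T j) :=
    fun i hi => hfin (m - (i + 1)) i (by omega)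
  have hPm : ∀ j, P j ∈ carr (P j :: T j) := fun j => mem_carr_of_mem (by simp)
  have hy0 : ∀ i < m, (h1 (P i)).2 = 0 := by
    intro i hi
    obtain ⟨j, hj, -, -, h4⟩ := hfin' i hi
    exact (h1b j hj _ (h4 (hPm i))).1
  have hE0 : ∀ i, c i → ∀ x ∈ h1 '' E i, x.2 = 0 := by
    rintro i hi _ ⟨x, hx, rfl⟩
    obtain ⟨j, hj, -, -, h4⟩ := hfin' (i + 1) (hcm i hi)
    exact (h1b j hj _ (h4 (by rw [hcarr i hi]; exact Or.inl hx))).1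
  have harc : ∀ i, c i → IsArcBetween (E i) (P (i + 1)) (P i) := fun i hi => arc_of_SC _ _ _ (hsc i hi)
  set x : ℕ → ℝ := fun i => (h1 (P i)).1 with hx
  have hP : ∀ i < m, h1 (P i) = (x i, 0) := fun i hi => Prod.ext rfl (hy0 i hi)
  have hseg : ∀ i, c i → h1 '' E i = {z | z.2 = 0 ∧ z.1 ∈ uIcc (x (i + 1)) (x i)} := by
    intro i hi
    have := hcm i hi
    rw [arc_line (arc_image (harc i hi) h1) (hE0 i hi), hP i (by omega), hP (i + 1) this, segment_axis]
  have hxne : ∀ i, i + 1 < m → x i ≠ x (i + 1) := by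
    intro i hi heq
    have : h1 (P i) = h1 (P (i + 1)) := by rw [hP i (by omega), hP (i + 1) hi, heq]
    have := hinj i (by omega) (i + 1) hi (h1.injective this)
    omega
  have hmono : ∀ i, i + 1 < m → x i < x (i + 1) := by
    intro i
    induction i with
    | zero =>
      intro hi
      obtain ⟨j, hj, h2, h3, h4⟩ := hfin' 1 hi
      have hb := (h1b j hj _ (h4 (hPm 1))).2.1
      by_cases hc : c 0
      · rw [hsc' 0 hc] at h3
        have : s 0 = 0 := rfl
        have ha := h1a j hj
        rw [h3, this] at ha
        have : x 0 ≤ x 1 := by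
          simp only [hx]; rw [ha]; exact hb
        exact lt_of_le_of_ne this (hxne 0 hi)
      · have h0 := (h1b 0 ((hJm 0).2 ⟨by omega, hc⟩) _ (hPm 0)).2.2
        have hj1 : (1 : ℝ) ≤ j := by exact_mod_cast h2
        simp only [hx]
        norm_num at h0 ⊢
        linarith
    | succ k ih =>
      intro hi
      have ihk := ih (by omega)
      obtain ⟨j, hj, h2, h3, h4⟩ := hfin' (k + 1 + 1) hi
      have hb := (h1b j hj _ (h4 (hPm (k + 1 + 1)))).2.1
      by_cases hc : c (k + 1)
      · by_cases hck : c k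
        · by_contra hle
          have hlt : x (k + 1 + 1) < x (k + 1) := lt_of_le_of_ne (not_lt.1 hle) (hxne _ hi).symm
          set z := max (x k) (x (k + 1 + 1)) with hz
          have hz1 : z < x (k + 1) := max_lt ihk hlt
          have m1 : ((z, 0) : PP) ∈ h1 '' E k := by
            rw [hseg k hck]
            refine ⟨rfl, ?_⟩
            rw [uIcc_of_ge ihk.le]
            exact ⟨le_max_left _ _, hz1.le⟩
          have m2 : ((z, 0) : PP) ∈ h1 '' E (k + 1) := by
            rw [hseg (k + 1) hc]
            refine ⟨rfl, ?_⟩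
            rw [uIcc_of_le hlt.le]
            exact ⟨le_max_right _ _, hz1.le⟩
          obtain ⟨p, hp, hpz⟩ := m1
          obtain ⟨p', hp', hpz'⟩ := m2
          have : p' = p := h1.injective (hpz'.trans hpz.symm)
          subst this
          have h5 := (hcross k (k + 1) hck hc (by omega) p' hp hp').2
          rw [h5, hP (k + 1) (by omega)] at hpz
          have : x (k + 1) = z := congrArg Prod.fst hpz
          linarith
        · rw [hsc' _ hc, hsn k hck] at h3
          have ha := h1a j hj
          rw [h3] at ha
          have : x (k + 1) ≤ x (k + 1 + 1) := by
            simp only [hx]; rw [ha]; exact hb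
          exact lt_of_le_of_ne this (hxne _ hi)
      · have h0 := (h1b (k + 1) ((hJm _).2 ⟨by omega, hc⟩) _ (hPm _)).2.2
        have hj1 : ((k + 1 + 1 : ℕ) : ℝ) ≤ j := by exact_mod_cast h2
        push_cast at h0 hj1
        simp only [hx]
        linarith
  obtain ⟨φ, hφ⟩ := exists_normalise x m hmono
  let ψ : PP ≃ₜ PP := φ.toHomeomorph.prodCongr (Homeomorph.refl ℝ)
  have hψ : ∀ p : PP, ψ p = (φ p.1, p.2) := fun p => rfl
  have hfinal : ∀ j < m, (h1.trans ψ) (P j) = ((j : ℝ), 0) := by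
    intro j hj
    simp only [Homeomorph.trans_apply]
    rw [hP j hj, hψ, hφ j hj]
  refine ⟨h1.trans ψ, hfinal, ?_⟩
  intro j hj
  have hjm := hcm j hj
  have := arc_line (arc_image (harc j hj) (h1.trans ψ)) (by
    rintro _ ⟨p, hp, rfl⟩
    simp only [Homeomorph.trans_apply]
    rw [hψ]
    exact hE0 j hj (h1 p) ⟨p, hp, rfl⟩)
  rw [hfinal j (by omega), hfinal (j + 1) hjm] at this
  rw [segment_symm]
  push_cast at this
  exact this

end Bend


namespace BoxD
open GridMinor Filter Topology

/-- minimal chain -/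
theorem exists_min_chain {α : Type*} (r : α → α → Prop) (A B : Set α) (a b : α) (ha : a ∈ A)
    (hb : b ∈ B) (h : Relation.ReflTransGen r a b) :
    ∃ (n : ℕ) (f : ℕ → α), f 0 ∈ A ∧ f n ∈ B ∧ (∀ i < n, r (f i) (f (i+1))) ∧
      (∀ i j, i ≤ n → j ≤ n → f i = f j → i = j) ∧ (∀ i ≤ n, f i ∈ A → i = 0) ∧
      (∀ i ≤ n, f i ∈ B → i = n) := by
  classical
  have hex : ∃ n : ℕ, ∃ f : ℕ → α, f 0 ∈ A ∧ f n ∈ B ∧ (∀ i < n, r (f i) (f (i+1))) := by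
    have : ∃ n : ℕ, ∃ f : ℕ → α, f 0 ∈ A ∧ f n = b ∧ (∀ i < n, r (f i) (f (i+1))) := by
      clear hb
      induction h with
      | refl => exact ⟨0, fun _ => a, ha, rfl, by simp⟩
      | @tail b c _ hbc ih =>
        obtain ⟨n, f, h0, hn, hs⟩ := ih
        refine ⟨n+1, fun i => if i ≤ n then f i else c, by simpa using h0, by simp, ?_⟩
        intro i hi
        by_cases h1 : i + 1 ≤ n
        · have : i ≤ n := by omega
          simp only [h1, this, if_true]; exact hs i (by omega)
        · have : i = n := by omega
          subst this
          simp [hn, hbc]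
    obtain ⟨n, f, h0, hn, hs⟩ := this
    exact ⟨n, f, h0, hn ▸ hb, hs⟩
  obtain ⟨f, h0, hn, hs⟩ := Nat.find_spec hex
  have hmin := fun m hm => Nat.find_min hex (m := m) hm
  set n := Nat.find hex
  have hlt : ∀ i j, i < j → j ≤ n → f i ≠ f j := by
    intro i j hij hj he
    refine hmin (n - (j - i)) (by omega) ⟨fun k => if k ≤ i then f k else f (k + (j - i)), by simpa using h0, ?_, ?_⟩
    · by_cases h : n - (j - i) ≤ i
      · have e1 : j = n := by omega
        have e2 : n - (j - i) = i := by omega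
        simp only [e2, le_refl, if_true]
        rw [he, e1]; exact hn
      · have e2 : n - (j - i) + (j - i) = n := by omega
        simp only [h, if_false, e2]; exact hn
    · intro k hk
      by_cases h1 : k + 1 ≤ i
      · have : k ≤ i := by omega
        simp only [h1, this, if_true]; exact hs k (by omega)
      · by_cases h2 : k ≤ i
        · have : k = i := by omega
          subst this
          simp only [le_refl, if_true, h1, if_false]
          rw [he]
          have : k + 1 + (j - k) = j + 1 := by omega
          rw [this]; exact hs j (by omega)
        · simp only [h1, h2, if_false]
          have : k + 1 + (j - i) = (k + (j - i)) + 1 := by omega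
          rw [this]; exact hs _ (by omega)
  refine ⟨n, f, h0, hn, hs, ?_, ?_, ?_⟩
  · intro i j hi hj he
    rcases lt_trichotomy i j with h | h | h
    · exact absurd he (hlt i j h hj)
    · exact h
    · exact absurd he.symm (hlt j i h hi)
  · intro i hi hA
    by_contra h0
    refine hmin (n - i) (by omega) ⟨fun k => f (k + i), by simpa using hA, ?_, ?_⟩
    · have : n - i + i = n := by omega
      simp only [this]; exact hn
    · intro k hk
      have : k + 1 + i = (k + i) + 1 := by omega
      simp only [this]; exact hs _ (by omega)
  · intro i hi hB
    by_contra h0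
    exact hmin i (by omega) ⟨f, ‹_›, hB, fun k hk => hs k (by omega)⟩

/-- integer floor of a plane point -/
noncomputable def fl (x : Pt) : ℤ × ℤ := (⌊x.1⌋, ⌊x.2⌋)

/-- embedding of the grid -/
def ι (z : ℤ × ℤ) : Pt := ((z.1 : ℝ), (z.2 : ℝ))

theorem dist_lt_iff' (x y : Pt) (r : ℝ) : dist x y ≤ r ↔ |x.1 - y.1| ≤ r ∧ |x.2 - y.2| ≤ r := by
  rw [Prod.dist_eq, max_le_iff, Real.dist_eq, Real.dist_eq]

theorem dist_fl (x : Pt) : dist (ι (fl x)) x ≤ 1 := by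
  rw [dist_lt_iff']
  have h1 := Int.floor_le x.1
  have h2 := Int.lt_floor_add_one x.1
  have h3 := Int.floor_le x.2
  have h4 := Int.lt_floor_add_one x.2
  simp only [ι, fl]
  constructor <;> rw [abs_le] <;> constructor <;> linarith

theorem floor_close {a b : ℝ} (h : |a - b| < 1) : ⌊a⌋ = ⌊b⌋ ∨ ⌊a⌋ = ⌊b⌋ + 1 ∨ ⌊b⌋ = ⌊a⌋ + 1 := by
  rw [abs_lt] at h
  have h1 := Int.floor_le a
  have h2 := Int.lt_floor_add_one a
  have h3 := Int.floor_le b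
  have h4 := Int.lt_floor_add_one b
  have : ⌊a⌋ < ⌊b⌋ + 2 := by
    have : (⌊a⌋ : ℝ) < ⌊b⌋ + 2 := by linarith
    exact_mod_cast this
  have : ⌊b⌋ < ⌊a⌋ + 2 := by
    have : (⌊b⌋ : ℝ) < ⌊a⌋ + 2 := by linarith
    exact_mod_cast this
  omega

theorem gadj_h (a b y : ℤ) (h : a = b + 1 ∨ b = a + 1) : GAdj (a, y) (b, y) := by
  rcases h with h | h
  · exact ⟨((b, y), true), Or.inr (by simp [efst, esnd, h])⟩
  · exact ⟨((a, y), true), Or.inl (by simp [efst, esnd, h])⟩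

theorem gadj_v (a b y : ℤ) (h : a = b + 1 ∨ b = a + 1) : GAdj (y, a) (y, b) := by
  rcases h with h | h
  · exact ⟨((y, b), false), Or.inr (by simp [efst, esnd, h])⟩
  · exact ⟨((y, a), false), Or.inl (by simp [efst, esnd, h])⟩

theorem chain_of_curve (g : ℝ → Pt) (s t : ℝ) (hst : s ≤ t) (hg : ContinuousOn g (Icc s t))
    (W : Set (ℤ × ℤ)) (hW : ∀ τ ∈ Icc s t, ∀ z, dist (ι z) (g τ) ≤ 2 → z ∈ W) :
    Relation.ReflTransGen (fun a b => a ∈ W ∧ b ∈ W ∧ GAdj a b) (fl (g s)) (fl (g t)) := by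
  have key : ∀ τ ∈ Icc s t, ∀ τ' ∈ Icc s t, dist (g τ) (g τ') < 1 →
      Relation.ReflTransGen (fun a b => a ∈ W ∧ b ∈ W ∧ GAdj a b) (fl (g τ)) (fl (g τ')) := by
    intro τ hτ τ' hτ' hd
    rw [Prod.dist_eq, max_lt_iff, Real.dist_eq, Real.dist_eq] at hd
    have c1 := floor_close hd.1
    have c2 := floor_close hd.2
    have w1 : fl (g τ) ∈ W := hW τ hτ _ ((dist_fl _).trans (by norm_num))
    have w3 : fl (g τ') ∈ W := hW τ' hτ' _ ((dist_fl _).trans (by norm_num))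
    have w2 : (⌊(g τ').1⌋, ⌊(g τ).2⌋) ∈ W := by
      apply hW τ hτ
      rw [dist_lt_iff']
      have h1 := Int.floor_le (g τ').1
      have h2 := Int.lt_floor_add_one (g τ').1
      have h3 := Int.floor_le (g τ).2
      have h4 := Int.lt_floor_add_one (g τ).2
      have h5 := abs_lt.1 hd.1
      simp only [ι]
      constructor <;> rw [abs_le] <;> constructor <;> linarith
    have s1 : Relation.ReflTransGen (fun a b => a ∈ W ∧ b ∈ W ∧ GAdj a b) (fl (g τ)) (⌊(g τ').1⌋, ⌊(g τ).2⌋) := by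
      rcases c1 with c | c
      · rw [← c]; exact Relation.ReflTransGen.refl
      · exact Relation.ReflTransGen.single ⟨w1, w2, gadj_h _ _ _ c⟩
    have s2 : Relation.ReflTransGen (fun a b => a ∈ W ∧ b ∈ W ∧ GAdj a b) (⌊(g τ').1⌋, ⌊(g τ).2⌋) (fl (g τ')) := by
      rcases c2 with c | c
      · rw [c]; exact Relation.ReflTransGen.refl
      · exact Relation.ReflTransGen.single ⟨w2, w3, gadj_v _ _ _ c⟩
    exact s1.trans s2
  refine IsPreconnected.induction₂' (s := Icc s t) isPreconnected_Icc
    (fun τ τ' => Relation.ReflTransGen (fun a b => a ∈ W ∧ b ∈ W ∧ GAdj a b) (fl (g τ)) (fl (g τ')))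
    ?_ ?_ (left_mem_Icc.2 hst) (right_mem_Icc.2 hst)
  · intro x hx
    have h1 := (hg x hx).eventually (Metric.ball_mem_nhds (g x) one_pos)
    filter_upwards [h1, self_mem_nhdsWithin] with y hy hy'
    exact ⟨key x hx y hy' (by rwa [dist_comm]), key y hy' x hx hy⟩
  · intro x y z _ _ _ h1 h2
    exact h1.trans h2

end BoxD


namespace BoxD
open GridMinor Filter Topology

/-- sup distance on the grid -/
def ds (a b : ℤ × ℤ) : ℤ := max |a.1 - b.1| |a.2 - b.2|

theorem ds_cast (a b : ℤ × ℤ) : ((ds a b : ℤ) : ℝ) = dist (ι a) (ι b) := by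
  simp [ds, ι, Prod.dist_eq, Real.dist_eq]

/-- Box drawing of a graph in the integer grid. -/
structure BD {V : Type} [LinearOrder V] (G : SimpleGraph V) where
  c : V → ℤ × ℤ
  R : ℤ
  n : V → V → ℕ
  f : V → V → ℕ → ℤ × ℤ
  Rpos : 1 ≤ R
  sep : ∀ u v, u ≠ v → 2 * R < ds (c u) (c v)
  start : ∀ u v, G.Adj u v → u < v → ds (f u v 0) (c u) ≤ R
  fin : ∀ u v, G.Adj u v → u < v → ds (f u v (n u v)) (c v) ≤ R
  step : ∀ u v, G.Adj u v → u < v → ∀ i < n u v, GAdj (f u v i) (f u v (i+1))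
  inj : ∀ u v, G.Adj u v → u < v → ∀ i j, i ≤ n u v → j ≤ n u v → f u v i = f u v j → i = j
  out : ∀ u v, G.Adj u v → u < v → ∀ i ≤ n u v, ∀ w, ds (f u v i) (c w) ≤ R →
    (w = u ∧ i = 0) ∨ (w = v ∧ i = n u v)
  disj : ∀ u v, G.Adj u v → u < v → ∀ u' v', G.Adj u' v' → u' < v' →
    ∀ i ≤ n u v, ∀ j ≤ n u' v', f u v i = f u' v' j → u = u' ∧ v = v'

theorem compact_sep {A B : Set Pt} (hA : IsCompact A) (hB : IsCompact B) (h : Disjoint A B) :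
    ∃ δ > 0, ∀ x ∈ A, ∀ y ∈ B, δ ≤ dist x y := by
  by_cases hne : (A ×ˢ B).Nonempty
  · obtain ⟨p, hp, hmin⟩ := (hA.prod hB).exists_isMinOn hne
      (f := fun p : Pt × Pt => dist p.1 p.2) (by fun_prop)
    refine ⟨dist p.1 p.2, dist_pos.2 ?_, ?_⟩
    · intro he
      exact Set.disjoint_left.1 h hp.1 (he ▸ hp.2)
    · intro x hx y hy
      exact hmin (show (x, y) ∈ A ×ˢ B from ⟨hx, hy⟩)
  · refine ⟨1, one_pos, fun x hx y hy => absurd ⟨(x, y), hx, hy⟩ hne⟩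

theorem compact_sep_ev {A B : Set Pt} (hA : IsCompact A) (hB : IsCompact B) (h : Disjoint A B)
    (k : ℝ) (hk : 0 < k) :
    ∀ᶠ r in 𝓝[>] (0:ℝ), ∀ x ∈ A, ∀ y ∈ B, k * r < dist x y := by
  obtain ⟨δ, hδ, hd⟩ := compact_sep hA hB h
  filter_upwards [Ioo_mem_nhdsGT (show (0:ℝ) < δ / k by positivity)] with r hr x hx y hy
  have := hr.2
  rw [lt_div_iff₀ hk] at this
  linarith [hd x hx y hy]

theorem exists_BD {V : Type} [Fintype V] [LinearOrder V] (G : SimpleGraph V)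
    (Γ : PlanarDrawing G) : Nonempty (BD G) := by
  have E1 : ∀ᶠ r in 𝓝[>] (0:ℝ), ∀ u v, u ≠ v → 4 * r < dist (Γ.ρ u) (Γ.ρ v) := by
    rw [eventually_all]; intro u
    rw [eventually_all]; intro v
    rw [eventually_imp_distrib_left]; intro h
    filter_upwards [compact_sep_ev (isCompact_singleton (x := Γ.ρ u)) (isCompact_singleton (x := Γ.ρ v))
      (by simpa using fun he => h (Γ.inj he)) 4 (by norm_num)] with r hr
    exact hr _ rfl _ rfl
  have E2 : ∀ᶠ r in 𝓝[>] (0:ℝ), ∀ u v, G.Adj u v → ∀ w, w ≠ u → w ≠ v →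
      ∀ x ∈ Γ.arc s(u, v), 2 * r < dist x (Γ.ρ w) := by
    rw [eventually_all]; intro u
    rw [eventually_all]; intro v
    rw [eventually_imp_distrib_left]; intro h
    rw [eventually_all]; intro w
    rw [eventually_imp_distrib_left]; intro h1
    rw [eventually_imp_distrib_left]; intro h2
    have hc : IsCompact (Γ.arc s(u, v)) := by
      obtain ⟨f, hf, _, _, _, he⟩ := Γ.arc_isArc u v h
      rw [he]; exact isCompact_Icc.image_of_continuousOn hf
    filter_upwards [compact_sep_ev hc (isCompact_singleton (x := Γ.ρ w)) (by
      rw [Set.disjoint_singleton_right]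
      intro hm
      have := Γ.vertex_mem s(u, v) h w hm
      rw [Sym2.mem_iff] at this
      tauto) 2 (by norm_num)] with r hr x hx
    exact hr x hx _ rfl
  obtain ⟨r, ⟨e1, e2⟩, hr0⟩ := ((E1.and E2).and self_mem_nhdsWithin).exists
  replace hr0 : 0 < r := hr0
  -- curves
  have hcur : ∀ u v, ∃ (f : ℝ → Pt) (s t : ℝ), G.Adj u v → (ContinuousOn f (Icc s t) ∧ s ≤ t ∧
      dist (f s) (Γ.ρ u) ≤ r ∧ dist (f t) (Γ.ρ v) ≤ r ∧ (∀ τ ∈ Icc s t, f τ ∈ Γ.arc s(u, v)) ∧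
      ∀ τ ∈ Icc s t, f τ ≠ Γ.ρ u ∧ f τ ≠ Γ.ρ v) := by
    intro u v
    by_cases h : G.Adj u v
    swap
    · exact ⟨fun _ => 0, 0, 0, fun h' => absurd h' h⟩
    obtain ⟨f, hf, hi, h0, h1, he⟩ := Γ.arc_isArc u v h
    obtain ⟨d0, hd0, hD0⟩ := Metric.continuousWithinAt_iff.1 (hf 0 (by simp)) r hr0
    obtain ⟨d1, hd1, hD1⟩ := Metric.continuousWithinAt_iff.1 (hf 1 (by simp)) r hr0
    set ε := min (1/3) (min (d0/2) (d1/2)) with hε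
    have hε0 : 0 < ε := by positivity
    have a1 : ε ≤ 1/3 := min_le_left _ _
    have a2 : ε ≤ d0/2 := (min_le_right _ _).trans (min_le_left _ _)
    have a3 : ε ≤ d1/2 := (min_le_right _ _).trans (min_le_right _ _)
    have hsub : Icc ε (1 - ε) ⊆ Icc 0 1 := Icc_subset_Icc (by linarith) (by linarith)
    refine ⟨f, ε, 1 - ε, fun _ => ⟨hf.mono hsub, by linarith, ?_, ?_, ?_, ?_⟩⟩
    · rw [← h0]
      exact (hD0 (by constructor <;> linarith) (by rw [Real.dist_eq, abs_lt]; constructor <;> linarith)).le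
    · rw [← h1]
      exact (hD1 (by constructor <;> linarith) (by rw [Real.dist_eq, abs_lt]; constructor <;> linarith)).le
    · intro τ hτ; rw [he]; exact ⟨τ, hsub hτ, rfl⟩
    · intro τ hτ
      rw [← h0, ← h1]
      constructor
      · intro hh
        have := hi (hsub hτ) (by simp) hh
        linarith [hτ.1]
      · intro hh
        have := hi (hsub hτ) (by simp) hh
        linarith [hτ.2]
  choose f s t hcur using hcur
  have E3 : ∀ᶠ δ in 𝓝[>] (0:ℝ), ∀ u v, G.Adj u v → u < v → ∀ u' v', G.Adj u' v' → u' < v' →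
      ¬ (u = u' ∧ v = v') → ∀ x ∈ f u v '' Icc (s u v) (t u v),
      ∀ y ∈ f u' v' '' Icc (s u' v') (t u' v'), 1 * δ < dist x y := by
    rw [eventually_all]; intro u
    rw [eventually_all]; intro v
    rw [eventually_imp_distrib_left]; intro h
    rw [eventually_imp_distrib_left]; intro hl
    rw [eventually_all]; intro u'
    rw [eventually_all]; intro v'
    rw [eventually_imp_distrib_left]; intro h'
    rw [eventually_imp_distrib_left]; intro hl'
    rw [eventually_imp_distrib_left]; intro hne
    obtain ⟨hc, _, _, _, hm, hv⟩ := hcur u v h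
    obtain ⟨hc', _, _, _, hm', hv'⟩ := hcur u' v' h'
    refine compact_sep_ev (isCompact_Icc.image_of_continuousOn hc)
      (isCompact_Icc.image_of_continuousOn hc') ?_ 1 one_pos
    rw [Set.disjoint_left]
    rintro _ ⟨τ, hτ, rfl⟩ ⟨τ', hτ', he⟩
    obtain ⟨w, hw, hw', hx⟩ := Γ.arcs_cross s(u, v) h s(u', v') h' (by
      intro he
      rw [Sym2.eq_iff] at he
      rcases he with he | ⟨rfl, rfl⟩
      · exact hne he
      · exact absurd hl (not_lt.2 hl'.le)) _ ⟨hm τ hτ, he ▸ hm' τ' hτ'⟩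
    rw [Sym2.mem_iff] at hw
    rcases hw with rfl | rfl
    · exact (hv τ hτ).1 hx
    · exact (hv τ hτ).2 hx
  obtain ⟨δ, e3, hδ0⟩ := (E3.and self_mem_nhdsWithin).exists
  replace hδ0 : 0 < δ := hδ0
  obtain ⟨N, hN⟩ := exists_nat_gt (max (10 / r) (10 / δ))
  have hNr : 10 < N * r := by
    have := (le_max_left _ _).trans_lt hN
    rwa [div_lt_iff₀ hr0] at this
  have hNδ : 10 < N * δ := by
    have := (le_max_right _ _).trans_lt hN
    rwa [div_lt_iff₀ hδ0] at this
  have hN0 : (0:ℝ) < N := by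
    by_contra hh
    have : (N:ℝ) = 0 := le_antisymm (not_lt.1 hh) (Nat.cast_nonneg _)
    rw [this] at hNr; linarith
  have hdN : ∀ x y : Pt, dist ((N:ℝ) • x) ((N:ℝ) • y) = N * dist x y := by
    intro x y; rw [dist_smul₀, Real.norm_eq_abs, abs_of_pos hN0]
  set c : V → ℤ × ℤ := fun v => fl ((N:ℝ) • Γ.ρ v) with hc
  set R : ℤ := ⌈(N:ℝ) * r⌉ + 2 with hR
  have hR1 : (N:ℝ) * r + 2 ≤ R := by
    rw [hR]; push_cast; linarith [Int.le_ceil ((N:ℝ) * r)]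
  have hR2 : (R:ℝ) ≤ N * r + 3 := by
    rw [hR]; push_cast; linarith [Int.ceil_lt_add_one ((N:ℝ) * r)]
  set W : V → V → Set (ℤ × ℤ) := fun u v => {z | ∃ τ ∈ Icc (s u v) (t u v), dist (ι z) ((N:ℝ) • f u v τ) ≤ 2} with hW
  have hsep : ∀ u v, u ≠ v → 2 * R < ds (c u) (c v) := by
    intro u v huv
    have h1 := e1 u v huv
    have h2 := hdN (Γ.ρ u) (Γ.ρ v)
    have h3 := dist_fl ((N:ℝ) • Γ.ρ u)
    have h4 := dist_fl ((N:ℝ) • Γ.ρ v)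
    have h5 : dist ((N:ℝ) • Γ.ρ u) ((N:ℝ) • Γ.ρ v) ≤ dist ((N:ℝ) • Γ.ρ u) (ι (c u)) + dist (ι (c u)) (ι (c v)) + dist (ι (c v)) ((N:ℝ) • Γ.ρ v) := dist_triangle4 _ _ _ _
    rw [dist_comm ((N:ℝ) • Γ.ρ u) (ι (c u))] at h5
    have h6 : (N:ℝ) * (4 * r) < N * dist (Γ.ρ u) (Γ.ρ v) := mul_lt_mul_of_pos_left h1 hN0
    have : ((2 * R : ℤ) : ℝ) < (ds (c u) (c v) : ℤ) := by
      rw [ds_cast]; push_cast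
      linarith
    exact_mod_cast this
  have hWW : ∀ u v, G.Adj u v → u < v → ∀ u' v', G.Adj u' v' → u' < v' → ∀ z, z ∈ W u v → z ∈ W u' v' →
      u = u' ∧ v = v' := by
    rintro u v h hl u' v' h' hl' z ⟨τ, hτ, hz⟩ ⟨τ', hτ', hz'⟩
    by_contra hne
    have h1 := e3 u v h hl u' v' h' hl' hne _ ⟨τ, hτ, rfl⟩ _ ⟨τ', hτ', rfl⟩
    have h2 := hdN (f u v τ) (f u' v' τ')
    have h3 := dist_triangle_left ((N:ℝ) • f u v τ) ((N:ℝ) • f u' v' τ') (ι z)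
    have h4 := mul_lt_mul_of_pos_left h1 hN0
    linarith
  have hWo : ∀ u v, G.Adj u v → u < v → ∀ w, w ≠ u → w ≠ v → ∀ z ∈ W u v, ¬ ds z (c w) ≤ R := by
    rintro u v h hl w hu hv z ⟨τ, hτ, hz⟩ hd
    have hd' : ((ds z (c w) : ℤ) : ℝ) ≤ R := by exact_mod_cast hd
    rw [ds_cast] at hd'
    have h1 := e2 u v h w hu hv _ ((hcur u v h).2.2.2.2.1 τ hτ)
    have h2 := hdN (f u v τ) (Γ.ρ w)
    have h3 := dist_fl ((N:ℝ) • Γ.ρ w)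
    have h4 := mul_lt_mul_of_pos_left h1 hN0
    have h5 : dist ((N:ℝ) • f u v τ) ((N:ℝ) • Γ.ρ w) ≤ dist ((N:ℝ) • f u v τ) (ι z) + dist (ι z) (ι (c w)) + dist (ι (c w)) ((N:ℝ) • Γ.ρ w) := dist_triangle4 _ _ _ _
    rw [dist_comm _ (ι z)] at h5
    linarith
  have hbox : ∀ x w, dist x (Γ.ρ w) ≤ r → ds (fl ((N:ℝ) • x)) (c w) ≤ R := by
    intro x w hx
    have h2 := hdN x (Γ.ρ w)
    have h3 := dist_fl ((N:ℝ) • Γ.ρ w)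
    have h4 := dist_fl ((N:ℝ) • x)
    have h6 := mul_le_mul_of_nonneg_left hx hN0.le
    have h5 : dist (ι (fl ((N:ℝ) • x))) (ι (c w)) ≤ dist (ι (fl ((N:ℝ) • x))) ((N:ℝ) • x) + dist ((N:ℝ) • x) ((N:ℝ) • Γ.ρ w) + dist ((N:ℝ) • Γ.ρ w) (ι (c w)) := dist_triangle4 _ _ _ _
    rw [dist_comm ((N:ℝ) • Γ.ρ w) (ι (c w))] at h5
    have : ((ds (fl ((N:ℝ) • x)) (c w) : ℤ) : ℝ) ≤ R := by
      rw [ds_cast]; linarith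
    exact_mod_cast this
  have hch : ∀ u v, ∃ (n : ℕ) (g : ℕ → ℤ × ℤ), G.Adj u v → u < v → (ds (g 0) (c u) ≤ R ∧ ds (g n) (c v) ≤ R ∧
      (∀ i < n, g i ∈ W u v ∧ g (i+1) ∈ W u v ∧ GAdj (g i) (g (i+1))) ∧
      (∀ i j, i ≤ n → j ≤ n → g i = g j → i = j) ∧ (∀ i ≤ n, ds (g i) (c u) ≤ R → i = 0) ∧
      (∀ i ≤ n, ds (g i) (c v) ≤ R → i = n)) := by
    intro u v
    by_cases h : G.Adj u v
    swap
    · exact ⟨0, fun _ => 0, fun h' => absurd h' h⟩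
    obtain ⟨hc1, hst, hs, ht, -, -⟩ := hcur u v h
    have hr := chain_of_curve (fun τ => (N:ℝ) • f u v τ) (s u v) (t u v) hst (hc1.const_smul (N:ℝ)) (W u v)
      (fun τ hτ z hz => ⟨τ, hτ, hz⟩)
    obtain ⟨n, g, h1⟩ := exists_min_chain _ {z | ds z (c u) ≤ R} {z | ds z (c v) ≤ R} _ _
      (hbox _ _ hs) (hbox _ _ ht) hr
    exact ⟨n, g, fun _ _ => h1⟩
  choose n g hch using hch
  have hn0 : ∀ u v, G.Adj u v → u < v → n u v ≠ 0 := by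
    intro u v h hl h0
    obtain ⟨h1, h2, -⟩ := hch u v h hl
    rw [h0] at h2
    have h1' : ((ds (g u v 0) (c u) : ℤ) : ℝ) ≤ R := by exact_mod_cast h1
    have h2' : ((ds (g u v 0) (c v) : ℤ) : ℝ) ≤ R := by exact_mod_cast h2
    have h3' : ((2 * R : ℤ) : ℝ) < (ds (c u) (c v) : ℤ) := by exact_mod_cast hsep u v hl.ne
    rw [ds_cast] at h1' h2' h3'
    have := dist_triangle_left (ι (c u)) (ι (c v)) (ι (g u v 0))
    push_cast at h3'
    linarith
  have hmem : ∀ u v, G.Adj u v → u < v → ∀ i ≤ n u v, g u v i ∈ W u v := by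
    intro u v h hl i hi
    obtain ⟨-, -, h3, -⟩ := hch u v h hl
    have := hn0 u v h hl
    rcases hi.lt_or_eq with hi | hi
    · exact (h3 i hi).1
    · have h4 := (h3 (i-1) (by omega)).2.1
      have : i - 1 + 1 = i := by omega
      rwa [this] at h4
  refine ⟨⟨c, R, n, g, ?_, hsep, fun u v h hl => (hch u v h hl).1, fun u v h hl => (hch u v h hl).2.1,
    fun u v h hl i hi => ((hch u v h hl).2.2.1 i hi).2.2, fun u v h hl => (hch u v h hl).2.2.2.1, ?_, ?_⟩⟩
  · have : (1:ℝ) ≤ R := by linarith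
    exact_mod_cast this
  · intro u v h hl i hi w hw
    by_cases h1 : w = u
    · subst h1; exact Or.inl ⟨rfl, (hch w v h hl).2.2.2.2.1 i hi hw⟩
    by_cases h2 : w = v
    · subst h2; exact Or.inr ⟨rfl, (hch u w h hl).2.2.2.2.2 i hi hw⟩
    exact absurd hw (hWo u v h hl w h1 h2 _ (hmem u v h hl i hi))
  · intro u v h hl u' v' h' hl' i hi j hj he
    exact hWW u v h hl u' v' h' hl' _ (hmem u v h hl i hi) (he ▸ hmem u' v' h' hl' j hj)

end BoxD


namespace BoxD
open GridMinor Filter Topology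

theorem gadj_symm {p q : ℤ × ℤ} (h : GAdj p q) : GAdj q p := by
  obtain ⟨x, h | h⟩ := h
  · exact ⟨x, Or.inr h⟩
  · exact ⟨x, Or.inl h⟩

theorem ds_le_iff (p q : ℤ × ℤ) (R : ℤ) : ds p q ≤ R ↔ |p.1 - q.1| ≤ R ∧ |p.2 - q.2| ≤ R := by
  simp [ds]

theorem ds_comm (p q : ℤ × ℤ) : ds p q = ds q p := by
  unfold ds; rw [abs_sub_comm p.1, abs_sub_comm p.2]

theorem ds_triangle (p q r : ℤ × ℤ) : ds p r ≤ ds p q + ds q r := by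
  have : ((ds p r : ℤ) : ℝ) ≤ ((ds p q + ds q r : ℤ) : ℝ) := by
    push_cast; rw [ds_cast, ds_cast, ds_cast]; exact dist_triangle _ _ _
  exact_mod_cast this

theorem BD.n_ne_zero {V : Type} [LinearOrder V] {G : SimpleGraph V} (D : BD G) (u v : V)
    (h : G.Adj u v) (hl : u < v) : D.n u v ≠ 0 := by
  intro h0
  have h1 := D.start u v h hl
  have h2 := D.fin u v h hl
  rw [h0] at h2
  have h3 := D.sep u v hl.ne
  have h4 := ds_triangle (D.c u) (D.f u v 0) (D.c v)
  rw [ds_comm (D.c u) (D.f u v 0)] at h4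
  omega

theorem box_conn (c : ℤ × ℤ) (R : ℤ) (B : Finset (ℤ × ℤ)) (hB : ∀ p, ds p c ≤ R → p ∈ B) :
    ∀ (k : ℕ) (p : ℤ × ℤ), ds p c ≤ R → (p.1 - c.1).natAbs + (p.2 - c.2).natAbs = k →
      Relation.ReflTransGen (fun a b => a ∈ B ∧ b ∈ B ∧ GAdj a b) p c := by
  intro k
  induction k with
  | zero =>
    intro p _ h
    have : p = c := by ext <;> omega
    rw [this]
  | succ k ih =>
    rintro ⟨x, y⟩ hp h
    obtain ⟨c1, c2⟩ := c
    have key : ∀ q : ℤ × ℤ, GAdj (x, y) q → ds q (c1, c2) ≤ R →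
        (q.1 - c1).natAbs + (q.2 - c2).natAbs = k →
        Relation.ReflTransGen (fun a b => a ∈ B ∧ b ∈ B ∧ GAdj a b) (x, y) (c1, c2) := by
      intro q h1 h2 h3
      exact Relation.ReflTransGen.head ⟨hB _ hp, hB _ h2, h1⟩ (ih q h2 h3)
    rw [ds_le_iff] at hp
    simp only [abs_le] at hp
    simp only at h
    by_cases hx : x < c1
    · refine key (x+1, y) (gadj_h _ _ _ (Or.inr rfl)) ?_ (by simp only; omega)
      rw [ds_le_iff]; simp only [abs_le]; omega
    by_cases hx' : c1 < x
    · refine key (x-1, y) (gadj_h _ _ _ (Or.inl (by omega))) ?_ (by simp only; omega)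
      rw [ds_le_iff]; simp only [abs_le]; omega
    by_cases hy : y < c2
    · refine key (x, y+1) (gadj_v _ _ _ (Or.inr rfl)) ?_ (by simp only; omega)
      rw [ds_le_iff]; simp only [abs_le]; omega
    · refine key (x, y-1) (gadj_v _ _ _ (Or.inl (by omega))) ?_ (by simp only; omega)
      rw [ds_le_iff]; simp only [abs_le]; omega

theorem BD.h5 {V : Type} [Fintype V] [LinearOrder V] {G : SimpleGraph V} [DecidableRel G.Adj] (D : BD G)
    (S : Finset V) (hS : S.Nonempty) : ∃ v ∈ S, (S.filter (fun y => G.Adj v y)).card ≤ 5 := by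
  classical
  set B : V → Finset (ℤ × ℤ) := fun u =>
    (Finset.Icc ((D.c u).1 - D.R) ((D.c u).1 + D.R) ×ˢ Finset.Icc ((D.c u).2 - D.R) ((D.c u).2 + D.R)) ∪
    (Finset.univ.filter (fun v => G.Adj u v ∧ u < v)).biUnion
      (fun v => (Finset.range (D.n u v)).image (D.f u v)) with hBdef
  have hB : ∀ u p, p ∈ B u ↔ ds p (D.c u) ≤ D.R ∨ ∃ v, (G.Adj u v ∧ u < v) ∧ ∃ i < D.n u v, D.f u v i = p := by
    intro u p
    simp only [hBdef, Finset.mem_union, Finset.mem_product, Finset.mem_Icc, Finset.mem_biUnion,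
      Finset.mem_filter, Finset.mem_univ, true_and, Finset.mem_image, Finset.mem_range, ds_le_iff, abs_le]
    apply or_congr_left
    constructor <;> rintro ⟨⟨_, _⟩, _, _⟩ <;> refine ⟨⟨?_, ?_⟩, ?_, ?_⟩ <;> linarith
  have hsep : ∀ u v p, ds p (D.c u) ≤ D.R → ds p (D.c v) ≤ D.R → u = v := by
    intro u v p h1 h2
    by_contra hne
    have h3 := D.sep u v hne
    have h4 := ds_triangle (D.c u) p (D.c v)
    rw [ds_comm (D.c u) p] at h4
    omega
  have hmix : ∀ u v p, ds p (D.c u) ≤ D.R → (∃ w, (G.Adj v w ∧ v < w) ∧ ∃ i < D.n v w, D.f v w i = p) → u = v := by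
    rintro u v p h1 ⟨w, ⟨ha, hl⟩, i, hi, rfl⟩
    rcases D.out v w ha hl i hi.le u h1 with h | h
    · exact h.1
    · omega
  refine LinList.h5_of_model G B ?_ ?_ ?_ S hS
  · intro u v p hu hv
    rw [hB] at hu hv
    rcases hu with hu | hu <;> rcases hv with hv | hv
    · exact hsep u v p hu hv
    · exact hmix u v p hu hv
    · exact (hmix v u p hv hu).symm
    · obtain ⟨w, ⟨ha, hl⟩, i, hi, he⟩ := hu
      obtain ⟨w', ⟨ha', hl'⟩, i', hi', he'⟩ := hv
      exact (D.disj u w ha hl v w' ha' hl' i hi.le i' hi'.le (he.trans he'.symm)).1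
  · intro u
    have hc : ∀ p ∈ B u, Relation.ReflTransGen (fun a b => a ∈ B u ∧ b ∈ B u ∧ GAdj a b) p (D.c u) := by
      have hbox := box_conn (D.c u) D.R (B u) (fun p hp => (hB u p).2 (Or.inl hp))
      intro p hp
      rcases (hB u p).1 hp with h | ⟨v, ⟨ha, hl⟩, i, hi, rfl⟩
      · exact hbox _ p h rfl
      · clear hp
        induction i with
        | zero => exact hbox _ _ (D.start u v ha hl) rfl
        | succ i ih =>
          refine Relation.ReflTransGen.head ⟨?_, ?_, ?_⟩ (ih (by omega))
          · exact (hB u _).2 (Or.inr ⟨v, ⟨ha, hl⟩, i+1, hi, rfl⟩)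
          · exact (hB u _).2 (Or.inr ⟨v, ⟨ha, hl⟩, i, by omega, rfl⟩)
          · exact gadj_symm (D.step u v ha hl i (by omega))
    have hsymm : Std.Symm (fun a b => a ∈ B u ∧ b ∈ B u ∧ GAdj a b) :=
      ⟨fun a b h => ⟨h.2.1, h.1, gadj_symm h.2.2⟩⟩
    intro p hp q hq
    have := (hc p hp).trans (Relation.ReflTransGen.stdSymm.symm _ _ (hc q hq))
    exact Relation.ReflTransGen.mono (fun a b h => h.2) _ _ this
  · have key : ∀ u v, G.Adj u v → u < v → ∃ p ∈ B u, ∃ q ∈ B v, GAdj p q := by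
      intro u v h hl
      have h0 := D.n_ne_zero u v h hl
      refine ⟨D.f u v (D.n u v - 1), (hB u _).2 (Or.inr ⟨v, ⟨h, hl⟩, _, by omega, rfl⟩),
        D.f u v (D.n u v), (hB v _).2 (Or.inl (D.fin u v h hl)), ?_⟩
      have := D.step u v h hl (D.n u v - 1) (by omega)
      have e : D.n u v - 1 + 1 = D.n u v := by omega
      rwa [e] at this
    intro u v h
    rcases lt_or_gt_of_ne h.ne with hl | hl
    · exact key u v h hl
    · obtain ⟨p, hp, q, hq, hh⟩ := key v u h.symm hl
      exact ⟨q, hq, p, hp, gadj_symm hh⟩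

end BoxD


namespace BoxD
open GridMinor Filter Topology

theorem seg_coord {a b x : Pt} (h : x ∈ segment ℝ a b) :
    ∃ t : ℝ, 0 ≤ t ∧ t ≤ 1 ∧ x.1 = a.1 + t * (b.1 - a.1) ∧ x.2 = a.2 + t * (b.2 - a.2) := by
  obtain ⟨s, t, hs, ht, hst, rfl⟩ := h
  refine ⟨t, ht, by linarith, ?_, ?_⟩
  · have : s = 1 - t := by linarith
    subst this
    simp; ring
  · have : s = 1 - t := by linarith
    subst this
    simp; ring

theorem dist_of_coord {a b x : Pt} {t : ℝ} (ht : 0 ≤ t) (h1 : x.1 = a.1 + t * (b.1 - a.1))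
    (h2 : x.2 = a.2 + t * (b.2 - a.2)) : dist x a = t * dist b a := by
  rw [Prod.dist_eq, Prod.dist_eq, Real.dist_eq, Real.dist_eq, Real.dist_eq, Real.dist_eq, h1, h2,
    mul_max_of_nonneg _ _ ht, add_sub_cancel_left, add_sub_cancel_left, abs_mul, abs_mul, abs_of_nonneg ht]

theorem rad_dist {c a : ℤ × ℤ} {R : ℤ} (hR : 1 ≤ R) (ha : ds a c = R) {x : Pt}
    (hx : x ∈ segment ℝ (ι c) (ι a)) : dist x (ι c) ≤ R ∧ (dist x (ι c) = R → x = ι a) := by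
  obtain ⟨t, h0, h1, e1, e2⟩ := seg_coord hx
  have hd := dist_of_coord h0 e1 e2
  rw [← ds_cast, ha] at hd
  have hR' : (1:ℝ) ≤ R := by exact_mod_cast hR
  constructor
  · rw [hd]; nlinarith
  · intro he
    have ht : t = 1 := by
      rw [hd] at he
      have : (t - 1) * R = 0 := by linarith
      rcases mul_eq_zero.1 this with h | h <;> linarith
    subst ht
    ext
    · rw [e1]; ring
    · rw [e2]; ring

theorem rad_rad {c a a' : ℤ × ℤ} {R : ℤ} (hR : 1 ≤ R) (ha : ds a c = R) (ha' : ds a' c = R) {x : Pt}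
    (hx : x ∈ segment ℝ (ι c) (ι a)) (hx' : x ∈ segment ℝ (ι c) (ι a')) : x = ι c ∨ a = a' := by
  obtain ⟨t, h0, h1, e1, e2⟩ := seg_coord hx
  obtain ⟨t', h0', h1', e1', e2'⟩ := seg_coord hx'
  have hd := dist_of_coord h0 e1 e2
  have hd' := dist_of_coord h0' e1' e2'
  rw [← ds_cast, ha] at hd
  rw [← ds_cast, ha'] at hd'
  have hR' : (1:ℝ) ≤ R := by exact_mod_cast hR
  have ht : t = t' := by
    have : (t - t') * R = 0 := by linarith
    rcases mul_eq_zero.1 this with h | h <;> linarith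
  subst ht
  by_cases hz : t = 0
  · left
    subst hz
    ext
    · rw [e1]; ring
    · rw [e2]; ring
  · right
    have f1 : t * ((ι a).1 - (ι a').1) = 0 := by linarith
    have f2 : t * ((ι a).2 - (ι a').2) = 0 := by linarith
    simp only [mul_eq_zero, hz, false_or, ι, sub_eq_zero, Int.cast_inj] at f1 f2
    exact Prod.ext f1 f2

theorem gadj_cases {p q : ℤ × ℤ} (h : GAdj p q) : ∃ p0 q0 : ℤ × ℤ, ((p0 = p ∧ q0 = q) ∨ (p0 = q ∧ q0 = p)) ∧
    ∀ x ∈ segment ℝ (ι p) (ι q),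
      (q0 = (p0.1 + 1, p0.2) ∧ x.2 = p0.2 ∧ p0.1 ≤ x.1 ∧ x.1 ≤ p0.1 + 1) ∨
      (q0 = (p0.1, p0.2 + 1) ∧ x.1 = p0.1 ∧ p0.2 ≤ x.2 ∧ x.2 ≤ p0.2 + 1) := by
  have key : ∀ p q : ℤ × ℤ, (q = (p.1 + 1, p.2) ∨ q = (p.1, p.2 + 1)) → ∀ x ∈ segment ℝ (ι p) (ι q),
      (q = (p.1 + 1, p.2) ∧ x.2 = p.2 ∧ p.1 ≤ x.1 ∧ x.1 ≤ p.1 + 1) ∨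
      (q = (p.1, p.2 + 1) ∧ x.1 = p.1 ∧ p.2 ≤ x.2 ∧ x.2 ≤ p.2 + 1) := by
    intro p q h x hx
    obtain ⟨t, h0, h1, e1, e2⟩ := seg_coord hx
    rcases h with rfl | rfl
    · left
      simp only [ι] at e1 e2
      push_cast at e1 e2
      refine ⟨rfl, ?_, ?_, ?_⟩ <;> linarith
    · right
      simp only [ι] at e1 e2
      push_cast at e1 e2
      refine ⟨rfl, ?_, ?_, ?_⟩ <;> linarith
  obtain ⟨⟨e, b⟩, h⟩ := h
  have hb : esnd (e, b) = (e.1 + 1, e.2) ∨ esnd (e, b) = (e.1, e.2 + 1) := by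
    cases b <;> simp [esnd, Prod.ext_iff]
  rcases h with ⟨h1, h2⟩ | ⟨h1, h2⟩
  · refine ⟨p, q, Or.inl ⟨rfl, rfl⟩, key p q ?_⟩
    rw [← h1, ← h2]; exact hb
  · refine ⟨q, p, Or.inr ⟨rfl, rfl⟩, ?_⟩
    rw [segment_symm]
    apply key
    rw [← h1, ← h2]; exact hb

theorem gadj_ds {p q : ℤ × ℤ} (h : GAdj p q) : ds p q ≤ 1 := by
  obtain ⟨p0, q0, h1, h2⟩ := gadj_cases h
  rw [ds_le_iff]
  rcases h1 with ⟨rfl, rfl⟩ | ⟨rfl, rfl⟩ <;>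
  rcases h2 _ (left_mem_segment ℝ _ _) with ⟨h, -⟩ | ⟨h, -⟩ <;> rw [h] <;> simp

theorem grid_int {p q z : ℤ × ℤ} (h : GAdj p q) (hz : ι z ∈ segment ℝ (ι p) (ι q)) : z = p ∨ z = q := by
  obtain ⟨p0, q0, h1, h2⟩ := gadj_cases h
  have : z = p0 ∨ z = q0 := by
    rcases h2 _ hz with ⟨rfl, a, b, c⟩ | ⟨rfl, a, b, c⟩ <;> simp only [ι] at a b c <;> norm_cast at a b c
    · simp only [Prod.ext_iff]; omega
    · simp only [Prod.ext_iff]; omega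
  rcases h1 with ⟨rfl, rfl⟩ | ⟨rfl, rfl⟩ <;> tauto

theorem grid_grid {p q p' q' : ℤ × ℤ} (h : GAdj p q) (h' : GAdj p' q') {x : Pt}
    (hx : x ∈ segment ℝ (ι p) (ι q)) (hx' : x ∈ segment ℝ (ι p') (ι q')) :
    (∃ z, x = ι z ∧ (z = p ∨ z = q) ∧ (z = p' ∨ z = q')) ∨ (p = p' ∧ q = q') ∨ (p = q' ∧ q = p') := by
  by_cases hz : ∃ z, x = ι z
  · obtain ⟨z, rfl⟩ := hz
    exact Or.inl ⟨z, rfl, grid_int h hx, grid_int h' hx'⟩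
  right
  obtain ⟨p0, q0, h1, h2⟩ := gadj_cases h
  obtain ⟨p0', q0', h1', h2'⟩ := gadj_cases h'
  have : p0 = p0' ∧ q0 = q0' := by
    have hfl : ∀ (a : ℤ) (y : ℝ), (a:ℝ) ≤ y → y ≤ a + 1 → (¬ ∃ k : ℤ, y = k) → a = ⌊y⌋ := by
      intro a y h1 h2 h3
      symm
      rw [Int.floor_eq_iff]
      refine ⟨h1, lt_of_le_of_ne h2 (fun he => h3 ⟨a+1, by push_cast; exact he⟩)⟩
    have n1 : ∀ k : ℤ, x.1 = k → ¬ ∃ l : ℤ, x.2 = l := by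
      rintro k hk ⟨l, hl⟩
      exact hz ⟨(k, l), Prod.ext hk hl⟩
    have n2 : ∀ k : ℤ, x.2 = k → ¬ ∃ l : ℤ, x.1 = l := by
      rintro k hk ⟨l, hl⟩
      exact hz ⟨(l, k), Prod.ext hl hk⟩
    rcases h2 _ hx with ⟨rfl, a, b, c⟩ | ⟨rfl, a, b, c⟩ <;>
    rcases h2' _ hx' with ⟨rfl, a', b', c'⟩ | ⟨rfl, a', b', c'⟩
    · have e1 := hfl _ _ b c (n2 _ a)
      have e2 := hfl _ _ b' c' (n2 _ a)
      have e3 : p0.2 = p0'.2 := by rw [a] at a'; exact_mod_cast a'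
      rw [← e1] at e2
      rw [e2, e3]
      exact ⟨Prod.ext e2.symm e3, rfl⟩
    · exact absurd ⟨_, a'⟩ (n2 _ a)
    · exact absurd ⟨_, a'⟩ (n1 _ a)
    · have e1 := hfl _ _ b c (n1 _ a)
      have e2 := hfl _ _ b' c' (n1 _ a)
      have e3 : p0.1 = p0'.1 := by rw [a] at a'; exact_mod_cast a'
      rw [← e1] at e2
      rw [e2, e3]
      exact ⟨Prod.ext e3 e2.symm, rfl⟩
  obtain ⟨rfl, rfl⟩ := this
  rcases h1 with ⟨rfl, rfl⟩ | ⟨rfl, rfl⟩ <;> rcases h1' with ⟨rfl, rfl⟩ | ⟨rfl, rfl⟩ <;> simp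

theorem grid_out {p q c : ℤ × ℤ} {R : ℤ} (hR : 1 ≤ R) (h : GAdj p q) (hp : R ≤ ds p c) (hq : R ≤ ds q c)
    {x : Pt} (hx : x ∈ segment ℝ (ι p) (ι q)) : (R : ℝ) ≤ dist x (ι c) := by
  obtain ⟨p0, q0, h1, h2⟩ := gadj_cases h
  have hp0 : R ≤ ds p0 c := by rcases h1 with ⟨rfl, rfl⟩ | ⟨rfl, rfl⟩ <;> assumption
  have hq0 : R ≤ ds q0 c := by rcases h1 with ⟨rfl, rfl⟩ | ⟨rfl, rfl⟩ <;> assumption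
  simp only [ds, le_max_iff, le_abs] at hp0 hq0
  rw [Prod.dist_eq, le_max_iff, Real.dist_eq, Real.dist_eq, le_abs, le_abs]
  simp only [ι]
  rcases h2 _ hx with ⟨rfl, a, b, d⟩ | ⟨rfl, a, b, d⟩
  · simp only at hq0
    have : R ≤ p0.1 - c.1 ∨ R ≤ -(p0.1 + 1 - c.1) ∨ R ≤ p0.2 - c.2 ∨ R ≤ -(p0.2 - c.2) := by omega
    rcases this with h | h | h | h
    · have h' : (R:ℝ) ≤ p0.1 - c.1 := by exact_mod_cast h
      left; left; linarith
    · have h' : (R:ℝ) ≤ -(p0.1 + 1 - c.1) := by exact_mod_cast h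
      left; right; linarith
    · have h' : (R:ℝ) ≤ p0.2 - c.2 := by exact_mod_cast h
      right; left; linarith
    · have h' : (R:ℝ) ≤ -(p0.2 - c.2) := by exact_mod_cast h
      right; right; linarith
  · simp only at hq0
    have : R ≤ p0.1 - c.1 ∨ R ≤ -(p0.1 - c.1) ∨ R ≤ p0.2 - c.2 ∨ R ≤ -(p0.2 + 1 - c.2) := by omega
    rcases this with h | h | h | h
    · have h' : (R:ℝ) ≤ p0.1 - c.1 := by exact_mod_cast h
      left; left; linarith
    · have h' : (R:ℝ) ≤ -(p0.1 - c.1) := by exact_mod_cast h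
      left; right; linarith
    · have h' : (R:ℝ) ≤ p0.2 - c.2 := by exact_mod_cast h
      right; left; linarith
    · have h' : (R:ℝ) ≤ -(p0.2 + 1 - c.2) := by exact_mod_cast h
      right; right; linarith

end BoxD


namespace BoxD
open GridMinor Filter Topology Bend

/-- the list of the first points of a sequence, last one first -/
def pts (q : ℕ → Pt) : ℕ → List Pt
  | 0 => [q 0]
  | n + 1 => q (n + 1) :: pts q n

theorem pts_cons (q : ℕ → Pt) (n : ℕ) : ∃ l, pts q n = q n :: l := by
  cases n <;> exact ⟨_, rfl⟩

theorem pts_eq (q : ℕ → Pt) (n : ℕ) : ∃ M, pts q (n + 1) = q (n + 1) :: (M ++ [q 0]) := by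
  induction n with
  | zero => exact ⟨[], rfl⟩
  | succ n ih =>
    obtain ⟨M, hM⟩ := ih
    exact ⟨q (n+1) :: M, by rw [pts, hM]; rfl⟩

theorem carr_pts_succ (q : ℕ → Pt) (n : ℕ) :
    carr (pts q (n + 1)) = segment ℝ (q n) (q (n + 1)) ∪ carr (pts q n) := by
  obtain ⟨l, hl⟩ := pts_cons q n
  rw [pts, hl, carr]

theorem mem_carr_pts (q : ℕ → Pt) (n : ℕ) (x : Pt) :
    x ∈ carr (pts q (n + 1)) ↔ ∃ i ≤ n, x ∈ segment ℝ (q i) (q (i + 1)) := by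
  induction n with
  | zero =>
    rw [carr_pts_succ]
    simp only [pts, carr, mem_union, mem_singleton_iff]
    constructor
    · rintro (h | rfl)
      · exact ⟨0, le_rfl, h⟩
      · exact ⟨0, le_rfl, left_mem_segment ℝ _ _⟩
    · rintro ⟨i, hi, h⟩
      obtain rfl : i = 0 := by omega
      exact Or.inl h
  | succ n ih =>
    rw [carr_pts_succ, mem_union, ih]
    constructor
    · rintro (h | ⟨i, hi, h⟩)
      · exact ⟨n+1, le_rfl, h⟩
      · exact ⟨i, by omega, h⟩
    · rintro ⟨i, hi, h⟩
      rcases Nat.lt_or_ge n i with h1 | h1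
      · obtain rfl : i = n + 1 := by omega
        exact Or.inl h
      · exact Or.inr ⟨i, h1, h⟩

theorem SC_pts (q : ℕ → Pt) (N : ℕ) (h1 : ∀ i < N, q i ≠ q (i+1))
    (h2 : ∀ i j x, i < j → j < N → x ∈ segment ℝ (q i) (q (i+1)) → x ∈ segment ℝ (q j) (q (j+1)) →
      j = i + 1 ∧ x = q j) : SC (pts q N) := by
  induction N with
  | zero => simp [pts, SC]
  | succ n ih =>
    have ih' := ih (fun i hi => h1 i (by omega)) (fun i j x hij hj => h2 i j x hij (by omega))
    have hc : segment ℝ (q n) (q (n+1)) ∩ carr (pts q n) ⊆ {q n} := by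
      rintro x ⟨ha, hb⟩
      cases n with
      | zero => simpa [pts, carr] using hb
      | succ m =>
        rw [mem_carr_pts] at hb
        obtain ⟨i, hi, hx⟩ := hb
        exact (h2 i (m+1) x (by omega) (by omega) hx ha).2
    obtain ⟨l, hl⟩ := pts_cons q n
    rw [hl] at ih' hc
    rw [pts, hl, SC]
    exact ⟨(h1 n (by omega)).symm, hc, ih'⟩

variable {V : Type} [LinearOrder V] {G : SimpleGraph V}

/-- sequence of bend points of an edge -/
def BD.q (D : BD G) (u v : V) : ℕ → Pt
  | 0 => ι (D.c u)
  | i + 1 => if i ≤ D.n u v then ι (D.f u v i) else ι (D.c v)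

theorem BD.q_succ (D : BD G) (u v : V) (i : ℕ) (h : i ≤ D.n u v) : D.q u v (i+1) = ι (D.f u v i) := by
  simp [BD.q, h]

theorem BD.q_last (D : BD G) (u v : V) : D.q u v (D.n u v + 2) = ι (D.c v) := by
  simp [BD.q]

theorem ι_inj {a b : ℤ × ℤ} (h : ι a = ι b) : a = b := by
  simp only [ι, Prod.mk.injEq, Int.cast_inj] at h
  exact Prod.ext h.1 h.2

theorem BD.start_eq (D : BD G) (u v : V) (h : G.Adj u v) (hl : u < v) : ds (D.f u v 0) (D.c u) = D.R := by
  have h0 := D.n_ne_zero u v h hl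
  apply le_antisymm (D.start u v h hl)
  have h1 := gadj_ds (gadj_symm (D.step u v h hl 0 (by omega)))
  have h2 := ds_triangle (D.f u v (0+1)) (D.f u v 0) (D.c u)
  by_contra hlt
  have := D.out u v h hl (0+1) (by omega) u (by omega)
  rcases this with h | h
  · omega
  · exact hl.ne h.1

theorem BD.fin_eq (D : BD G) (u v : V) (h : G.Adj u v) (hl : u < v) :
    ds (D.f u v (D.n u v)) (D.c v) = D.R := by
  have h0 := D.n_ne_zero u v h hl
  apply le_antisymm (D.fin u v h hl)
  have e : D.n u v - 1 + 1 = D.n u v := by omega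
  have h1 := D.step u v h hl (D.n u v - 1) (by omega)
  rw [e] at h1
  have h1 := gadj_ds h1
  have h2 := ds_triangle (D.f u v (D.n u v - 1)) (D.f u v (D.n u v)) (D.c v)
  by_contra hlt
  have := D.out u v h hl (D.n u v - 1) (by omega) v (by omega)
  rcases this with h | h
  · exact hl.ne h.1.symm
  · omega

theorem BD.ds_ge (D : BD G) (u v : V) (h : G.Adj u v) (hl : u < v) (i : ℕ) (hi : i ≤ D.n u v) (w : V) :
    D.R ≤ ds (D.f u v i) (D.c w) := by
  by_contra hlt
  rcases D.out u v h hl i hi w (by omega) with ⟨rfl, rfl⟩ | ⟨rfl, rfl⟩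
  · rw [D.start_eq _ v h hl] at hlt; omega
  · rw [D.fin_eq u _ h hl] at hlt; omega

/-- radial part -/
def BD.Rad (D : BD G) (u v : V) (i : ℕ) (x : Pt) (w : V) (k : ℕ) : Prop :=
  ((w = u ∧ k = 0 ∧ i = 0) ∨ (w = v ∧ k = D.n u v ∧ i = D.n u v + 1)) ∧
    x ∈ segment ℝ (ι (D.c w)) (ι (D.f u v k)) ∧ ds (D.f u v k) (D.c w) = D.R

theorem BD.kinds (D : BD G) (u v : V) (h : G.Adj u v) (hl : u < v) (i : ℕ) (hi : i ≤ D.n u v + 1) (x : Pt)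
    (hx : x ∈ segment ℝ (D.q u v i) (D.q u v (i+1))) :
    (∃ w k, D.Rad u v i x w k) ∨
    ∃ k < D.n u v, i = k + 1 ∧ x ∈ segment ℝ (ι (D.f u v k)) (ι (D.f u v (k+1))) := by
  cases i with
  | zero =>
    left
    rw [D.q_succ u v 0 (by omega)] at hx
    exact ⟨u, 0, Or.inl ⟨rfl, rfl, rfl⟩, hx, D.start_eq u v h hl⟩
  | succ i =>
    rcases Nat.lt_or_ge i (D.n u v) with h1 | h1
    · right
      rw [D.q_succ u v i h1.le, D.q_succ u v (i+1) h1] at hx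
      exact ⟨i, h1, rfl, hx⟩
    · left
      obtain rfl : i = D.n u v := by omega
      rw [D.q_last, D.q_succ u v _ le_rfl, segment_symm] at hx
      exact ⟨v, D.n u v, Or.inr ⟨rfl, rfl, rfl⟩, hx, D.fin_eq u v h hl⟩

theorem BD.Rad.le {D : BD G} {u v : V} {i : ℕ} {x : Pt} {w : V} {k : ℕ} (h : D.Rad u v i x w k) :
    k ≤ D.n u v := by
  obtain ⟨h | h, -⟩ := h <;> omega

theorem BD.rad_grid (D : BD G) (u v : V) (h : G.Adj u v) (hl : u < v) (u' v' : V) (h' : G.Adj u' v')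
    (hl' : u' < v') (i : ℕ) (x : Pt) (w : V) (k k' : ℕ) (hr : D.Rad u v i x w k) (hk' : k' < D.n u' v')
    (hx' : x ∈ segment ℝ (ι (D.f u' v' k')) (ι (D.f u' v' (k'+1)))) :
    (u = u' ∧ v = v') ∧ ((k' + 1 = i + 1 ∧ x = D.q u v (k'+1)) ∨ (i = (k' + 1) + 1 ∧ x = D.q u v i)) := by
  have hle := hr.le
  obtain ⟨hc, hx, hd⟩ := hr
  have hg := D.step u' v' h' hl' k' hk'
  have h1 := rad_dist D.Rpos hd hx
  have h2 := grid_out D.Rpos hg (D.ds_ge u' v' h' hl' k' (by omega) w) (D.ds_ge u' v' h' hl' (k'+1) (by omega) w) hx'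
  have h3 := h1.2 (le_antisymm h1.1 h2)
  subst h3
  have h4 := grid_int hg hx'
  have huv : u = u' ∧ v = v' := by
    rcases h4 with h4 | h4
    · exact D.disj u v h hl u' v' h' hl' k hle k' (by omega) h4
    · exact D.disj u v h hl u' v' h' hl' k hle (k'+1) (by omega) h4
  obtain ⟨rfl, rfl⟩ := huv
  refine ⟨⟨rfl, rfl⟩, ?_⟩
  have h5 : k = k' ∨ k = k' + 1 := by
    rcases h4 with h4 | h4
    · exact Or.inl (D.inj u v h hl k k' hle (by omega) h4)
    · exact Or.inr (D.inj u v h hl k (k'+1) hle (by omega) h4)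
  rcases hc with ⟨rfl, rfl, rfl⟩ | ⟨rfl, rfl, rfl⟩
  · left
    have : k' = 0 := by omega
    subst this
    exact ⟨rfl, (D.q_succ _ _ 0 (by omega)).symm⟩
  · right
    have : D.n u w = k' + 1 := by omega
    refine ⟨by omega, (D.q_succ _ _ _ le_rfl).symm⟩

theorem BD.cross (D : BD G) (u v : V) (h : G.Adj u v) (hl : u < v) (u' v' : V) (h' : G.Adj u' v')
    (hl' : u' < v') (i j : ℕ) (hi : i ≤ D.n u v + 1) (hj : j ≤ D.n u' v' + 1) (x : Pt)
    (hx : x ∈ segment ℝ (D.q u v i) (D.q u v (i+1)))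
    (hx' : x ∈ segment ℝ (D.q u' v' j) (D.q u' v' (j+1))) :
    ((u = u' ∧ v = v') ∧ (i = j ∨ (j = i + 1 ∧ x = D.q u v j) ∨ (i = j + 1 ∧ x = D.q u v i))) ∨
    (¬ (u = u' ∧ v = v') ∧ ∃ w, (w = u ∨ w = v) ∧ (w = u' ∨ w = v') ∧ x = ι (D.c w)) := by
  rcases D.kinds u v h hl i hi x hx with ⟨w, k, hr⟩ | ⟨k, hk, rfl, hg⟩ <;>
  rcases D.kinds u' v' h' hl' j hj x hx' with ⟨w', k', hr'⟩ | ⟨k', hk', rfl, hg'⟩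
  · have hww : w = w' := by
      by_contra hne
      have h1 := (rad_dist D.Rpos hr.2.2 hr.2.1).1
      have h2 := (rad_dist D.Rpos hr'.2.2 hr'.2.1).1
      have h3 : ((2 * D.R : ℤ) : ℝ) < (ds (D.c w) (D.c w') : ℤ) := by exact_mod_cast D.sep w w' hne
      rw [ds_cast] at h3
      push_cast at h3
      have := dist_triangle_left (ι (D.c w)) (ι (D.c w')) x
      linarith
    subst hww
    by_cases huv : u = u' ∧ v = v'
    · left
      refine ⟨huv, Or.inl ?_⟩
      obtain ⟨rfl, rfl⟩ := huv
      rcases hr.1 with ⟨rfl, _, e⟩ | ⟨rfl, _, e⟩ <;> rcases hr'.1 with ⟨e1, _, e'⟩ | ⟨e1, _, e'⟩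
      · omega
      · exact absurd e1 hl.ne
      · exact absurd e1 hl.ne'
      · omega
    · right
      refine ⟨huv, w, ?_, ?_, ?_⟩
      · rcases hr.1 with ⟨rfl, _, e⟩ | ⟨rfl, _, e⟩ <;> simp
      · rcases hr'.1 with ⟨rfl, _, e⟩ | ⟨rfl, _, e⟩ <;> simp
      · rcases rad_rad D.Rpos hr.2.2 hr'.2.2 hr.2.1 hr'.2.1 with h1 | h1
        · exact h1
        · exact absurd (D.disj u v h hl u' v' h' hl' k hr.le k' hr'.le h1) huv
  · left
    obtain ⟨h1, h2⟩ := D.rad_grid u v h hl u' v' h' hl' i x w k k' hr hk' hg'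
    exact ⟨h1, Or.inr h2⟩
  · left
    obtain ⟨⟨rfl, rfl⟩, h2⟩ := D.rad_grid u' v' h' hl' u v h hl j x w' k' k hr' hk hg
    exact ⟨⟨rfl, rfl⟩, Or.inr h2.symm⟩
  · left
    have s1 := D.step u v h hl k hk
    have s2 := D.step u' v' h' hl' k' hk'
    rcases grid_grid s1 s2 hg hg' with ⟨z, rfl, hz, hz'⟩ | hE
    · have : ∃ l l', l ≤ D.n u v ∧ l' ≤ D.n u' v' ∧ z = D.f u v l ∧ z = D.f u' v' l' ∧ (l = k ∨ l = k+1) ∧ (l' = k' ∨ l' = k'+1) := by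
        rcases hz with hz | hz <;> rcases hz' with hz' | hz'
        · exact ⟨k, k', by omega, by omega, hz, hz', by simp, by simp⟩
        · exact ⟨k, k'+1, by omega, by omega, hz, hz', by simp, by simp⟩
        · exact ⟨k+1, k', by omega, by omega, hz, hz', by simp, by simp⟩
        · exact ⟨k+1, k'+1, by omega, by omega, hz, hz', by simp, by simp⟩
      obtain ⟨l, l', hln, hln', rfl, hz', hlk, hlk'⟩ := this
      obtain ⟨rfl, rfl⟩ := D.disj u v h hl u' v' h' hl' l hln l' hln' hz'
      have := D.inj u v h hl l l' hln hln' hz'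
      subst this
      refine ⟨⟨rfl, rfl⟩, ?_⟩
      rcases lt_trichotomy k k' with hlt | rfl | hlt
      · right; left
        obtain rfl : l = k' := by omega
        exact ⟨by omega, (D.q_succ u v l hln).symm⟩
      · left; rfl
      · right; right
        obtain rfl : l = k := by omega
        exact ⟨by omega, (D.q_succ u v l hln).symm⟩
    · rcases hE with ⟨e1, e2⟩ | ⟨e1, e2⟩
      · obtain ⟨rfl, rfl⟩ := D.disj u v h hl u' v' h' hl' k hk.le k' hk'.le e1
        have := D.inj u v h hl k k' hk.le hk'.le e1
        exact ⟨⟨rfl, rfl⟩, Or.inl (by omega)⟩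
      · obtain ⟨rfl, rfl⟩ := D.disj u v h hl u' v' h' hl' k hk.le (k'+1) hk' e1
        have a1 := D.inj u v h hl k (k'+1) hk.le hk' e1
        have a2 := D.inj u v h hl (k+1) k' hk hk'.le e2
        omega

theorem BD.vert (D : BD G) (u v : V) (h : G.Adj u v) (hl : u < v) (i : ℕ) (hi : i ≤ D.n u v + 1) (w : V)
    (hx : ι (D.c w) ∈ segment ℝ (D.q u v i) (D.q u v (i+1))) : w = u ∨ w = v := by
  rcases D.kinds u v h hl i hi _ hx with ⟨w', k, hr⟩ | ⟨k, hk, rfl, hg⟩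
  · have hww : w = w' := by
      by_contra hne
      have h2 := (rad_dist D.Rpos hr.2.2 hr.2.1).1
      have h3 : ((2 * D.R : ℤ) : ℝ) < (ds (D.c w) (D.c w') : ℤ) := by exact_mod_cast D.sep w w' hne
      have h4 : (1:ℝ) ≤ D.R := by exact_mod_cast D.Rpos
      rw [ds_cast] at h3
      push_cast at h3
      linarith
    subst hww
    rcases hr.1 with ⟨rfl, _, e⟩ | ⟨rfl, _, e⟩ <;> simp
  · have h2 := grid_out D.Rpos (D.step u v h hl k hk) (D.ds_ge u v h hl k (by omega) w) (D.ds_ge u v h hl (k+1) (by omega) w) hg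
    have h4 : (1:ℝ) ≤ D.R := by exact_mod_cast D.Rpos
    rw [dist_self] at h2
    linarith

theorem gadj_ne {p q : ℤ × ℤ} (h : GAdj p q) : p ≠ q := by
  rintro rfl
  obtain ⟨p0, q0, h1, h2⟩ := gadj_cases h
  rcases h1 with ⟨rfl, rfl⟩ | ⟨rfl, rfl⟩ <;>
  rcases h2 _ (left_mem_segment ℝ _ _) with ⟨h, -⟩ | ⟨h, -⟩ <;> simp [Prod.ext_iff] at h

theorem BD.sc (D : BD G) (u v : V) (h : G.Adj u v) (hl : u < v) : SC (pts (D.q u v) (D.n u v + 2)) := by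
  apply SC_pts
  · intro i hi he
    have hne : ∀ k, k ≤ D.n u v → ∀ w, ι (D.f u v k) ≠ ι (D.c w) := by
      intro k hk w he
      have h1 := D.ds_ge u v h hl k hk w
      rw [ι_inj he] at h1
      have h2 := D.Rpos
      simp [ds] at h1
      omega
    cases i with
    | zero =>
      rw [D.q_succ u v 0 (by omega)] at he
      exact hne 0 (by omega) u he.symm
    | succ i =>
      rcases Nat.lt_or_ge i (D.n u v) with h1 | h1
      · rw [D.q_succ u v i h1.le, D.q_succ u v (i+1) h1] at he
        exact gadj_ne (D.step u v h hl i h1) (ι_inj he)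
      · obtain rfl : i = D.n u v := by omega
        rw [D.q_last, D.q_succ u v _ le_rfl] at he
        exact hne _ le_rfl _ he
  · intro i j x hij hj hx hx'
    rcases D.cross u v h hl u v h hl i j (by omega) (by omega) x hx hx' with ⟨-, h1⟩ | ⟨h1, -⟩
    · rcases h1 with h1 | h1 | h1
      · omega
      · exact h1
      · omega
    · exact absurd ⟨rfl, rfl⟩ h1

theorem BD.poly [Fintype V] (D : BD G) : ∃ Γ : PlanarDrawing G, ∀ u v, G.Adj u v →
    ∃ M, Γ.arc s(u, v) = carr (Γ.ρ v :: (M ++ [Γ.ρ u])) ∧ SC (Γ.ρ v :: (M ++ [Γ.ρ u])) := by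
  set A : Sym2 V → Set Pt := fun e => {x | ∃ u v, e = s(u, v) ∧ u < v ∧ x ∈ carr (pts (D.q u v) (D.n u v + 2))} with hA
  have hAe : ∀ u v, u < v → A s(u, v) = carr (pts (D.q u v) (D.n u v + 2)) := by
    intro u v hl
    ext x
    constructor
    · rintro ⟨u', v', he, hl', hx⟩
      rw [Sym2.eq_iff] at he
      rcases he with ⟨rfl, rfl⟩ | ⟨rfl, rfl⟩
      · exact hx
      · exact absurd hl (not_lt.2 hl'.le)
    · intro hx
      exact ⟨u, v, rfl, hl, hx⟩
  have hM : ∀ u v, G.Adj u v → ∃ M, A s(u, v) = carr (ι (D.c v) :: (M ++ [ι (D.c u)])) ∧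
      SC (ι (D.c v) :: (M ++ [ι (D.c u)])) := by
    have key : ∀ u v, G.Adj u v → u < v → ∃ M, A s(u, v) = carr (ι (D.c v) :: (M ++ [ι (D.c u)])) ∧
      SC (ι (D.c v) :: (M ++ [ι (D.c u)])) := by
      intro u v h hl
      obtain ⟨M, hM⟩ := pts_eq (D.q u v) (D.n u v + 1)
      have hs := D.sc u v h hl
      have e := hAe u v hl
      rw [hM, D.q_last] at hs e
      exact ⟨M, e, hs⟩
    intro u v h
    rcases lt_or_gt_of_ne h.ne with hl | hl
    · exact key u v h hl
    · obtain ⟨M, h1, h2⟩ := key v u h.symm hl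
      refine ⟨M.reverse, ?_, ?_⟩
      · rw [Sym2.eq_swap, h1, ← carr_reverse]; simp
      · have := SC_reverse _ h2
        simpa using this
  have hor : ∀ e ∈ G.edgeSet, ∃ u v, e = s(u, v) ∧ G.Adj u v ∧ u < v := by
    intro e he
    induction e with
    | _ u v =>
      rw [SimpleGraph.mem_edgeSet] at he
      rcases lt_or_gt_of_ne he.ne with hl | hl
      · exact ⟨u, v, rfl, he, hl⟩
      · exact ⟨v, u, Sym2.eq_swap, he.symm, hl⟩
  refine ⟨⟨fun v => ι (D.c v), ?_, A, ?_, ?_, ?_⟩, hM⟩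
  · intro u v he
    by_contra hne
    have h1 := D.sep u v hne
    rw [ι_inj he] at h1
    have := D.Rpos
    simp [ds] at h1
    omega
  · intro u v h
    obtain ⟨M, h1, h2⟩ := hM u v h
    rw [h1]
    exact arc_symm (arc_of_SC _ _ _ h2)
  · intro e he w hw
    obtain ⟨u, v, rfl, h, hl⟩ := hor e he
    rw [hAe u v hl, mem_carr_pts] at hw
    obtain ⟨i, hi, hx⟩ := hw
    rw [Sym2.mem_iff]
    exact D.vert u v h hl i hi w hx
  · rintro e he e' he' hne x ⟨hx, hx'⟩
    obtain ⟨u, v, rfl, h, hl⟩ := hor e he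
    obtain ⟨u', v', rfl, h', hl'⟩ := hor e' he'
    rw [hAe u v hl, mem_carr_pts] at hx
    rw [hAe u' v' hl', mem_carr_pts] at hx'
    obtain ⟨i, hi, hx⟩ := hx
    obtain ⟨j, hj, hx'⟩ := hx'
    rcases D.cross u v h hl u' v' h' hl' i j hi hj x hx hx' with ⟨⟨rfl, rfl⟩, -⟩ | ⟨-, w, h1, h2, h3⟩
    · exact absurd rfl hne
    · exact ⟨w, by rwa [Sym2.mem_iff], by rwa [Sym2.mem_iff], h3⟩

end BoxD


namespace BoxD
open Bend

theorem drawing_image {V : Type} [Fintype V] {G : SimpleGraph V} (Γ : PlanarDrawing G) (h : Pt ≃ₜ Pt) :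
    ∃ Γ' : PlanarDrawing G, (∀ v, Γ'.ρ v = h (Γ.ρ v)) ∧ ∀ e, Γ'.arc e = h '' Γ.arc e := by
  refine ⟨⟨fun v => h (Γ.ρ v), fun u v he => Γ.inj (h.injective he), fun e => h '' Γ.arc e, ?_, ?_, ?_⟩,
    fun _ => rfl, fun _ => rfl⟩
  · intro u v huv
    exact arc_image (Γ.arc_isArc u v huv) h
  · rintro e he w ⟨x, hx, hxe⟩
    rw [h.injective hxe] at hx
    exact Γ.vertex_mem e he w hx
  · rintro e he e' he' hne x ⟨⟨y, hy, rfl⟩, ⟨y', hy', heq⟩⟩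
    rw [h.injective heq] at hy'
    obtain ⟨w, h1, h2, h3⟩ := Γ.arcs_cross e he e' he' hne y ⟨hy, hy'⟩
    exact ⟨w, h1, h2, by rw [h3]⟩

theorem normal_drawing {V : Type} [Fintype V] {G : SimpleGraph V} (Γ : PlanarDrawing G)
    (hΓ : ∀ u v, G.Adj u v →
      ∃ M, Γ.arc s(u, v) = carr (Γ.ρ v :: (M ++ [Γ.ρ u])) ∧ SC (Γ.ρ v :: (M ++ [Γ.ρ u])))
    (m : ℕ) (w : ℕ → V) (hw : ∀ i < m, ∀ j < m, w i = w j → i = j) (c : ℕ → Prop)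
    (hc : ∀ j, c j → j + 1 < m ∧ G.Adj (w j) (w (j+1))) :
    ∃ Γ' : PlanarDrawing G, (∀ j < m, Γ'.ρ (w j) = ((j:ℝ), 0)) ∧
      ∀ j, c j → Γ'.arc s(w j, w (j+1)) = segment ℝ (((j:ℝ), 0) : Pt) ((j:ℝ)+1, 0) := by
  have hM : ∀ j, ∃ M, c j → Γ.arc s(w j, w (j+1)) = carr (Γ.ρ (w (j+1)) :: (M ++ [Γ.ρ (w j)])) ∧
      SC (Γ.ρ (w (j+1)) :: (M ++ [Γ.ρ (w j)])) := by
    intro j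
    by_cases h : c j
    · obtain ⟨M, h1⟩ := hΓ _ _ (hc j h).2
      exact ⟨M, fun _ => h1⟩
    · exact ⟨[], fun h' => absurd h' h⟩
  choose M hM using hM
  obtain ⟨h, h1, h2⟩ := lemmaT m (fun j => Γ.ρ (w j)) c M (fun j hj => (hc j hj).1)
    (fun i hi j hj he => hw i hi j hj (Γ.inj he)) (fun j hj => (hM j hj).2) (by
      intro i j hi hj hij x hx hx'
      have hx1 : x ∈ Γ.arc s(w i, w (i+1)) := by rw [(hM i hi).1]; exact hx
      have hx2 : x ∈ Γ.arc s(w j, w (j+1)) := by rw [(hM j hj).1]; exact hx'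
      have hi1 := (hc i hi).1
      have hj1 := (hc j hj).1
      obtain ⟨z, hz, hz', he⟩ := Γ.arcs_cross s(w i, w (i+1)) (hc i hi).2 s(w j, w (j+1)) (hc j hj).2 (by
        intro he
        rw [Sym2.eq_iff] at he
        rcases he with ⟨e1, _⟩ | ⟨e1, _⟩
        · have := hw i (by omega) j (by omega) e1
          omega
        · have := hw i (by omega) (j+1) (by omega) e1
          omega) x ⟨hx1, hx2⟩
      rw [Sym2.mem_iff] at hz hz'
      rcases hz with rfl | rfl <;> rcases hz' with e1 | e1
      · have := hw i (by omega) j (by omega) e1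
        omega
      · have := hw i (by omega) (j+1) (by omega) e1
        omega
      · have := hw (i+1) (by omega) j (by omega) e1
        exact ⟨this.symm, he⟩
      · have := hw (i+1) (by omega) (j+1) (by omega) e1
        omega) (by
      intro j hj k hk hx
      have hj1 := (hc j hj).1
      have hx1 : Γ.ρ (w k) ∈ Γ.arc s(w j, w (j+1)) := by rw [(hM j hj).1]; exact hx
      have := Γ.vertex_mem _ (hc j hj).2 _ hx1
      rw [Sym2.mem_iff] at this
      rcases this with e | e
      · exact Or.inl (hw k hk j (by omega) e)
      · exact Or.inr (hw k hk (j+1) (by omega) e))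
  obtain ⟨Γ', g1, g2⟩ := drawing_image Γ h
  refine ⟨Γ', fun j hj => by rw [g1]; exact h1 j hj, fun j hj => ?_⟩
  rw [g2, (hM j hj).1]
  exact h2 j hj

theorem exists_poly {V : Type} [Fintype V] (G : SimpleGraph V) (h : Nonempty (PlanarDrawing G)) :
    (∃ Γ : PlanarDrawing G, ∀ u v, G.Adj u v →
      ∃ M, Γ.arc s(u, v) = carr (Γ.ρ v :: (M ++ [Γ.ρ u])) ∧ SC (Γ.ρ v :: (M ++ [Γ.ρ u]))) ∧
    ∃ w : List V, w.Nodup ∧ LinList.Lin G w ∧ Fintype.card V ≤ 4 * w.length := by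
  classical
  obtain ⟨Γ⟩ := h
  letI : LinearOrder V := LinearOrder.lift' (Fintype.equivFin V) (Fintype.equivFin V).injective
  obtain ⟨D⟩ := exists_BD G Γ
  refine ⟨D.poly, ?_⟩
  have h5 := D.h5
  exact LinList.exists_lin G (by convert h5)

end BoxD

/-- Every `n`-vertex planar graph and every planar graph with at most `n/4`
vertices admit a SefeNoMap. -/
theorem sefeNoMap_of_quarter {V₁ V₂ : Type} [Fintype V₁] [Fintype V₂]
    (G₁ : SimpleGraph V₁) (G₂ : SimpleGraph V₂) (n : ℕ)
    (hn : Fintype.card V₁ = n)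
    (hplanar₁ : Nonempty (PlanarDrawing G₁)) (hplanar₂ : Nonempty (PlanarDrawing G₂))
    (hcard : 4 * Fintype.card V₂ ≤ n) :
    ∃ (Γ₁ : PlanarDrawing G₁) (Γ₂ : PlanarDrawing G₂), IsSefeNoMap Γ₁ Γ₂ := by
  rcases isEmpty_or_nonempty V₂ with hV | ⟨⟨d2⟩⟩
  · obtain ⟨Γ₁⟩ := hplanar₁
    obtain ⟨Γ₂⟩ := hplanar₂
    refine ⟨Γ₁, Γ₂, ?_, ?_⟩
    · rintro _ ⟨v, rfl⟩; exact hV.elim v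
    · intro u v a; exact hV.elim a
  obtain ⟨⟨Δ₁, hΔ₁⟩, l, hnd, hlin, hlen⟩ := BoxD.exists_poly G₁ hplanar₁
  obtain ⟨⟨Δ₂, hΔ₂⟩, -⟩ := BoxD.exists_poly G₂ hplanar₂
  set m := Fintype.card V₂ with hm
  have hml : m ≤ l.length := by omega
  have hm0 : 0 < m := Fintype.card_pos_iff.2 ⟨d2⟩
  have d1 : V₁ := l[0]'(by omega)
  let w : ℕ → V₁ := fun j => if h : j < l.length then l[j] else d1
  have hw : ∀ j (h : j < m), w j = l[j]'(by omega) := fun j h => by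
    have : j < l.length := by omega
    simp [w, this]
  have hw? : ∀ j < m, l[j]? = some (w j) := by
    intro j h
    rw [hw j h]; simp
  have hwinj : ∀ i < m, ∀ j < m, w i = w j → i = j := by
    intro i hi j hj he
    rw [hw i hi, hw j hj] at he
    exact (hnd.getElem_inj_iff).1 he
  let e := Fintype.equivFin V₂
  let a : ℕ → V₂ := fun j => if h : j < m then e.symm ⟨j, h⟩ else d2
  have ha : ∀ j (h : j < m), a j = e.symm ⟨j, h⟩ := fun j h => by simp [a, h]
  have hainj : ∀ i < m, ∀ j < m, a i = a j → i = j := by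
    intro i hi j hj he
    rw [ha i hi, ha j hj] at he
    simpa using e.symm.injective he
  have hasurj : ∀ x, ∃ j < m, a j = x := by
    intro x
    refine ⟨e x, (e x).2, ?_⟩
    rw [ha _ (e x).2]; simp
  set c : ℕ → Prop := fun j => j + 1 < m ∧ G₁.Adj (w j) (w (j+1)) ∧ G₂.Adj (a j) (a (j+1)) with hc
  obtain ⟨Γ₁, p1, s1⟩ := BoxD.normal_drawing Δ₁ hΔ₁ m w hwinj c (fun j h => ⟨h.1, h.2.1⟩)
  obtain ⟨Γ₂, p2, s2⟩ := BoxD.normal_drawing Δ₂ hΔ₂ m a hainj c (fun j h => ⟨h.1, h.2.2⟩)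
  refine ⟨Γ₁, Γ₂, ?_, ?_⟩
  · rintro _ ⟨x, rfl⟩
    obtain ⟨j, hj, rfl⟩ := hasurj x
    exact ⟨w j, by rw [p1 j hj, p2 j hj]⟩
  · intro u v x y huv hxy he
    obtain ⟨i, hi, rfl⟩ := hasurj x
    obtain ⟨j, hj, rfl⟩ := hasurj y
    rw [p2 i hi, p2 j hj, ← p1 i hi, ← p1 j hj, Set.pair_eq_pair_iff] at he
    have hs : s(u, v) = s(w i, w j) := by
      rw [Sym2.eq_iff]
      rcases he with ⟨h1, h2⟩ | ⟨h1, h2⟩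
      · exact Or.inl ⟨Γ₁.inj h1, Γ₁.inj h2⟩
      · exact Or.inr ⟨Γ₁.inj h1, Γ₁.inj h2⟩
    have hadj : G₁.Adj (w i) (w j) := by
      rw [← SimpleGraph.mem_edgeSet, ← hs]; exact huv
    have hl1 := fun h => hlin i j _ _ (hw? i hi) (hw? j hj) h hadj
    have hl2 := fun h => hlin j i _ _ (hw? j hj) (hw? i hi) h hadj.symm
    have hne : i ≠ j := by rintro rfl; exact hxy.ne rfl
    have : j = i + 1 ∨ i = j + 1 := by
      by_contra hcon
      have : ¬ (i + 1 < j) := hl1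
      have : ¬ (j + 1 < i) := hl2
      omega
    rw [hs]
    rcases this with rfl | rfl
    · have hci : c i := ⟨hj, hadj, hxy⟩
      rw [s1 i hci, s2 i hci]
    · have hcj : c j := ⟨hi, hadj.symm, hxy.symm⟩
      rw [Sym2.eq_swap, s1 j hcj, Sym2.eq_swap, s2 j hcj]
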